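/- arXiv:2012.07568 — 8 statements merged into one kernel-verified Lean document; each statement's English description precedes it below -/
import Mathlib

section
/- Let n ≥ 2 be an integer and a ∈ ℚ. The polynomial X^n − a is reducible over ℚ (i.e., not irreducible in ℚ[X]) if and only if either there exist t ∈ ℕ with t ∣ n, t > 1, and b ∈ ℚ with a = b^t, or 4 ∣ n and there exists b ∈ ℚ with a = −4·b^4. -/
open Polynomial

open IntermediateField in
theorem capelli_general {K : Type*} [Field K] {n : ℕ} (hn : n ≠ 0) {a : K}
    (ha : ∀ p : ℕ, p.Prime → p ∣ n → ∀ b : K, b ^ p ≠ a)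
    (h4 : 4 ∣ n → ∀ b : K, -4 * b ^ 4 ≠ a) :
    Irreducible (X ^ n - C a) := by
  induction n using induction_on_primes generalizing K a with
  | zero => simp at hn
  | one => simpa using irreducible_X_sub_C a
  | prime_mul p n hp IH =>
    rw [mul_comm]
    apply X_pow_mul_sub_C_irreducible
      (X_pow_sub_C_irreducible_of_prime hp (ha p hp (dvd_mul_right _ _)))
    intro E _ _ x hx
    have hxI : IsIntegral K x := not_not.mp fun h ↦ by
      simpa only [degree_zero, degree_X_pow_sub_C hp.pos,
        WithBot.natCast_ne_bot] using congr_arg degree (hx.symm.trans (dif_neg h))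
    have hfin : Module.finrank K K⟮x⟯ = p := by
      rw [adjoin.finrank hxI, hx, natDegree_X_pow_sub_C]
    have hnorm : Algebra.norm K (AdjoinSimple.gen K x) = (-1) ^ p * (-a) := by
      rw [← adjoin.powerBasis_gen hxI, Algebra.PowerBasis.norm_gen_eq_coeff_zero_minpoly]
      simp [minpoly_gen, hx, hp.ne_zero.symm]
    have hpow : (AdjoinSimple.gen K x) ^ p = algebraMap K K⟮x⟯ a := by
      have h := minpoly.aeval K (AdjoinSimple.gen K x)
      rw [minpoly_gen, hx] at h
      simpa [sub_eq_zero] using h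
    have hn0 : n ≠ 0 := (mul_ne_zero_iff.mp hn).2
    have hm4 : ∀ b : K⟮x⟯, Algebra.norm K (-4 * b ^ 4) = (-4) ^ p * (Algebra.norm K b) ^ 4 := by
      intro b
      have : (-4 : K⟮x⟯) = algebraMap K K⟮x⟯ (-4) := by rw [map_neg, map_ofNat]
      rw [map_mul, map_pow, this, Algebra.norm_algebraMap, hfin]
    rcases hp.eq_two_or_odd' with rfl | hodd
    · have ha2 := ha 2 hp (dvd_mul_right _ _)
      have hinj := (algebraMap K K⟮x⟯).injective
      have hsq : 2 ∣ n → ∀ b : K⟮x⟯, b ^ 2 ≠ AdjoinSimple.gen K x := by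
        intro h2 b hb
        have h4' := h4 (by obtain ⟨k, rfl⟩ := h2; exact ⟨k, by ring⟩)
        obtain ⟨f, hf, hbf⟩ := (adjoin.powerBasis hxI).exists_eq_aeval b
        have hf1 : f.natDegree ≤ 1 := by
          rw [adjoin.powerBasis_dim, hx, natDegree_X_pow_sub_C] at hf
          omega
        obtain ⟨v, u, rfl⟩ := exists_eq_X_add_C_of_natDegree_le_one hf1
        rw [adjoin.powerBasis_gen] at hbf
        simp only [map_add, map_mul, aeval_C, aeval_X] at hbf
        generalize AdjoinSimple.gen K x = g at *
        have key : algebraMap K K⟮x⟯ (u ^ 2 + a * v ^ 2)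
            + algebraMap K K⟮x⟯ (2 * u * v - 1) * g = 0 := by
          simp only [map_add, map_mul, map_pow, map_sub, map_one, map_ofNat]
          rw [← hpow]
          rw [hbf] at hb
          linear_combination hb
        generalize hs : u ^ 2 + a * v ^ 2 = s at key
        by_cases ht : 2 * u * v - 1 = 0
        · rw [ht, map_zero, zero_mul, add_zero] at key
          have hs0 : s = 0 := hinj (by rw [key, map_zero])
          rw [hs0] at hs
          apply h4' u
          have e : 2 * u * v = 1 := sub_eq_zero.mp ht
          linear_combination (-4 * u ^ 2) * hs + a * (2 * u * v + 1) * e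
        · generalize 2 * u * v - 1 = t at *
          have hg : g = algebraMap K K⟮x⟯ (-s / t) := by
            have ht' : algebraMap K K⟮x⟯ t ≠ 0 := by simpa using ht
            rw [map_div₀, map_neg, eq_div_iff ht']
            linear_combination key
          apply ha2 (-s / t)
          apply hinj
          rw [map_pow, ← hg, hpow]
      apply IH hn0
      · intro q hq hqn b hb
        rcases hq.eq_two_or_odd' with rfl | hqo
        · exact hsq hqn b hb
        · apply ha q hq (dvd_mul_of_dvd_right hqn 2) (-Algebra.norm K b)
          rw [hqo.neg_pow, ← map_pow, hb, hnorm]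
          ring
      · intro h b hb
        have h1 := hm4 b
        rw [hb, hnorm] at h1
        have ha0 : a ≠ 0 := fun h0 => ha2 0 (by simp [h0])
        generalize Algebra.norm K b = N at *
        have hN : a = - (4 * N ^ 2) ^ 2 := by linear_combination -h1
        have hc : 4 * N ^ 2 ≠ 0 := fun h0 => ha0 (by rw [hN, h0]; simp)
        generalize 4 * N ^ 2 = c at *
        have hc' : algebraMap K K⟮x⟯ c ≠ 0 := by simpa using hc
        apply hsq (dvd_trans (by norm_num) h)
          (2 * (AdjoinSimple.gen K x / algebraMap K K⟮x⟯ c) * b ^ 2)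
        have hi : (AdjoinSimple.gen K x / algebraMap K K⟮x⟯ c) ^ 2 = -1 := by
          rw [div_pow, hpow, hN, map_neg, map_pow, neg_div, div_self (pow_ne_zero _ hc')]
        rw [mul_pow, mul_pow, hi]
        linear_combination hb
    · have hnorm' : Algebra.norm K (AdjoinSimple.gen K x) = a := by
        rw [hnorm, hodd.neg_one_pow]; ring
      apply IH hn0
      · intro q hq hqn b hb
        apply ha q hq (dvd_mul_of_dvd_right hqn p) (Algebra.norm K b)
        rw [← map_pow, hb, hnorm']
      · intro h b hb
        have h1 := hm4 b
        rw [hb, hnorm'] at h1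
        obtain ⟨m, rfl⟩ := hodd
        apply h4 (dvd_mul_of_dvd_right h _) (2 ^ m * Algebra.norm K b)
        have e : ((-4 : K)) ^ (2 * m + 1) = -4 * (2 ^ m) ^ 4 := by
          have e2 : ((-4 : K)) ^ 2 = 2 ^ 4 := by norm_num
          rw [pow_succ, pow_mul, e2, ← pow_mul, ← pow_mul, mul_comm 4 m, mul_comm]
        rw [h1, e]
        ring

theorem capelli_reducible_four (k : ℕ) (hk : k ≠ 0) (b : ℚ) :
    ¬ Irreducible ((X : Polynomial ℚ) ^ (4 * k) - C (-4 * b ^ 4)) := by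
  intro H
  have deg : ∀ c d : ℚ, ¬ IsUnit ((X : Polynomial ℚ) ^ (2 * k) + (C c * X ^ k + C d)) := by
    intro c d hu
    have hlt : (C c * X ^ k + C d : Polynomial ℚ).natDegree < 2 * k := by
      have h1 : (C c * X ^ k + C d : Polynomial ℚ).natDegree ≤ k := by compute_degree
      omega
    have h2 : ((X : Polynomial ℚ) ^ (2 * k) + (C c * X ^ k + C d)).natDegree = 2 * k := by
      rw [natDegree_add_eq_left_of_natDegree_lt, natDegree_X_pow]
      rwa [natDegree_X_pow]
    have := natDegree_eq_zero_of_isUnit hu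
    omega
  have hfac : (X : Polynomial ℚ) ^ (4 * k) - C (-4 * b ^ 4) =
      (X ^ (2 * k) + (C (2 * b) * X ^ k + C (2 * b ^ 2))) *
      (X ^ (2 * k) + (C (-2 * b) * X ^ k + C (2 * b ^ 2))) := by
    simp only [C_mul, C_neg, C_pow, map_ofNat]
    ring
  rcases H.isUnit_or_isUnit hfac with h | h
  · exact deg _ _ h
  · exact deg _ _ h

/-- Capelli's theorem: reducibility of the binomial `X^n - a` over `ℚ`. -/
theorem capelli_binomial (n : ℕ) (hn : 2 ≤ n) (a : ℚ) :
    ¬ Irreducible ((X : Polynomial ℚ) ^ n - C a) ↔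
      (∃ t : ℕ, t ∣ n ∧ 1 < t ∧ ∃ b : ℚ, a = b ^ t) ∨
      (4 ∣ n ∧ ∃ b : ℚ, a = -4 * b ^ 4) := by
  constructor
  · intro h
    by_contra hc
    rw [not_or] at hc
    obtain ⟨h1, h2⟩ := hc
    refine h (capelli_general (by omega) ?_ ?_)
    · intro p hp hpn b hb
      exact h1 ⟨p, hpn, hp.one_lt, b, hb.symm⟩
    · intro h4 b hb
      exact h2 ⟨h4, b, hb.symm⟩
  · rintro (⟨t, htn, ht, b, rfl⟩ | ⟨⟨k, rfl⟩, b, rfl⟩) H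
    · exact pow_ne_of_irreducible_X_pow_sub_C H htn (by omega) b rfl
    · exact capelli_reducible_four k (by omega) b H
end

section
/- Let f(X) = X^n + a_{n−1}X^{n−1} + ⋯ + a_1X + a_0 be a monic polynomial with integer coefficients, of degree n ≥ 2, with a_0 ≠ 0. If |a_{n−1}| > 1 + |a_{n−2}| + ⋯ + |a_1| + |a_0|, then f is irreducible in ℤ[X]. -/
open Polynomial Finset

lemma perron_exists_root (q : Polynomial ℤ) (hq : q.Monic) (hd : q.natDegree ≠ 0)
    (h0 : q.coeff 0 ≠ 0) :
    ∃ z : ℂ, (q.map (Int.castRingHom ℂ)).IsRoot z ∧ 1 ≤ ‖z‖ := by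
  by_contra! hc
  set Q := q.map (Int.castRingHom ℂ) with hQ
  have hQm : Q.Monic := hq.map _
  have hQd : Q.natDegree = q.natDegree := hq.natDegree_map _
  have hs : Q.Splits := IsAlgClosed.splits Q
  have h1 := hs.coeff_zero_eq_prod_roots_of_monic hQm
  have hcard : Q.roots.card = Q.natDegree := hs.natDegree_eq_card_roots.symm
  have hne : Q.roots ≠ ∅ := by
    intro h
    rw [h] at hcard
    simp at hcard
    omega
  have h2 : ‖Q.roots.prod‖ < 1 := by
    refine Multiset.prod_induction_nonempty (fun x : ℂ => ‖x‖ < 1) ?_ hne ?_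
    · intro a b ha hb
      rw [norm_mul]
      exact mul_lt_one_of_nonneg_of_lt_one_left (norm_nonneg _) ha hb.le
    · intro a ha
      exact hc a (isRoot_of_mem_roots ha)
  have h3 : ‖Q.coeff 0‖ < 1 := by
    rw [h1]; simpa using h2
  rw [hQ, coeff_map] at h3
  simp only [eq_intCast, Complex.norm_intCast] at h3
  have : |q.coeff 0| < 1 := by exact_mod_cast h3
  exact h0 (Int.abs_lt_one_iff.mp this)

lemma perron_core (F g : Polynomial ℂ) (m : ℕ) (α : ℂ) (hα : 1 < ‖α‖) (hg : g.Monic)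
    (hd : g.natDegree = m + 1) (hF : F = (X - C α) * g)
    (h : 1 + ∑ i ∈ Finset.range (m + 1), ‖F.coeff i‖ < ‖F.coeff (m + 1)‖) :
    ∑ i ∈ Finset.range (m + 1), ‖g.coeff i‖ < 1 := by
  have hc : ∀ i, F.coeff (i + 1) = g.coeff i - α * g.coeff (i + 1) := by
    intro i; rw [hF, sub_mul]; simp
  have hc0 : ‖F.coeff 0‖ = ‖α‖ * ‖g.coeff 0‖ := by
    rw [hF]; simp [mul_coeff_zero]
  have htop : g.coeff (m + 1) = 1 := by rw [← hd]; exact hg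
  have hle : ‖F.coeff (m + 1)‖ ≤ ‖g.coeff m‖ + ‖α‖ := by
    rw [hc, htop, mul_one]; exact norm_sub_le _ _
  have hsum : ∑ i ∈ Finset.range m, (‖α‖ * ‖g.coeff (i + 1)‖ - ‖g.coeff i‖)
      ≤ ∑ i ∈ Finset.range m, ‖F.coeff (i + 1)‖ := by
    refine Finset.sum_le_sum fun i _ => ?_
    rw [hc, ← norm_mul, norm_sub_rev (g.coeff i)]
    exact norm_sub_norm_le _ _
  rw [Finset.sum_sub_distrib, ← Finset.mul_sum] at hsum
  have e1 := Finset.sum_range_succ' (fun i => ‖g.coeff i‖) m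
  have e2 := Finset.sum_range_succ (fun i => ‖g.coeff i‖) m
  rw [Finset.sum_range_succ', hc0] at h
  set S := ∑ i ∈ Finset.range (m + 1), ‖g.coeff i‖
  set T := ∑ i ∈ Finset.range m, ‖g.coeff (i + 1)‖
  by_contra! hS
  nlinarith [mul_nonneg (sub_nonneg.2 hα.le) (sub_nonneg.2 hS)]

lemma perron_root_lt (g : Polynomial ℂ) (m : ℕ) (hg : g.Monic) (hd : g.natDegree = m + 1)
    (h : ∑ i ∈ Finset.range (m + 1), ‖g.coeff i‖ < 1) (β : ℂ) (hβ : 1 ≤ ‖β‖)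
    (hr : g.IsRoot β) : False := by
  have htop : g.coeff (m + 1) = 1 := by rw [← hd]; exact hg
  rw [IsRoot, eval_eq_sum_range, hd, Finset.sum_range_succ, htop, one_mul] at hr
  have h1 : ‖β‖ ^ (m + 1) ≤ ∑ i ∈ Finset.range (m + 1), ‖g.coeff i‖ * ‖β‖ ^ (m + 1) := by
    calc ‖β‖ ^ (m + 1) = ‖∑ i ∈ Finset.range (m + 1), g.coeff i * β ^ i‖ := by
          rw [eq_neg_of_add_eq_zero_left hr, norm_neg, norm_pow]
      _ ≤ ∑ i ∈ Finset.range (m + 1), ‖g.coeff i * β ^ i‖ := norm_sum_le _ _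
      _ ≤ _ := by
          refine Finset.sum_le_sum fun i hi => ?_
          rw [norm_mul, norm_pow]
          exact mul_le_mul_of_nonneg_left
            (pow_le_pow_right₀ hβ (Finset.mem_range.1 hi).le) (norm_nonneg _)
  rw [← Finset.sum_mul] at h1
  have : 0 < ‖β‖ ^ (m + 1) := by positivity
  nlinarith

lemma perron_norm_ne (F : Polynomial ℂ) (m : ℕ) (hF : F.Monic) (hd : F.natDegree = m + 2)
    (h : 1 + ∑ i ∈ Finset.range (m + 1), ‖F.coeff i‖ < ‖F.coeff (m + 1)‖) (z : ℂ)
    (hr : F.IsRoot z) : ‖z‖ ≠ 1 := by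
  intro hz
  have htop : F.coeff (m + 2) = 1 := by rw [← hd]; exact hF
  rw [IsRoot, eval_eq_sum_range, hd, Finset.sum_range_succ, Finset.sum_range_succ, htop,
    one_mul] at hr
  have e : F.coeff (m + 1) * z ^ (m + 1)
      = -(z ^ (m + 2) + ∑ i ∈ Finset.range (m + 1), F.coeff i * z ^ i) := by
    linear_combination hr
  have e2 : ‖F.coeff (m + 1)‖ = ‖z ^ (m + 2) + ∑ i ∈ Finset.range (m + 1), F.coeff i * z ^ i‖ := by
    rw [← norm_neg (z ^ (m + 2) + _), ← e]; simp [hz]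
  have h1 := norm_add_le (z ^ (m + 2)) (∑ i ∈ Finset.range (m + 1), F.coeff i * z ^ i)
  have h2 := norm_sum_le (Finset.range (m + 1)) (fun i => F.coeff i * z ^ i)
  simp only [norm_mul, norm_pow, hz, one_pow, mul_one] at h1 h2
  linarith

/-- Perron's irreducibility criterion. -/
theorem perron_criterion (f : Polynomial ℤ) (n : ℕ) (hn : 2 ≤ n)
    (hdeg : f.natDegree = n) (hmonic : f.Monic) (h0 : f.coeff 0 ≠ 0)
    (h : |f.coeff (n - 1)| > 1 + ∑ i ∈ Finset.range (n - 1), |f.coeff i|) :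
    Irreducible f := by
  obtain ⟨m, rfl⟩ : ∃ m, n = m + 2 := ⟨n - 2, by omega⟩
  have hf1 : f ≠ 1 := by
    rintro rfl
    simp at hdeg
  refine hmonic.irreducible_iff_natDegree.2 ⟨hf1, ?_⟩
  intro p q hp hq hpq
  by_contra! hc
  have hz : p.coeff 0 * q.coeff 0 ≠ 0 := by rw [← mul_coeff_zero, hpq]; exact h0
  obtain ⟨α, hα, hα1⟩ := perron_exists_root p hp hc.1 (left_ne_zero_of_mul hz)
  obtain ⟨β, hβ, hβ1⟩ := perron_exists_root q hq hc.2 (right_ne_zero_of_mul hz)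
  set φ := Int.castRingHom ℂ
  have hF : f.map φ = p.map φ * q.map φ := by rw [← hpq, Polynomial.map_mul]
  have hFm : (f.map φ).Monic := hmonic.map _
  have hFd : (f.map φ).natDegree = m + 2 := by rw [hmonic.natDegree_map, hdeg]
  have hh : 1 + ∑ i ∈ Finset.range (m + 1), ‖(f.map φ).coeff i‖ < ‖(f.map φ).coeff (m + 1)‖ := by
    simp only [coeff_map, φ, eq_intCast, Complex.norm_intCast]
    exact_mod_cast h
  have hαF : (f.map φ).IsRoot α := by
    rw [hF]; exact root_mul_right_of_isRoot _ hα
  have hα2 : 1 < ‖α‖ := lt_of_le_of_ne hα1 (perron_norm_ne _ m hFm hFd hh α hαF).symm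
  obtain ⟨r, hr⟩ := dvd_iff_isRoot.2 hα
  have hFg : f.map φ = (X - C α) * (r * q.map φ) := by rw [hF, hr, mul_assoc]
  have hgm : (r * q.map φ).Monic := (monic_X_sub_C α).of_mul_monic_left (hFg ▸ hFm)
  have hgd : (r * q.map φ).natDegree = m + 1 := by
    have := (monic_X_sub_C α).natDegree_mul hgm
    rw [← hFg, hFd, natDegree_X_sub_C] at this
    omega
  exact perron_root_lt _ m hgm hgd (perron_core _ _ m α hα2 hgm hgd hFg hh) β hβ1
    (root_mul_left_of_isRoot _ hβ)
end

section
/- Let n ≥ 2 and ε ∈ {−1, +1}, and set f(X) = X^n + ε·(X + 1) = X^n + εX + ε ∈ ℤ[X]. If it is not the case that ε = 1 and n ≡ 2 (mod 3), then f is irreducible in ℤ[X]. If ε = 1 and n ≡ 2 (mod 3), then there exists g ∈ ℤ[X] such that X^n + X + 1 = (X^2 + X + 1)·g and either g = 1 or g is irreducible in ℤ[X]. -/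
open Polynomial

/-- A unit trinomial is determined by `p * p.mirror` up to sign and mirror. -/
theorem unitTrinomial_key {p q : ℤ[X]} (hp : p.IsUnitTrinomial)
    (hpq : p * p.mirror = q * q.mirror) :
    q = p ∨ q = -p ∨ q = p.mirror ∨ q = -p.mirror := by
  have hq : IsUnitTrinomial q := (isUnitTrinomial_iff'' hpq).mp hp
  obtain ⟨k, m, n, hkm, hmn, u, v, w, hp⟩ := hp
  obtain ⟨k', m', n', hkm', hmn', x, y, z, hq⟩ := hq
  have hk : k = k' := by
    rw [← mul_right_inj' (show 2 ≠ 0 from two_ne_zero), ←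
      trinomial_natTrailingDegree hkm hmn u.ne_zero, ← hp, ← natTrailingDegree_mul_mirror, hpq,
      natTrailingDegree_mul_mirror, hq, trinomial_natTrailingDegree hkm' hmn' x.ne_zero]
  have hn : n = n' := by
    rw [← mul_right_inj' (show 2 ≠ 0 from two_ne_zero), ← trinomial_natDegree hkm hmn w.ne_zero, ←
      hp, ← natDegree_mul_mirror, hpq, natDegree_mul_mirror, hq,
      trinomial_natDegree hkm' hmn' z.ne_zero]
  subst hk
  subst hn
  rcases eq_or_eq_neg_of_sq_eq_sq (y : ℤ) (v : ℤ)
      ((Int.isUnit_sq y.isUnit).trans (Int.isUnit_sq v.isUnit).symm) with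
    (h1 | h1)
  · rw [h1] at hq
    rcases IsUnitTrinomial.irreducible_aux3 hkm hmn hkm' hmn' u v w x z hp hq hpq with (h2 | h2)
    · exact Or.inl h2
    · exact Or.inr (Or.inr (Or.inl h2))
  · rw [h1] at hq
    rw [trinomial_def] at hp
    rw [← neg_inj, neg_add, neg_add, ← neg_mul, ← neg_mul, ← neg_mul, ← C_neg, ← C_neg, ← C_neg]
      at hp
    rw [← neg_mul_neg, ← mirror_neg] at hpq
    rcases IsUnitTrinomial.irreducible_aux3 hkm hmn hkm' hmn' (-u) (-v) (-w) x z hp hq hpq with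
      (rfl | rfl)
    · exact Or.inr (Or.inl rfl)
    · exact Or.inr (Or.inr (Or.inr p.mirror_neg))

theorem selmer_plus_tri (n : ℕ) :
    (X ^ n + X + 1 : ℤ[X]) = trinomial 0 1 n ((1 : ℤˣ) : ℤ) ((1 : ℤˣ) : ℤ) ((1 : ℤˣ) : ℤ) := by
  simp only [trinomial, Units.val_one, C_1]; ring

theorem selmer_plus_mirror (n : ℕ) (hn : 1 < n) :
    (X ^ n + X + 1 : ℤ[X]).mirror = X ^ n + X ^ (n - 1) + 1 := by
  rw [selmer_plus_tri, trinomial_mirror zero_lt_one hn (1 : ℤˣ).ne_zero (1 : ℤˣ).ne_zero]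
  simp only [trinomial, Units.val_one, C_1]; ring

/-- A common root of the trinomial and its mirror is a primitive cube root of unity. -/
theorem selmer_plus_common (n : ℕ) (hn : 1 < n) (z : ℂ)
    (h1 : aeval z (X ^ n + X + 1 : ℤ[X]) = 0)
    (h2 : aeval z (X ^ n + X + 1 : ℤ[X]).mirror = 0) : z ^ 2 + z + 1 = 0 := by
  rw [selmer_plus_mirror n hn] at h2
  simp only [map_add, map_pow, aeval_X, map_one] at h1 h2
  have h3 : z ^ n * z + z ^ n + z = 0 := by
    have : z ^ n = z ^ (n - 1) * z := by rw [← pow_succ, Nat.sub_add_cancel hn.le]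
    linear_combination z * h2 + this
  linear_combination (z + 1) * h1 - h3

theorem selmer_plus_irred (n : ℕ) (hn : 1 < n) (h3 : n % 3 ≠ 2) :
    Irreducible (X ^ n + X + 1 : ℤ[X]) := by
  have hp : (X ^ n + X + 1 : ℤ[X]).IsUnitTrinomial :=
    ⟨0, 1, n, zero_lt_one, hn, 1, 1, 1, selmer_plus_tri n⟩
  apply hp.irreducible_of_coprime'
  rintro z ⟨h1, h2⟩
  have hz := selmer_plus_common n hn z h1 h2
  have hz3 : z ^ 3 = 1 := by linear_combination (z - 1) * hz
  simp only [map_add, map_pow, aeval_X, map_one] at h1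
  rw [← Nat.mod_add_div n 3, pow_add, pow_mul, hz3, one_pow, mul_one] at h1
  have hlt : n % 3 < 3 := Nat.mod_lt n zero_lt_three
  interval_cases h : n % 3
  · have : z = -2 := by linear_combination h1
    rw [this] at hz; norm_num at hz
  · have : z = -1 / 2 := by linear_combination h1 / 2
    rw [this] at hz; norm_num at hz
  · exact h3 rfl

/-- In the exceptional case, a self-mirror divisor of the cofactor is a unit. -/
theorem selmer_cofactor_unit (n : ℕ) (hn : 1 < n) (h3 : n % 3 = 2) (g b c : ℤ[X])
    (hg : (X ^ n + X + 1 : ℤ[X]) = (X ^ 2 + X + 1) * g) (hb : g = b * c)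
    (hm : b.mirror = b ∨ b.mirror = -b) : IsUnit b := by
  have hmon : (X ^ n + X + 1 : ℤ[X]).Monic := by
    rw [selmer_plus_tri]; exact trinomial_monic zero_lt_one hn
  have hdvd : b ∣ (X ^ n + X + 1 : ℤ[X]) := ⟨(X ^ 2 + X + 1) * c, by rw [hg, hb]; ring⟩
  have hdvd' : b ∣ (X ^ n + X + 1 : ℤ[X]).mirror := by
    have : b.mirror ∣ (X ^ n + X + 1 : ℤ[X]).mirror := by
      obtain ⟨d, hd⟩ := hdvd
      rw [hd, mirror_mul_of_domain]
      exact dvd_mul_right _ _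
    rcases hm with h | h
    · rwa [h] at this
    · rwa [h, neg_dvd] at this
  have noroot : ∀ z : ℂ, aeval z b ≠ 0 := by
    intro z hz
    have hr1 : aeval z (X ^ n + X + 1 : ℤ[X]) = 0 := by
      obtain ⟨d, hd⟩ := hdvd
      rw [hd, map_mul, hz, zero_mul]
    have hr2 : aeval z (X ^ n + X + 1 : ℤ[X]).mirror = 0 := by
      obtain ⟨d, hd⟩ := hdvd'
      rw [hd, map_mul, hz, zero_mul]
    have hq := selmer_plus_common n hn z hr1 hr2
    have hz3 : z ^ 3 = 1 := by linear_combination (z - 1) * hq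
    have hgz : aeval z g = 0 := by rw [hb, map_mul, hz, zero_mul]
    have hder := congr_arg (fun p => aeval z (derivative p)) hg
    simp [derivative_mul, derivative_X_pow, hgz, hq] at hder
    obtain ⟨k, rfl⟩ : ∃ k, n = 3 * k + 2 := ⟨n / 3, by omega⟩
    have : z ^ (3 * k + 2 - 1) = z := by
      rw [show 3 * k + 2 - 1 = 3 * k + 1 by omega, pow_succ, pow_mul, hz3, one_pow, one_mul]
    rw [this] at hder
    push_cast at hder
    have hcube : ((3 * k + 2 : ℕ) : ℂ) ^ 3 = ((-1 : ℤ) : ℂ) := by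
      have h : ((3 * k + 2 : ℂ) * z) = -1 := by linear_combination hder
      have h' : ((3 * k + 2 : ℂ) * z) ^ 3 = -1 := by rw [h]; norm_num
      rw [mul_pow, hz3, mul_one] at h'
      push_cast; exact h'
    have : ((3 * k + 2 : ℕ) : ℤ) ^ 3 = -1 := by exact_mod_cast hcube
    have hpos : (0 : ℤ) ≤ ((3 * k + 2 : ℕ) : ℤ) ^ 3 := by positivity
    omega
  have hlead : IsUnit b.leadingCoeff := by
    obtain ⟨d, hd⟩ := hdvd
    have := congr_arg leadingCoeff hd
    rw [hmon.leadingCoeff, leadingCoeff_mul] at this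
    exact IsUnit.of_mul_eq_one _ this.symm
  have hdeg : b.degree = 0 := by
    by_contra hne
    have hinj : Function.Injective (algebraMap ℤ ℂ) := (algebraMap ℤ ℂ).injective_int
    obtain ⟨z, hz⟩ := Complex.exists_root (f := b.map (algebraMap ℤ ℂ)) (by
      rw [degree_map_eq_of_injective hinj]
      have hb0 : b ≠ 0 := by rintro rfl; simp at hlead
      exact lt_of_le_of_ne (zero_le_degree_iff.mpr hb0) (Ne.symm hne))
    apply noroot z
    rwa [IsRoot, eval_map_algebraMap] at hz
  rw [eq_C_of_degree_eq_zero hdeg] at hlead ⊢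
  rw [leadingCoeff_C] at hlead
  exact hlead.map C

theorem selmer_exceptional (n : ℕ) (hn : 1 < n) (h3 : n % 3 = 2) :
    ∃ g : ℤ[X], (X : ℤ[X]) ^ n + X + 1 = (X ^ 2 + X + 1) * g ∧ (g = 1 ∨ Irreducible g) := by
  have hp : (X ^ n + X + 1 : ℤ[X]).IsUnitTrinomial :=
    ⟨0, 1, n, zero_lt_one, hn, 1, 1, 1, selmer_plus_tri n⟩
  have hmon : (X ^ n + X + 1 : ℤ[X]).Monic := by
    rw [selmer_plus_tri]; exact trinomial_monic zero_lt_one hn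
  have hmon3 : (X ^ 2 + X + 1 : ℤ[X]).Monic := by
    rw [selmer_plus_tri]; exact trinomial_monic zero_lt_one one_lt_two
  have hdvd : (X ^ 2 + X + 1 : ℤ[X]) ∣ X ^ n + X + 1 := by
    obtain ⟨k, rfl⟩ : ∃ k, n = 3 * k + 2 := ⟨n / 3, by omega⟩
    have h1 : (X ^ 2 + X + 1 : ℤ[X]) ∣ (X ^ 3) ^ k - 1 :=
      dvd_trans ⟨X - 1, by ring⟩ (sub_one_dvd_pow_sub_one _ k)
    have h2 : (X ^ (3 * k + 2) + X + 1 : ℤ[X]) =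
      ((X ^ 3) ^ k - 1) * X ^ 2 + (X ^ 2 + X + 1) := by ring
    rw [h2]
    exact dvd_add (h1.mul_right _) dvd_rfl
  obtain ⟨g, hg⟩ := hdvd
  refine ⟨g, hg, ?_⟩
  have hgmon : g.Monic := hmon3.of_mul_monic_left (hg ▸ hmon)
  by_cases hu : IsUnit g
  · exact Or.inl (hgmon.eq_one_of_isUnit hu)
  refine Or.inr ⟨hu, ?_⟩
  intro a b hab
  have hne : ((X ^ 2 + X + 1) * a * b : ℤ[X]) ≠ 0 := by
    rw [mul_assoc, ← hab, ← hg]; exact hp.ne_zero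
  have ha0 : ((X ^ 2 + X + 1) * a : ℤ[X]) ≠ 0 := left_ne_zero_of_mul hne
  have hbm0 : b.mirror ≠ 0 := by
    rw [Ne, mirror_eq_zero]; exact right_ne_zero_of_mul hne
  have h3m : (X ^ 2 + X + 1 : ℤ[X]).mirror = X ^ 2 + X + 1 := by
    rw [selmer_plus_mirror 2 one_lt_two]; ring
  have hfac : (X ^ n + X + 1 : ℤ[X]) = (X ^ 2 + X + 1) * a * b := by rw [hg, hab, mul_assoc]
  have hfm : (X ^ n + X + 1 : ℤ[X]).mirror = (X ^ 2 + X + 1) * a.mirror * b.mirror := by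
    rw [hfac, mirror_mul_of_domain, mirror_mul_of_domain, h3m]
  have key := unitTrinomial_key (q := (X ^ 2 + X + 1) * a * b.mirror) hp (by
    rw [hfm, mirror_mul_of_domain, mirror_mul_of_domain, mirror_mirror, h3m, hfac]; ring)
  rw [hfm] at key
  rw [hfac] at key
  have hA : (a.mirror = a ∨ a.mirror = -a) → IsUnit a :=
    selmer_cofactor_unit n hn h3 g a b hg hab
  have hB : (b.mirror = b ∨ b.mirror = -b) → IsUnit b :=
    selmer_cofactor_unit n hn h3 g b a hg (hab.trans (mul_comm a b))
  rcases key with h | h | h | h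
  · exact Or.inr (hB (Or.inl (mul_left_cancel₀ ha0 h)))
  · exact Or.inr (hB (Or.inr (mul_left_cancel₀ ha0 (h.trans (mul_neg _ _).symm))))
  · exact Or.inl (hA (Or.inl (mul_left_cancel₀ hmon3.ne_zero (mul_right_cancel₀ hbm0 h)).symm))
  · refine Or.inl (hA (Or.inr ?_))
    have h' : (X ^ 2 + X + 1) * a * b.mirror = (X ^ 2 + X + 1) * (-a.mirror) * b.mirror := by
      rw [h]; ring
    have h'' := mul_left_cancel₀ hmon3.ne_zero (mul_right_cancel₀ hbm0 h')
    exact (neg_eq_iff_eq_neg.mpr h'').symm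

/-- Selmer's theorem on the trinomials `X^n + ε·(X + 1)`. -/
theorem selmer_trinomial (n : ℕ) (hn : 2 ≤ n) (ε : ℤ) (hε : ε = 1 ∨ ε = -1) :
    (¬ (ε = 1 ∧ n % 3 = 2) →
      Irreducible ((X : Polynomial ℤ) ^ n + C ε * X + C ε)) ∧
    ((ε = 1 ∧ n % 3 = 2) →
      ∃ g : Polynomial ℤ,
        (X : Polynomial ℤ) ^ n + X + 1 = (X ^ 2 + X + 1) * g ∧
        (g = 1 ∨ Irreducible g)) := by
  refine ⟨fun h => ?_, fun h => selmer_exceptional n hn h.2⟩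
  rcases hε with rfl | rfl
  · have := selmer_plus_irred n hn (fun h3 => h ⟨rfl, h3⟩)
    simpa using this
  · have := X_pow_sub_X_sub_one_irreducible (n := n) (by omega)
    convert this using 1
    simp only [C_neg, C_1]; ring
end

section
/- Let n, m be positive integers with n > 2m, write m = 2^a·3^b·m₁ and n − 2m = 2^p·3^q·n₁ with a, b, p, q ≥ 0 and gcd(m₁·n₁, 6) = 1. Let ε₁, ε₂ ∈ {−1, +1} with ε₁ + ε₂ ≠ 2, and set f(X) = X^n + ε₁X^m + ε₂ ∈ ℤ[X]. If f is reducible in ℤ[X], then q > b, the polynomial X^{2g} − X^{g} + 1 divides f where g = gcd(n, m), and one of the following holds: (i) ε₁ = 1, ε₂ = −1 and a = p; (ii) ε₁ = −1, ε₂ = 1 and a < p; (iii) ε₁ = −1, ε₂ = −1 and a > p. -/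
open Polynomial

/-- Comparison of 2-adic valuations of exponents. -/
theorem aux_two_adic {z : ℂ} {A B x y c d : ℕ} (hA : z ^ A = -1) (hB : z ^ B = 1)
    (hAx : A = 2 ^ x * c) (hBy : B = 2 ^ y * d) (hd : Odd d) : x < y := by
  by_contra! h
  obtain ⟨e, rfl⟩ := Nat.exists_eq_add_of_le h
  have h1 : z ^ (A * d) = -1 := by rw [pow_mul, hA, hd.neg_one_pow]
  have h2 : z ^ (A * d) = 1 := by
    rw [show A * d = B * (2 ^ e * c) by rw [hAx, hBy]; ring, pow_mul, hB, one_pow]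
  rw [h1] at h2
  norm_num at h2

/-- The trinomial vanishes at a root of `y^2 - y + 1` under the right congruences. -/
theorem aux_eval {R : Type*} [CommRing R] (y : R) (hy : y ^ 2 - y + 1 = 0) (k m : ℕ)
    (hk3 : 3 ∣ k) (hm3 : ¬ 3 ∣ m) :
    (k % 2 = 1 → m % 2 = 1 → y ^ (k + 2 * m) + y ^ m - 1 = 0) ∧
    (k % 2 = 0 → m % 2 = 1 → y ^ (k + 2 * m) - y ^ m + 1 = 0) ∧
    (k % 2 = 1 → m % 2 = 0 → y ^ (k + 2 * m) - y ^ m - 1 = 0) := by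
  have h3 : y ^ 3 = -1 := by linear_combination (y + 1) * hy
  have h2 : y ^ 2 = y - 1 := by linear_combination hy
  have h6 : ∀ i, y ^ (6 * i) = 1 := fun i => by
    rw [pow_mul, show y ^ 6 = 1 by linear_combination (y ^ 3 - 1) * h3, one_pow]
  have hkp : (k % 2 = 1 → y ^ k = -1) ∧ (k % 2 = 0 → y ^ k = 1) := by
    constructor
    · intro h
      obtain ⟨j, rfl⟩ : ∃ j, k = 6 * j + 3 := ⟨k / 6, by omega⟩
      rw [pow_add, h6, h3, one_mul]
    · intro h
      obtain ⟨j, rfl⟩ : ∃ j, k = 6 * j := ⟨k / 6, by omega⟩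
      exact h6 j
  have hmp : (m % 2 = 1 → (y ^ m) ^ 2 - y ^ m + 1 = 0) ∧
      (m % 2 = 0 → (y ^ m) ^ 2 + y ^ m + 1 = 0) := by
    have hm : y ^ m = y ^ (m % 6) := by
      conv_lhs => rw [← Nat.div_add_mod m 6, pow_add, h6, one_mul]
    rw [hm]
    constructor
    · intro h
      have : m % 6 = 1 ∨ m % 6 = 5 := by omega
      rcases this with h | h <;> rw [h]
      · linear_combination hy
      · linear_combination (y ^ 8 + y ^ 7 - y ^ 5 - y ^ 4 - y ^ 3 + y + 1) * hy
    · intro h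
      have : m % 6 = 2 ∨ m % 6 = 4 := by omega
      rcases this with h | h <;> rw [h]
      · linear_combination (y ^ 2 + y + 1) * hy
      · linear_combination (y ^ 4 - y ^ 2 + 1) * (y ^ 2 + y + 1) * hy
  have e : y ^ (k + 2 * m) = y ^ k * (y ^ m) ^ 2 := by ring
  rw [e]
  refine ⟨fun h h' => ?_, fun h h' => ?_, fun h h' => ?_⟩
  · rw [hkp.1 h]; linear_combination -hmp.1 h'
  · rw [hkp.2 h]; linear_combination hmp.1 h'
  · rw [hkp.1 h]; linear_combination -hmp.2 h'

/-- A reducible trinomial shares a complex root with its mirror. -/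
theorem aux_root (n m : ℕ) (hm : 0 < m) (hnm : 2 * m < n)
    (ε₁ ε₂ : ℤ) (hε₁ : ε₁ = 1 ∨ ε₁ = -1) (hε₂ : ε₂ = 1 ∨ ε₂ = -1)
    (hred : ¬ Irreducible ((X : Polynomial ℤ) ^ n + C ε₁ * X ^ m + C ε₂)) :
    ∃ z : ℂ, (z ^ m) ^ 2 + (ε₁ * ε₂ : ℂ) * z ^ m + 1 = 0 ∧ z ^ (n - 2 * m) = (ε₂ : ℂ) := by
  by_contra! hno
  apply hred
  obtain ⟨v, rfl⟩ : IsUnit ε₁ := Int.isUnit_iff.2 hε₁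
  obtain ⟨u, rfl⟩ : IsUnit ε₂ := Int.isUnit_iff.2 hε₂
  have hmn : m < n := by omega
  have hp : ((X : Polynomial ℤ) ^ n + C (v : ℤ) * X ^ m + C (u : ℤ)) =
      trinomial 0 m n (u : ℤ) v ((1 : ℤˣ) : ℤ) := by
    simp only [trinomial, Units.val_one, C_1]; ring
  rw [hp]
  apply IsUnitTrinomial.irreducible_of_coprime' ⟨0, m, n, hm, hmn, u, v, 1, rfl⟩
  rintro z ⟨h1, h2⟩
  rw [trinomial_mirror hm hmn u.ne_zero (1 : ℤˣ).ne_zero] at h2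
  simp only [trinomial, aeval_add, aeval_mul, aeval_X_pow, Units.val_one, map_one,
    pow_zero, mul_one, one_mul, add_zero, eq_intCast, map_intCast] at h1 h2
  obtain ⟨k, rfl⟩ := Nat.exists_eq_add_of_lt hnm
  have hv : ((v : ℤ) : ℂ) ^ 2 = 1 := by rcases hε₁ with h | h <;> rw [h] <;> norm_num
  have hu : ((u : ℤ) : ℂ) ^ 2 = 1 := by rcases hε₂ with h | h <;> rw [h] <;> norm_num
  rw [show 2 * m + k + 1 - m = m + (k + 1) by omega] at h2
  have hz := hno z
  rw [show 2 * m + k + 1 - 2 * m = k + 1 by omega] at hz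
  rw [show 2 * m + k + 1 = (k + 1) + 2 * m by omega] at h1 h2
  simp only [pow_add z (k + 1), pow_add z m, mul_comm 2 m, pow_mul] at h1 h2
  generalize z ^ (k + 1) = t at *
  generalize z ^ m = w at *
  generalize ((v : ℤ) : ℂ) = e at *
  generalize ((u : ℤ) : ℂ) = f at *
  have key : w ^ 2 + e * f * w + 1 = 0 := by
    linear_combination (-e * f) * (w * h2 - (f * w + e) * h1) - (w ^ 2 + 1) * (f ^ 2 * hv + hu) -
      e * f * w * (hv + hu)
  have hw3 : w ^ 3 = e * f := by
    linear_combination (w - e * f) * key + w * (f ^ 2 * hv + hu)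
  exact hz key (by
    linear_combination e * f * (w * h1 - e * key + f * w * hv - t * hw3) -
      t * (f ^ 2 * hv + hu) + f * hv)

/-- Koley–Reddy's corrected form of Ljunggren's theorem for `X^n + ε₁X^m + ε₂`
with `(ε₁, ε₂) ≠ (1, 1)`. -/
theorem koley_reddy_trinomial (n m : ℕ) (hm : 0 < m) (hnm : 2 * m < n)
    (a b p q m₁ n₁ : ℕ) (hmfact : m = 2 ^ a * 3 ^ b * m₁)
    (hnfact : n - 2 * m = 2 ^ p * 3 ^ q * n₁)
    (hcop : Nat.gcd (m₁ * n₁) 6 = 1)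
    (ε₁ ε₂ : ℤ) (hε₁ : ε₁ = 1 ∨ ε₁ = -1) (hε₂ : ε₂ = 1 ∨ ε₂ = -1)
    (hne : ε₁ + ε₂ ≠ 2)
    (hred : ¬ Irreducible ((X : Polynomial ℤ) ^ n + C ε₁ * X ^ m + C ε₂)) :
    b < q ∧
    ((X : Polynomial ℤ) ^ (2 * Nat.gcd n m) - X ^ (Nat.gcd n m) + 1) ∣
      ((X : Polynomial ℤ) ^ n + C ε₁ * X ^ m + C ε₂) ∧
    ((ε₁ = 1 ∧ ε₂ = -1 ∧ a = p) ∨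
     (ε₁ = -1 ∧ ε₂ = 1 ∧ a < p) ∨
     (ε₁ = -1 ∧ ε₂ = -1 ∧ p < a)) := by
  obtain ⟨z, hz1, hz2⟩ := aux_root n m hm hnm ε₁ ε₂ hε₁ hε₂ hred
  have hs : ((ε₁ : ℂ) * ε₂) ^ 2 = 1 := by
    rcases hε₁ with rfl | rfl <;> rcases hε₂ with rfl | rfl <;> norm_num
  have he2 : (ε₂ : ℂ) ^ 2 = 1 := by
    rcases hε₂ with rfl | rfl <;> norm_num
  have hu3 : z ^ (3 * m) = (ε₁ : ℂ) * ε₂ := by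
    rw [mul_comm, pow_mul]
    linear_combination (z ^ m - (ε₁ : ℂ) * ε₂) * hz1 + z ^ m * hs
  have hc6 : Nat.Coprime (m₁ * n₁) 6 := hcop
  have hcm6 : Nat.Coprime m₁ 6 := Nat.Coprime.coprime_mul_right hc6
  have hcn6 : Nat.Coprime n₁ 6 := Nat.Coprime.coprime_mul_left hc6
  have hm2 : Odd m₁ := Nat.coprime_two_right.1 (Nat.Coprime.coprime_dvd_right (by norm_num) hcm6)
  have hn2 : Odd n₁ := Nat.coprime_two_right.1 (Nat.Coprime.coprime_dvd_right (by norm_num) hcn6)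
  have hm3 : ¬ 3 ∣ m₁ := fun h => by
    have := Nat.dvd_gcd h (show 3 ∣ 6 by norm_num)
    rw [hcm6] at this; omega
  have hn3 : ¬ 3 ∣ n₁ := fun h => by
    have := Nat.dvd_gcd h (show 3 ∣ 6 by norm_num)
    rw [hcn6] at this; omega
  have h3o : ∀ i, Odd (3 ^ i) := fun i => Odd.pow (by decide)
  -- the 3-adic part
  have hbq : b < q := by
    by_contra! hqb
    obtain ⟨e, rfl⟩ := Nat.exists_eq_add_of_le hqb
    have h1 : (z ^ m) ^ (2 ^ (p + 1) * n₁) = 1 := by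
      rw [← pow_mul, show m * (2 ^ (p + 1) * n₁) =
        (n - 2 * m) * (2 * (2 ^ a * 3 ^ e * m₁)) by rw [hnfact, hmfact]; ring,
        pow_mul, hz2, pow_mul, he2, one_pow]
    have h2 : (z ^ m) ^ 6 = 1 := by
      rw [← pow_mul, show m * 6 = (3 * m) * 2 by ring, pow_mul, hu3, hs]
    have h3 : (z ^ m) ^ 2 = 1 := by
      have hg := pow_gcd_eq_one.2 ⟨h1, h2⟩
      have hdv : Nat.gcd (2 ^ (p + 1) * n₁) 6 ∣ 2 := by
        have h32 : Nat.Coprime (Nat.gcd (2 ^ (p + 1) * n₁) 6) 3 := by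
          refine Nat.Coprime.coprime_dvd_left (Nat.gcd_dvd_left _ _) ?_
          refine Nat.Coprime.mul_left (Nat.Coprime.pow_left _ (by norm_num)) ?_
          exact Nat.Coprime.coprime_dvd_right (by norm_num) hcn6
        exact h32.dvd_of_dvd_mul_right (Nat.gcd_dvd_right (2 ^ (p + 1) * n₁) 6)
      obtain ⟨c, hc⟩ := hdv
      rw [hc, pow_mul, hg, one_pow]
    have h4 : (3 : ℂ) = 0 := by
      linear_combination (-(ε₁ * ε₂ : ℂ) * z ^ m + 2) * hz1 +
        ((ε₁ * ε₂ : ℂ) * z ^ m - 2 + 1) * h3 + (z ^ m) ^ 2 * hs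
    norm_num at h4
  -- the 2-adic part
  have htri : ((ε₁ = 1 ∧ ε₂ = -1 ∧ a = p) ∨ (ε₁ = -1 ∧ ε₂ = 1 ∧ a < p) ∨
     (ε₁ = -1 ∧ ε₂ = -1 ∧ p < a)) := by
    have ha : 3 * m = 2 ^ a * (3 ^ (b + 1) * m₁) := by rw [hmfact]; ring
    have hp : n - 2 * m = 2 ^ p * (3 ^ q * n₁) := by rw [hnfact]; ring
    have oa : Odd (3 ^ (b + 1) * m₁) := (h3o _).mul hm2
    have op : Odd (3 ^ q * n₁) := (h3o _).mul hn2
    rcases hε₁ with rfl | rfl <;> rcases hε₂ with rfl | rfl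
    · exact absurd rfl hne
    · left
      refine ⟨rfl, rfl, ?_⟩
      norm_num at hu3 hz2
      have h1 := aux_two_adic (B := (n - 2 * m) * 2) (y := p + 1) hu3
        (by rw [pow_mul, hz2]; norm_num) ha (by rw [hp]; ring) op
      have h2 := aux_two_adic (B := (3 * m) * 2) (y := a + 1) hz2
        (by rw [pow_mul, hu3]; norm_num) hp (by rw [ha]; ring) oa
      omega
    · right; left
      norm_num at hu3 hz2
      exact ⟨rfl, rfl, aux_two_adic hu3 hz2 ha hp op⟩
    · right; right
      norm_num at hu3 hz2
      exact ⟨rfl, rfl, aux_two_adic hz2 hu3 hp ha oa⟩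
  refine ⟨hbq, ?_, htri⟩
  -- divisibility
  obtain ⟨k, hk⟩ : ∃ k, k = n - 2 * m := ⟨_, rfl⟩
  have hn : n = k + 2 * m := by omega
  have hgcd : Nat.gcd n m = Nat.gcd k m := by
    rw [hn]; simp
  rw [hgcd]
  rw [← hk] at hnfact
  have hg0 : 0 < Nat.gcd k m := Nat.gcd_pos_of_pos_right _ hm
  obtain ⟨k', m', hco, hk', hm'⟩ := Nat.exists_coprime k m
  generalize Nat.gcd k m = g at *
  obtain ⟨e, rfl⟩ := Nat.exists_eq_add_of_lt hbq
  have hcross : m' * (2 ^ p * 3 ^ (e + 1) * n₁) = k' * (2 ^ a * m₁) := by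
    have h : (m' * (2 ^ p * 3 ^ (e + 1) * n₁)) * (g * 3 ^ b) =
        (k' * (2 ^ a * m₁)) * (g * 3 ^ b) := by
      calc _ = (m' * g) * (2 ^ p * 3 ^ (b + e + 1) * n₁) := by ring
        _ = m * k := by rw [← hm', ← hnfact]
        _ = (k' * g) * (2 ^ a * 3 ^ b * m₁) := by rw [← hk', ← hmfact, mul_comm]
        _ = _ := by ring
    exact Nat.eq_of_mul_eq_mul_right (by positivity) h
  have hk3 : 3 ∣ k' := by
    have h1 : 3 ∣ k' * (2 ^ a * m₁) := by
      rw [← hcross]; exact ⟨m' * (2 ^ p * 3 ^ e * n₁), by ring⟩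
    refine Nat.Coprime.dvd_of_dvd_mul_right ?_ h1
    refine Nat.Coprime.mul_right (Nat.Coprime.pow_right _ (by norm_num)) ?_
    exact ((Nat.prime_three.coprime_iff_not_dvd).2 hm3)
  have hm3' : ¬ 3 ∣ m' := fun h => by
    have := Nat.dvd_gcd hk3 h
    rw [hco] at this; omega
  have hnot2 : ¬ (k' % 2 = 0 ∧ m' % 2 = 0) := fun ⟨h, h'⟩ => by
    have := Nat.dvd_gcd (Nat.dvd_of_mod_eq_zero h) (Nat.dvd_of_mod_eq_zero h')
    rw [hco] at this; omega
  have hon : Odd (3 ^ (e + 1) * n₁) := (h3o _).mul hn2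
  set D : ℤ[X] := X ^ (2 * g) - X ^ g + 1 with hD
  let φ := Ideal.Quotient.mk (Ideal.span {D})
  have hφ : (φ (X ^ g)) ^ 2 - φ (X ^ g) + 1 = 0 := by
    have h : φ D = 0 := by
      rw [Ideal.Quotient.eq_zero_iff_mem]
      exact Ideal.mem_span_singleton_self D
    have h' : φ D = φ (X ^ (2 * g) - X ^ g + 1) := congrArg φ hD
    rw [← h, h', map_add, map_sub, map_one, ← map_pow, ← pow_mul, mul_comm g 2]
  have hev := aux_eval (φ (X ^ g)) hφ k' m' hk3 hm3'
  rw [← Ideal.mem_span_singleton, ← Ideal.Quotient.eq_zero_iff_mem]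
  change φ _ = 0
  have e1 : (X : ℤ[X]) ^ n = (X ^ g) ^ (k' + 2 * m') := by
    rw [← pow_mul, hn, hk', hm']; ring
  have e2 : (X : ℤ[X]) ^ m = (X ^ g) ^ m' := by
    rw [← pow_mul, hm']; ring
  rw [e1, e2]
  have hpar : ∀ i : ℕ, Even (2 ^ (i + 1)) := fun i => by rw [pow_succ]; simp
  rcases htri with ⟨rfl, rfl, rfl⟩ | ⟨rfl, rfl, h⟩ | ⟨rfl, rfl, h⟩
  · have hc : m' * (3 ^ (e + 1) * n₁) = k' * m₁ :=
      Nat.eq_of_mul_eq_mul_left (show 0 < 2 ^ a by positivity) (by linarith [hcross])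
    have hpr : Even m' ↔ Even k' := by
      have := congrArg Even hc
      simp only [Nat.even_mul, eq_iff_iff, Nat.not_even_iff_odd.2 hm2] at this
      rw [← Nat.even_mul] at this
      simpa [Nat.not_even_iff_odd.2 hon] using this
    rw [Nat.even_iff, Nat.even_iff] at hpr
    have := hev.1 (by omega) (by omega)
    simp only [map_add, map_mul, map_pow, map_neg, map_one] at this ⊢
    linear_combination this
  · obtain ⟨i, rfl⟩ := Nat.exists_eq_add_of_lt h
    have hc : m' * (2 ^ (i + 1) * 3 ^ (e + 1) * n₁) = k' * m₁ :=
      Nat.eq_of_mul_eq_mul_left (show 0 < 2 ^ a by positivity)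
        (by rw [show a + i + 1 = a + (i + 1) by ring, pow_add 2 a] at hcross; linarith [hcross])
    have hpr : Even k' := by
      have h1 : Even (k' * m₁) := by
        rw [← hc]; exact (((hpar i).mul_right _).mul_right _).mul_left _
      exact (Nat.even_mul.1 h1).resolve_right (Nat.not_even_iff_odd.2 hm2)
    rw [Nat.even_iff] at hpr
    have := hev.2.1 (by omega) (by omega)
    simp only [map_add, map_mul, map_pow, map_neg, map_one] at this ⊢
    linear_combination this
  · obtain ⟨i, rfl⟩ := Nat.exists_eq_add_of_lt h
    have hc : m' * (3 ^ (e + 1) * n₁) = k' * (2 ^ (i + 1) * m₁) :=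
      Nat.eq_of_mul_eq_mul_left (show 0 < 2 ^ p by positivity)
        (by rw [show p + i + 1 = p + (i + 1) by ring, pow_add 2 p] at hcross; linarith [hcross])
    have hpr : Even m' := by
      have h1 : Even (m' * (3 ^ (e + 1) * n₁)) := by
        rw [hc]; exact ((hpar i).mul_right _).mul_left _
      exact (Nat.even_mul.1 h1).resolve_right (Nat.not_even_iff_odd.2 hon)
    rw [Nat.even_iff] at hpr
    have := hev.2.2 (by omega) (by omega)
    simp only [map_add, map_mul, map_pow, map_neg, map_one] at this ⊢
    linear_combination this
end

section
/- Let n > m > 0 be integers with n ≠ 2m, and set d = gcd(n, m). Assume there is no positive integer k with (n = 7k and m = 2k) or (n = 7k and m = 5k). Then there exists g ∈ ℤ[X] such that X^n − 2X^m + 1 = (X^d − 1)·g, g is irreducible in ℤ[X], and g is non-reciprocal (i.e., X^{deg g}·g(1/X) equals neither g nor −g). -/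
open Polynomial
set_option linter.unusedSimpArgs false

theorem comb (n m a b c e : ℤ) (hm : 0 < m) (hmn : 2 * m < n)
  (ha : 0 < a) (han : a < n) (hb : 0 < b) (hbc : b < c) (hce : c < e) (hen : e < n)
  (hab : a ≠ b) (hac : a ≠ c) (hae : a ≠ e) (hbe : b + e ≤ n)
  (H : ∀ t : ℤ, 0 < t → (if b = t then 1 else 0) + (if c = t then 1 else 0) + (if e = t then 1 else 0)
    + (if n - b = t then 1 else 0) + (if n - c = t then 1 else 0) + (if n - e = t then 1 else 0)
    + (if a - b = t then 1 else 0) + (if a - c = t then 1 else 0) + (if a - e = t then 1 else 0)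
    + (if b - a = t then 1 else 0) + (if c - a = t then 1 else 0) + (if e - a = t then 1 else 0)
    = (if a = t then 1 else 0) + (if n - a = t then 1 else 0) + (if c - b = t then 1 else 0)
    + (if e - c = t then 1 else 0) + (if e - b = t then 1 else 0)
    + 2 * (if m = t then 1 else 0) + 2 * (if n - m = t then (1:ℤ) else 0)) :
  n = 7 * b ∧ m = 2 * b := by
  have s1 : a = n - b ∨ b = m := by
    have h := H (n-b) (by omega)
    clear H
    revert h
    simp (disch := omega) only [if_neg, if_pos]
    intro h
    split_ifs at h <;> omega
  rcases s1 with h | h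
  · subst h
    have H' : ∀ t : ℤ, 0 < t → (if c = t then 1 else 0) + (if e = t then 1 else 0)
        + (if n - c = t then 1 else 0) + (if n - e = t then 1 else 0)
        + (if n - 2 * b = t then 1 else 0) + (if n - b - c = t then 1 else 0)
        + (if n - b - e = t then 1 else 0)
        = (if c - b = t then 1 else 0)
        + (if e - c = t then 1 else 0) + (if e - b = t then 1 else 0)
        + 2 * (if m = t then 1 else 0) + 2 * (if n - m = t then (1:ℤ) else 0) := by
      intro t ht
      have h := H t ht
      revert h
      have e1 : n - b - b = n - 2 * b := by ring
      have e2 : n - (n - b) = b := by ring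
      have h1 : b - (n - b) ≠ t := by omega
      have h2 : c - (n - b) ≠ t := by omega
      have h3 : e - (n - b) ≠ t := by omega
      rw [e1, e2, if_neg h1, if_neg h2, if_neg h3]
      intro h
      linarith
    clear H
    have s2 : e ≤ n - m ∧ m ≤ c ∧ m ≤ 2 * b := by
      by_contra hcon
      have : (n - c ≤ e ∧ n - 2 * b ≤ e ∧ n - m < e) ∨ (e ≤ n - c ∧ n - 2 * b ≤ n - c ∧ c < m)
        ∨ (e ≤ n - 2 * b ∧ n - c ≤ n - 2 * b ∧ 2 * b < m) := by omega
      clear hcon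
      rcases this with hh | hh | hh
      · have h := H' e (by omega)
        clear H'
        revert h
        simp (disch := omega) only [if_neg, if_pos]
        intro h
        first | omega | (split_ifs at h <;> omega)
      · have h := H' (n - c) (by omega)
        clear H'
        revert h
        simp (disch := omega) only [if_neg, if_pos]
        intro h
        first | omega | (split_ifs at h <;> omega)
      · have h := H' (n - 2 * b) (by omega)
        clear H'
        revert h
        simp (disch := omega) only [if_neg, if_pos]
        intro h
        first | omega | (split_ifs at h <;> omega)
    have s3 : (e = n - m ∧ c = m) ∨ (e = n - m ∧ 2 * b = m) ∨ (c = m ∧ 2 * b = m) := by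
      have h := H' (n-m) (by omega)
      clear H'
      revert h
      simp (disch := omega) only [if_neg, if_pos]
      intro h
      split_ifs at h <;> omega
    clear s2
    rcases s3 with ⟨rfl, rfl⟩ | ⟨rfl, rfl⟩ | ⟨rfl, rfl⟩
    · have e1 : n - (n - c) = c := by ring
      have e2 : n - b - (n - c) = c - b := by ring
      have e3 : n - c - c = n - 2 * c := by ring
      have e4 : n - c - b = n - b - c := by ring
      simp only [e1, e2, e3, e4] at H'
      have K : ∀ t : ℤ, 0 < t → (if n - 2 * b = t then 1 else 0)
          = (if n - 2 * c = t then (1:ℤ) else 0) := by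
        intro t ht
        linarith [H' t ht]
      clear H'
      have h := K (n - 2 * c) (by omega)
      clear K
      revert h
      simp (disch := omega) only [if_neg, if_pos]
      intro h
      split_ifs at h <;> omega
    · have e1 : n - (n - 2 * b) = 2 * b := by ring
      have e2 : n - b - (n - 2 * b) = b := by ring
      have e4 : n - 2 * b - b = n - 3 * b := by ring
      simp only [e1, e2, e4] at H'
      have K : ∀ t : ℤ, 0 < t → (if c = t then 1 else 0) + (if n - c = t then 1 else 0)
          + (if n - b - c = t then 1 else 0) + (if b = t then 1 else 0)
          = (if c - b = t then 1 else 0) + (if n - 2 * b - c = t then 1 else 0)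
          + (if n - 3 * b = t then 1 else 0) + (if 2 * b = t then (1:ℤ) else 0) := by
        intro t ht
        linarith [H' t ht]
      clear H'
      have s4 : c = 2 * b ∨ c = n - 3 * b := by
        have h := K (b) (by omega)
        clear K
        revert h
        simp (disch := omega) only [if_neg, if_pos]
        intro h
        first | omega | (split_ifs at h <;> omega)
      rcases s4 with rfl | rfl
      · exfalso
        have h := K (n - 2 * b) (by omega)
        clear K
        revert h
        simp (disch := omega) only [if_neg, if_pos]
        intro h
        first | omega | (split_ifs at h <;> omega)
      · have h := K (3 * b) (by omega)
        clear K
        revert h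
        simp (disch := omega) only [if_neg, if_pos]
        intro h
        refine ⟨?_, trivial⟩
        split_ifs at h <;> omega
    · exfalso
      have h := H' e (by omega)
      clear H'
      revert h
      simp (disch := omega) only [if_neg, if_pos]
      intro h
      split_ifs at h <;> omega
  · subst h
    have s2 : e = n - b := by
      have h := H (n-b) (by omega)
      clear H
      revert h
      simp (disch := omega) only [if_neg, if_pos]
      intro h
      split_ifs at h <;> omega
    subst s2
    have e1 : n - (n - b) = b := by ring
    have e2 : n - b - b = n - 2 * b := by ring
    simp only [e1, e2] at H
    have K : ∀ t : ℤ, 0 < t → (if c = t then 1 else 0) + (if n - c = t then 1 else 0)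
        + (if a - b = t then 1 else 0) + (if a - c = t then 1 else 0)
        + (if a - (n - b) = t then 1 else 0)
        + (if b - a = t then 1 else 0) + (if c - a = t then 1 else 0)
        + (if n - b - a = t then 1 else 0)
        = (if a = t then 1 else 0) + (if n - a = t then 1 else 0) + (if c - b = t then 1 else 0)
        + (if n - b - c = t then 1 else 0) + (if n - 2 * b = t then (1:ℤ) else 0) := by
      intro t ht
      linarith [H t ht]
    clear H e1 e2
    have s3 : c = n - a ∨ (a ≠ n - c ∧ (c = n - 2 * b ∨ c = 2 * b)) := by
      have : (n - a ≤ a ∧ n - 2 * b < a) ∨ (a ≤ n - a ∧ n - 2 * b < n - a)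
        ∨ (a ≤ n - 2 * b ∧ n - a ≤ n - 2 * b) := by omega
      rcases this with hh | hh | hh
      · have h := K (a) (by omega)
        clear K
        revert h
        simp (disch := omega) only [if_neg, if_pos]
        intro h
        first | omega | (split_ifs at h <;> omega)
      · have h := K (n - a) (by omega)
        clear K
        revert h
        simp (disch := omega) only [if_neg, if_pos]
        intro h
        first | omega | (split_ifs at h <;> omega)
      · have h := K (n - 2 * b) (by omega)
        clear K
        revert h
        simp (disch := omega) only [if_neg, if_pos]
        intro h
        first | omega | (split_ifs at h <;> omega)
    exfalso
    rcases s3 with rfl | ⟨h0, rfl | rfl⟩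
    · have h := K (n - 2 * b) (by omega)
      have e1 : n - (n - a) = a := by ring
      have e2 : n - b - (n - a) = a - b := by ring
      have e3 : n - a - b = n - b - a := by ring
      simp only [e1, e2, e3] at h
      clear K
      have h1 : a - (n - b) ≠ n - 2 * b := by omega
      have h2 : b - a ≠ n - 2 * b := by omega
      rw [if_neg h1, if_neg h2, if_pos trivial] at h
      have h3 : a - (n - a) ≠ n - 2 * b := by omega
      have h4 : n - a - a ≠ n - 2 * b := by omega
      rw [if_neg h3, if_neg h4] at h
      linarith
    · have : (n - a ≤ a ∧ n - 3 * b ≤ a) ∨ (a ≤ n - a ∧ n - 3 * b ≤ n - a)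
        ∨ (a < n - 3 * b ∧ n - a < n - 3 * b) := by omega
      rcases this with hh | hh | hh
      · have h := K (a) (by omega)
        clear K
        revert h
        simp (disch := omega) only [if_neg, if_pos]
        intro h
        first | omega | (split_ifs at h <;> omega)
      · have h := K (n - a) (by omega)
        clear K
        revert h
        simp (disch := omega) only [if_neg, if_pos]
        intro h
        first | omega | (split_ifs at h <;> omega)
      · have h := K (n - 3 * b) (by omega)
        clear K
        revert h
        simp (disch := omega) only [if_neg, if_pos]
        intro h
        first | omega | (split_ifs at h <;> omega)
    · have : (n - a ≤ a ∧ n - 3 * b ≤ a) ∨ (a ≤ n - a ∧ n - 3 * b ≤ n - a)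
        ∨ (a < n - 3 * b ∧ n - a < n - 3 * b) := by omega
      rcases this with hh | hh | hh
      · have h := K (a) (by omega)
        clear K
        revert h
        simp (disch := omega) only [if_neg, if_pos]
        intro h
        first | omega | (split_ifs at h <;> omega)
      · have h := K (n - a) (by omega)
        clear K
        revert h
        simp (disch := omega) only [if_neg, if_pos]
        intro h
        first | omega | (split_ifs at h <;> omega)
      · have h := K (n - 3 * b) (by omega)
        clear K
        revert h
        simp (disch := omega) only [if_neg, if_pos]
        intro h
        first | omega | (split_ifs at h <;> omega)


theorem sort_three (N : Finset ℕ) (h : N.card = 3) :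
    ∃ b d e, b < d ∧ d < e ∧ N = {b, d, e} := by
  obtain ⟨x, y, z, hxy, hxz, hyz, rfl⟩ := Finset.card_eq_three.mp h
  have : ∀ p q r : ℕ, ({x, y, z} : Finset ℕ) = {p, q, r} ↔ ∀ w, (w = x ∨ w = y ∨ w = z) ↔ (w = p ∨ w = q ∨ w = r) := by
    intro p q r
    simp [Finset.ext_iff]
  simp only [this]
  rcases lt_or_gt_of_ne hxy with h1 | h1 <;> rcases lt_or_gt_of_ne hxz with h2 | h2 <;>
    rcases lt_or_gt_of_ne hyz with h3 | h3
  · exact ⟨x, y, z, h1, h3, by tauto⟩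
  · exact ⟨x, z, y, h2, h3, by tauto⟩
  · omega
  · exact ⟨z, x, y, h2, h1, by tauto⟩
  · exact ⟨y, x, z, h1, h2, by tauto⟩
  · omega
  · exact ⟨y, z, x, h3, h2, by tauto⟩
  · exact ⟨z, y, x, h3, h1, by tauto⟩

theorem four (S : Finset ℕ) (c : ℕ → ℤ) (h2 : ∑ i ∈ S, c i ^ 2 = 4) (h1 : ∑ i ∈ S, c i = -2) :
    (∃ i ∈ S, c i = -2 ∧ ∀ j ∈ S, j ≠ i → c j = 0) ∨
    ∃ a b d e, a ∈ S ∧ b ∈ S ∧ d ∈ S ∧ e ∈ S ∧ b < d ∧ d < e ∧ c a = 1 ∧ c b = -1 ∧ c d = -1 ∧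
      c e = -1 ∧ ∀ j ∈ S, j ≠ a → j ≠ b → j ≠ d → j ≠ e → c j = 0 := by
  by_cases hex : ∃ i ∈ S, c i ^ 2 ≥ 4
  · left
    obtain ⟨i, hi, hci⟩ := hex
    have e2 := Finset.add_sum_erase S (fun i => c i ^ 2) hi
    have e1 := Finset.add_sum_erase S c hi
    have hnn : ∀ j ∈ S.erase i, 0 ≤ c j ^ 2 := fun j _ => sq_nonneg _
    have hz : ∑ j ∈ S.erase i, c j ^ 2 = 0 := by
      have := Finset.sum_nonneg hnn
      linarith
    have hz' := (Finset.sum_eq_zero_iff_of_nonneg hnn).mp hz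
    have hz'' : ∀ j ∈ S.erase i, c j = 0 := fun j hj => by simpa using hz' j hj
    rw [Finset.sum_eq_zero hz''] at e1
    refine ⟨i, hi, by linarith, fun j hj hji => hz'' j (Finset.mem_erase.mpr ⟨hji, hj⟩)⟩
  · right
    push Not at hex
    have hc : ∀ i ∈ S, c i = 0 ∨ c i = 1 ∨ c i = -1 := by
      intro i hi
      have := hex i hi
      have u1 : c i < 2 := by nlinarith
      have u2 : -2 < c i := by nlinarith
      omega
    have q2 : ∑ i ∈ S, c i ^ 2 = (S.filter (fun i => c i = 1)).card + (S.filter (fun i => c i = -1)).card := by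
      rw [← Finset.sum_boole, ← Finset.sum_boole, ← Finset.sum_add_distrib]
      refine Finset.sum_congr rfl fun i hi => ?_
      rcases hc i hi with h | h | h <;> simp [h]
    have q1 : ∑ i ∈ S, c i = (S.filter (fun i => c i = 1)).card - (S.filter (fun i => c i = -1)).card := by
      rw [← Finset.sum_boole, ← Finset.sum_boole, ← Finset.sum_sub_distrib]
      refine Finset.sum_congr rfl fun i hi => ?_
      rcases hc i hi with h | h | h <;> simp [h]
    obtain ⟨a, ha⟩ := Finset.card_eq_one.mp (show (S.filter (fun i => c i = 1)).card = 1 by omega)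
    obtain ⟨b, d, e, hbd, hde, hN⟩ := sort_three (S.filter (fun i => c i = -1)) (by omega)
    have ma : ∀ j, (j ∈ S ∧ c j = 1) ↔ j = a := fun j => by
      have := Finset.ext_iff.mp ha j
      simpa using this
    have mN : ∀ j, (j ∈ S ∧ c j = -1) ↔ (j = b ∨ j = d ∨ j = e) := fun j => by
      have := Finset.ext_iff.mp hN j
      simpa using this
    have A := (ma a).mpr rfl
    have B := (mN b).mpr (by simp)
    have D := (mN d).mpr (by simp)
    have E := (mN e).mpr (by simp)
    refine ⟨a, b, d, e, A.1, B.1, D.1, E.1, hbd, hde, A.2, B.2, D.2, E.2, ?_⟩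
    intro j hj ja jb jd je
    rcases hc j hj with h | h | h
    · exact h
    · exact absurd ((ma j).mp ⟨hj, h⟩) ja
    · have := (mN j).mp ⟨hj, h⟩
      tauto

theorem comb' (n m a b c e : ℤ) (hm : 0 < m) (hmn : 2 * m < n)
  (ha : 0 < a) (han : a < n) (hb : 0 < b) (hbc : b < c) (hce : c < e) (hen : e < n)
  (hab : a ≠ b) (hac : a ≠ c) (hae : a ≠ e)
  (H : ∀ t : ℤ, 0 < t → (if b = t then 1 else 0) + (if c = t then 1 else 0) + (if e = t then 1 else 0)
    + (if n - b = t then 1 else 0) + (if n - c = t then 1 else 0) + (if n - e = t then 1 else 0)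
    + (if a - b = t then 1 else 0) + (if a - c = t then 1 else 0) + (if a - e = t then 1 else 0)
    + (if b - a = t then 1 else 0) + (if c - a = t then 1 else 0) + (if e - a = t then 1 else 0)
    = (if a = t then 1 else 0) + (if n - a = t then 1 else 0) + (if c - b = t then 1 else 0)
    + (if e - c = t then 1 else 0) + (if e - b = t then 1 else 0)
    + 2 * (if m = t then 1 else 0) + 2 * (if n - m = t then (1:ℤ) else 0)) :
  ∃ k : ℤ, 0 < k ∧ n = 7 * k ∧ m = 2 * k := by
  rcases le_total (b + e) n with hbe | hbe
  · exact ⟨b, hb, comb n m a b c e hm hmn ha han hb hbc hce hen hab hac hae hbe H⟩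
  · refine ⟨n - e, by omega, comb n m (n - a) (n - e) (n - c) (n - b) hm hmn (by omega) (by omega)
      (by omega) (by omega) (by omega) (by omega) (by omega) (by omega) (by omega) (by omega) ?_⟩
    intro t ht
    have h := H t ht
    have e0 : ∀ x y : ℤ, n - x - (n - y) = y - x := by intros; ring
    have e1 : ∀ x : ℤ, n - (n - x) = x := by intros; ring
    simp only [e0, e1]
    linarith

theorem mirror_reflect (F : ℤ[X]) (n : ℕ) (h1 : F.natDegree = n) (h2 : F.natTrailingDegree = 0) :
    F.mirror = reflect n F := by
  rw [mirror, reverse, h1, h2]; simp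

theorem cf (i j n t : ℕ) (hj : j ≤ n) :
    (X ^ i * X ^ (n - j) : ℤ[X]).coeff (n + t) = if (i : ℤ) - j = t then 1 else 0 := by
  rw [← pow_add, coeff_X_pow]
  refine if_congr ?_ rfl rfl
  omega

/-- The trinomial. -/
noncomputable def tri (n m : ℕ) : ℤ[X] := X ^ n - 2 * X ^ m + 1

theorem tri_coeff (n m k : ℕ) : (tri n m).coeff k =
    (if k = n then 1 else 0) - 2 * (if k = m then 1 else 0) + (if k = 0 then 1 else 0) := by
  have : tri n m = X ^ n - C 2 * X ^ m + X ^ 0 := by simp [tri]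
  rw [this]
  simp only [coeff_add, coeff_sub, coeff_C_mul, coeff_X_pow]

theorem tri_natDegree (n m : ℕ) (hm : 0 < m) (hmn : m < n) : (tri n m).natDegree = n := by
  apply natDegree_eq_of_le_of_coeff_ne_zero
  · rw [natDegree_le_iff_coeff_eq_zero]
    intro k hk
    rw [tri_coeff, if_neg (by omega), if_neg (by omega), if_neg (by omega)]; simp
  · rw [tri_coeff, if_pos rfl, if_neg (by omega), if_neg (by omega)]; simp

theorem tri_natTrailingDegree (n m : ℕ) (hm : 0 < m) (hmn : m < n) :
    (tri n m).natTrailingDegree = 0 := by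
  rw [natTrailingDegree_eq_zero]
  right
  rw [tri_coeff, if_neg (by omega), if_neg (by omega), if_pos rfl]; simp

theorem tri_eq (n m : ℕ) : tri n m = X ^ n - X ^ m - X ^ m + X ^ 0 := by
  rw [tri]; ring

theorem tri_reflect (n m : ℕ) (hmn : m < n) :
    reflect n (tri n m) = X ^ (n - n) - X ^ (n - m) - X ^ (n - m) + X ^ (n - 0) := by
  rw [tri_eq]
  simp only [reflect_add, reflect_sub, reflect_monomial]
  rw [revAt_le le_rfl, revAt_le hmn.le, revAt_le (Nat.zero_le n)]

theorem tri_mirror' (n m : ℕ) (hm : 0 < m) (hmn : m < n) :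
    (tri n m).mirror = X ^ (n - n) - X ^ (n - m) - X ^ (n - m) + X ^ (n - 0) := by
  rw [mirror_reflect _ n (tri_natDegree n m hm hmn) (tri_natTrailingDegree n m hm hmn),
    tri_reflect n m hmn]

theorem tri_mirror (n m : ℕ) (hm : 0 < m) (hmn : m < n) :
    (tri n m).mirror = tri n (n - m) := by
  rw [tri_mirror' n m hm hmn, tri_eq]
  simp only [Nat.sub_self, Nat.sub_zero]; ring

theorem tri_prod_coeff (n m : ℕ) (hm : 0 < m) (hmn : m < n) (t : ℕ) :
    (tri n m * (tri n m).mirror).coeff (n + t) =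
      6 * (if t = 0 then 1 else 0) + (if (n : ℤ) = t then 1 else 0) - 2 * (if (m : ℤ) = t then 1 else 0)
       - 2 * (if (n : ℤ) - m = t then 1 else 0) := by
  rw [tri_mirror' n m hm hmn, tri_eq]
  simp only [mul_add, add_mul, mul_sub, sub_mul, coeff_add, coeff_sub]
  rw [cf n n n t le_rfl, cf n m n t hmn.le, cf n 0 n t (Nat.zero_le _),
    cf m n n t le_rfl, cf m m n t hmn.le, cf m 0 n t (Nat.zero_le _),
    cf 0 n n t le_rfl, cf 0 m n t hmn.le, cf 0 0 n t (Nat.zero_le _)]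
  simp only [sub_self, Nat.cast_zero, sub_zero]
  have k1 : ¬ ((m : ℤ) - n = t) := by omega
  have k2 : ¬ ((0 : ℤ) - n = t) := by omega
  have k3 : ¬ ((0 : ℤ) - m = t) := by omega
  have k4 : ((0 : ℤ) = t) ↔ t = 0 := by omega
  rw [if_neg k1, if_neg k2, if_neg k3]
  simp only [k4]
  ring

theorem key_one (n m : ℕ) (hm : 0 < m) (hmn : 2 * m < n)
    (hexc : ¬ ∃ k : ℕ, 0 < k ∧ n = 7 * k ∧ m = 2 * k) (F : ℤ[X])
    (hF : F * F.mirror = tri n m * (tri n m).mirror) (h0 : F.coeff 0 = 1) :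
    F = tri n m ∨ F = tri n (n - m) := by
  have hmn' : m < n := by omega
  have hdeg : F.natDegree = n := by
    have := congrArg natDegree hF
    rw [natDegree_mul_mirror, natDegree_mul_mirror, tri_natDegree n m hm hmn'] at this
    omega
  have htr : F.natTrailingDegree = 0 := by
    rw [natTrailingDegree_eq_zero]; right; rw [h0]; simp
  have hmir := mirror_reflect F n hdeg htr
  have hn1 : F.coeff n = 1 := by
    have h := congrArg (fun p => coeff p (n + n)) hF
    rw [tri_prod_coeff n m hm hmn', if_neg (by omega), if_pos rfl, if_neg (by omega),
      if_neg (by omega)] at h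
    have h3 : (F * F.mirror).coeff (n + n) = F.coeff n * F.mirror.coeff n :=
      coeff_mul_add_eq_of_natDegree_le hdeg.le (by rw [mirror_natDegree, hdeg])
    rw [h3, hmir, coeff_reflect, revAt_le le_rfl, Nat.sub_self, h0] at h
    linarith
  have hsq : ∑ i ∈ Finset.range (n + 1), F.coeff i ^ 2 = 6 := by
    have h := coeff_mul_mirror F
    rw [sum_over_range _ (by simp), hdeg, htr, hF, tri_prod_coeff n m hm hmn', if_pos rfl,
      if_neg (by push_cast; omega), if_neg (by push_cast; omega), if_neg (by push_cast; omega)] at h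
    linarith
  have hone : ∑ i ∈ Finset.range (n + 1), F.coeff i = 0 := by
    have h := congrArg (eval 1) hF
    rw [eval_mul, eval_mul, mirror_eval_one, mirror_eval_one] at h
    have h2 : eval 1 (tri n m) = 0 := by simp [tri]
    rw [h2, mul_zero, mul_self_eq_zero, eval_eq_sum_range, hdeg] at h
    simpa using h
  set S := ((Finset.range (n + 1)).erase 0).erase n with hS
  have memS : ∀ j, j ∈ S ↔ 0 < j ∧ j < n := by
    intro j
    simp only [hS, Finset.mem_erase, Finset.mem_range]; omega
  have hsplit : ∀ g : ℕ → ℤ, ∑ i ∈ Finset.range (n + 1), g i = g 0 + (g n + ∑ i ∈ S, g i) := by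
    intro g
    rw [hS, Finset.add_sum_erase _ g (by simp; omega), Finset.add_sum_erase _ g (by simp)]
  rw [hsplit] at hsq hone
  rw [h0, hn1] at hsq hone
  have hbig : ∀ j, n < j → F.coeff j = 0 := fun j hj =>
    coeff_eq_zero_of_natDegree_lt (by omega)
  rcases four S F.coeff (by linarith) (by linarith) with ⟨i, hi, hci, hz⟩ |
    ⟨a, b, d, e, ha, hb, hd, he, hbd, hde, ca, cb, cd, ce, hz⟩
  · rw [memS] at hi
    have hFt : F = tri n i := by
      ext j
      rw [tri_coeff]
      rcases Nat.lt_or_ge n j with h | h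
      · rw [hbig j h, if_neg (by omega), if_neg (by omega), if_neg (by omega)]; simp
      by_cases j0 : j = 0
      · subst j0; rw [h0, if_neg (by omega), if_neg (by omega), if_pos rfl]; simp
      by_cases jn : j = n
      · subst jn; rw [hn1, if_pos rfl, if_neg (by omega), if_neg (by omega)]; simp
      by_cases ji : j = i
      · subst ji; rw [hci, if_neg (by omega), if_pos rfl, if_neg (by omega)]; simp
      · rw [hz j ((memS j).mpr (by omega)) ji, if_neg jn, if_neg ji, if_neg j0]; simp
    have h := congrArg (fun p => coeff p (n + m)) hF
    rw [hFt, tri_prod_coeff n m hm hmn', tri_prod_coeff n i hi.1 hi.2] at h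
    have : i = m ∨ i = n - m := by
      split_ifs at h <;> omega
    rcases this with rfl | rfl
    · exact Or.inl hFt
    · exact Or.inr hFt
  · exfalso
    rw [memS] at ha hb hd he
    have nab : a ≠ b := by rintro rfl; omega
    have nad : a ≠ d := by rintro rfl; omega
    have nae : a ≠ e := by rintro rfl; omega
    have hFt : F = X ^ n + X ^ 0 + X ^ a - X ^ b - X ^ d - X ^ e := by
      ext j
      simp only [coeff_add, coeff_sub, coeff_X_pow]
      rcases Nat.lt_or_ge n j with h | h
      · rw [hbig j h, if_neg (by omega), if_neg (by omega), if_neg (by omega), if_neg (by omega),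
          if_neg (by omega), if_neg (by omega)]; simp
      by_cases j0 : j = 0
      · subst j0; rw [h0]; split_ifs <;> omega
      by_cases jn : j = n
      · subst jn; rw [hn1]; split_ifs <;> omega
      by_cases ja : j = a
      · subst ja; rw [ca]; split_ifs <;> omega
      by_cases jb : j = b
      · subst jb; rw [cb]; split_ifs <;> omega
      by_cases jd : j = d
      · subst jd; rw [cd]; split_ifs <;> omega
      by_cases je : j = e
      · subst je; rw [ce]; split_ifs <;> omega
      rw [hz j ((memS j).mpr (by omega)) ja jb jd je, if_neg jn, if_neg j0, if_neg ja, if_neg jb,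
        if_neg jd, if_neg je]; simp
    have hFm : F.mirror = X ^ (n - n) + X ^ (n - 0) + X ^ (n - a) - X ^ (n - b) - X ^ (n - d)
        - X ^ (n - e) := by
      rw [hmir, hFt]
      simp only [reflect_add, reflect_sub, reflect_monomial]
      rw [revAt_le le_rfl, revAt_le (Nat.zero_le n), revAt_le ha.2.le, revAt_le hb.2.le,
        revAt_le hd.2.le, revAt_le he.2.le]
    obtain ⟨k, hk, hk1, hk2⟩ := comb' n m a b d e (by omega) (by omega) (by omega) (by omega)
      (by omega) (by omega) (by omega) (by omega) (by omega) (by omega) (by omega) (by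
      intro t ht
      obtain ⟨t, rfl⟩ := Int.eq_ofNat_of_zero_le ht.le
      have h := congrArg (fun p => coeff p (n + t)) hF
      rw [tri_prod_coeff n m hm hmn', hFm, hFt] at h
      simp only [mul_add, add_mul, mul_sub, sub_mul, coeff_add, coeff_sub] at h
      have c1 := fun i => cf i n n t le_rfl
      have c2 := fun i => cf i 0 n t (Nat.zero_le n)
      have c3 := fun i => cf i a n t ha.2.le
      have c4 := fun i => cf i b n t hb.2.le
      have c5 := fun i => cf i d n t hd.2.le
      have c6 := fun i => cf i e n t he.2.le
      simp only [c1, c2, c3, c4, c5, c6] at h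
      clear c1 c2 c3 c4 c5 c6 hFt hFm hmir hsplit hbig hz hF hsq hone memS hS
      simp only [sub_self, Nat.cast_zero, sub_zero] at h
      revert h
      simp (disch := omega) only [if_neg]
      intro h
      linarith)
    exact hexc ⟨k.toNat, by omega, by omega, by omega⟩

theorem key_two (n m : ℕ) (hm : 0 < m) (hmn : 2 * m < n)
    (hexc : ¬ ∃ k : ℕ, 0 < k ∧ n = 7 * k ∧ m = 2 * k) (F : ℤ[X])
    (hF : F * F.mirror = tri n m * (tri n m).mirror) :
    F = tri n m ∨ F = -tri n m ∨ F = tri n (n - m) ∨ F = -tri n (n - m) := by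
  have hmn' : m < n := by omega
  have h : F.coeff 0 ∣ 1 := by
    have h := congrArg (fun p => coeff p 0) hF
    simp only [mul_coeff_zero, tri_mirror n m hm hmn', tri_coeff] at h
    have u1 : ¬ (0 = n) := by omega
    have u2 : ¬ (0 = m) := by omega
    have u3 : ¬ (0 = n - m) := by omega
    rw [if_neg u1, if_neg u2, if_neg u3] at h
    exact ⟨_, by rw [h]; simp⟩
  rcases Int.isUnit_iff.mp (isUnit_of_dvd_one h) with h0 | h0
  · have := key_one n m hm hmn hexc F hF h0
    tauto
  · have := key_one n m hm hmn hexc (-F) (by rw [mirror_neg, neg_mul_neg, hF]) (by simp [h0])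
    rw [neg_eq_iff_eq_neg, neg_eq_iff_eq_neg] at this
    tauto

theorem key (n m : ℕ) (hm : 0 < m) (hmn : m < n) (hne : n ≠ 2 * m)
    (hexc : ¬ ∃ k : ℕ, 0 < k ∧ ((n = 7 * k ∧ m = 2 * k) ∨ (n = 7 * k ∧ m = 5 * k))) (F : ℤ[X])
    (hF : F * F.mirror = tri n m * (tri n m).mirror) :
    F = tri n m ∨ F = -tri n m ∨ F = (tri n m).mirror ∨ F = -(tri n m).mirror := by
  rw [tri_mirror n m hm hmn]
  rcases lt_or_gt_of_ne hne with h | h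
  · have := key_two n (n - m) (by omega) (by omega)
      (fun ⟨k, hk, h1, h2⟩ => hexc ⟨k, hk, Or.inr ⟨h1, by omega⟩⟩) F (by
        rw [hF, tri_mirror n m hm hmn, tri_mirror n (n - m) (by omega) (by omega), mul_comm]
        rw [Nat.sub_sub_self hmn.le])
    rw [Nat.sub_sub_self hmn.le] at this
    tauto
  · exact key_two n m hm h (fun ⟨k, hk, h1, h2⟩ => hexc ⟨k, hk, Or.inl ⟨h1, h2⟩⟩) F hF

theorem relprime_aux (n m : ℕ) (hm : 0 < m) (hmn : m < n) (hne : n ≠ 2 * m) (g : ℤ[X])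
    (hg : tri n m = (X ^ (Nat.gcd n m) - 1) * g) (hmonic : g.Monic) :
    IsRelPrime g g.mirror := by
  intro p hp1 hp2
  by_contra hu
  have hlc : IsUnit p.leadingCoeff := by
    obtain ⟨q, hq⟩ := hp1
    have : p.leadingCoeff * q.leadingCoeff = 1 := by
      rw [← leadingCoeff_mul, ← hq]; exact hmonic
    exact IsUnit.of_mul_eq_one _ this
  have hdeg : p.natDegree ≠ 0 := by
    intro h
    rw [natDegree_eq_zero] at h
    obtain ⟨c, rfl⟩ := h
    rw [leadingCoeff_C] at hlc
    exact hu (isUnit_C.mpr hlc)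
  have hinj : Function.Injective (algebraMap ℤ ℂ) := (algebraMap ℤ ℂ).injective_int
  obtain ⟨x, hx⟩ := Complex.exists_root (f := p.map (algebraMap ℤ ℂ)) (by
    rw [degree_map_eq_of_injective hinj]
    exact natDegree_pos_iff_degree_pos.mp (Nat.pos_of_ne_zero hdeg))
  have hxp : aeval x p = 0 := by
    rw [aeval_def, ← eval_map]; exact hx
  have hxg : aeval x g = 0 := by
    obtain ⟨q, rfl⟩ := hp1
    rw [map_mul, hxp, zero_mul]
  have hxg' : aeval x g.mirror = 0 := by
    obtain ⟨q, hq⟩ := hp2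
    rw [hq, map_mul, hxp, zero_mul]
  have f1 : aeval x (tri n m) = 0 := by rw [hg, map_mul, hxg, mul_zero]
  have f2 : aeval x (tri n (n - m)) = 0 := by
    rw [← tri_mirror n m hm hmn, hg, mirror_mul_of_domain, map_mul, hxg', mul_zero]
  have two : aeval x (2 : ℤ[X]) = (2 : ℂ) := map_ofNat _ 2
  simp only [tri, map_add, map_sub, map_mul, map_pow, aeval_X, map_one, two] at f1 f2
  have hprod : x ^ n = x ^ m * x ^ (n - m) := by rw [← pow_add]; congr 1; omega
  have hy : x ^ m = x ^ (n - m) := by linear_combination (f2 - f1) / 2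
  have hy1 : (x ^ m - 1) ^ 2 = 0 := by
    rw [hprod, ← hy] at f1
    linear_combination f1
  have hxm : x ^ m = 1 := by
    have := pow_eq_zero_iff (two_ne_zero) |>.mp hy1
    linear_combination this
  have hxn : x ^ n = 1 := by rw [hprod, ← hy, hxm, mul_one]
  have hxd : x ^ (Nat.gcd n m) = 1 := pow_gcd_eq_one.mpr ⟨hxn, hxm⟩
  have hder := congrArg (fun q => aeval x (derivative q)) hg
  simp only [derivative_mul, map_add, map_mul, hxg, mul_zero, map_sub, map_pow, aeval_X, map_one,
    hxd, sub_self, zero_mul, add_zero, tri, derivative_X_pow, derivative_one,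
    derivative_ofNat, two, zero_add, map_natCast] at hder
  have e1 : x ^ (n - 1) * x = 1 := by rw [← pow_succ, Nat.sub_add_cancel (by omega), hxn]
  have e2 : x ^ (m - 1) * x = 1 := by rw [← pow_succ, Nat.sub_add_cancel (by omega), hxm]
  have : (n : ℂ) = 2 * m := by

    linear_combination x * hder - (n : ℂ) * e1 + 2 * (m : ℂ) * e2
  exact hne (by exact_mod_cast this)

/-- Schinzel's theorem on `X^n - 2X^m + 1`: outside the two exceptional families,
`X^n - 2X^m + 1 = (X^gcd(n,m) - 1)·g` with `g` irreducible and non-reciprocal. -/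
theorem schinzel_trinomial (n m : ℕ) (hm : 0 < m) (hmn : m < n) (hne : n ≠ 2 * m)
    (hexc : ¬ ∃ k : ℕ, 0 < k ∧ ((n = 7 * k ∧ m = 2 * k) ∨ (n = 7 * k ∧ m = 5 * k))) :
    ∃ g : Polynomial ℤ,
      (X : Polynomial ℤ) ^ n - 2 * X ^ m + 1 = (X ^ (Nat.gcd n m) - 1) * g ∧
      Irreducible g ∧ g.reverse ≠ g ∧ g.reverse ≠ -g := by
  have hdvd : ∀ k, Nat.gcd n m ∣ k → (X ^ (Nat.gcd n m) - 1 : ℤ[X]) ∣ X ^ k - 1 := by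
    rintro k ⟨q, rfl⟩
    have := sub_dvd_pow_sub_pow (X ^ (Nat.gcd n m) : ℤ[X]) 1 q
    rwa [one_pow, ← pow_mul] at this
  have hd0 : 0 < Nat.gcd n m := Nat.gcd_pos_of_pos_right _ hm
  have hdm : Nat.gcd n m ≤ m := Nat.gcd_le_right _ hm
  obtain ⟨g, hg⟩ : (X ^ (Nat.gcd n m) - 1 : ℤ[X]) ∣ tri n m := by
    have : tri n m = (X ^ n - 1) - 2 * (X ^ m - 1) := by rw [tri]; ring
    rw [this]
    exact dvd_sub (hdvd n (Nat.gcd_dvd_left _ _)) (Dvd.dvd.mul_left (hdvd m (Nat.gcd_dvd_right _ _)) _)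
  refine ⟨g, hg, ?_⟩
  set d := Nat.gcd n m with hd
  have hDm : (X ^ d - 1 : ℤ[X]).Monic := monic_X_pow_sub_C (1 : ℤ) hd0.ne'
  have hDd : (X ^ d - 1 : ℤ[X]).natDegree = d := natDegree_X_pow_sub_C (r := (1 : ℤ))
  have hD0 : (X ^ d - 1 : ℤ[X]).coeff 0 = -1 := by
    have : ¬ (0 = d) := by omega
    simp [coeff_X_pow, this]
  have hfm : (tri n m).Monic := by
    rw [Monic, leadingCoeff, tri_natDegree n m hm hmn, tri_coeff, if_pos rfl, if_neg (by omega),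
      if_neg (by omega)]; simp
  have hgm : g.Monic := by
    rw [hg] at hfm
    exact hDm.of_mul_monic_left hfm
  have hDmir : (X ^ d - 1 : ℤ[X]).mirror = -(X ^ d - 1) := by
    rw [mirror_reflect _ d hDd (natTrailingDegree_eq_zero.mpr (Or.inr (by rw [hD0]; simp)))]
    rw [show (X ^ d - 1 : ℤ[X]) = X ^ d - X ^ 0 by simp, reflect_sub, reflect_monomial,
      reflect_monomial, revAt_le le_rfl, revAt_le (Nat.zero_le d)]
    simp
  have hdeg : d + g.natDegree = n := by
    have := congrArg natDegree hg
    rw [tri_natDegree n m hm hmn, hDm.natDegree_mul hgm, hDd] at this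
    omega
  have hnu : ¬ IsUnit g := by
    intro h
    have := natDegree_eq_zero_of_isUnit h
    omega
  have hrel := relprime_aux n m hm hmn hne g hg hgm
  have hg0 : g.natTrailingDegree = 0 := by
    rw [natTrailingDegree_eq_zero]
    right
    intro h
    have h2 := congrArg (fun p => coeff p 0) hg
    simp only [mul_coeff_zero, h, mul_zero, tri_coeff] at h2
    have u1 : ¬ (0 = n) := by omega
    have u2 : ¬ (0 = m) := by omega
    rw [if_neg u1, if_neg u2] at h2
    simp at h2
  have hrev : g.mirror = g.reverse := by rw [mirror, hg0, pow_zero, mul_one]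
  refine ⟨irreducible_of_mirror hnu ?_ hrel, ?_, ?_⟩
  · intro k hk
    have h := key n m hm hmn hne hexc ((X ^ d - 1) * k) (by
      rw [hg, mirror_mul_of_domain, mirror_mul_of_domain]
      linear_combination (-(X ^ d - 1) * (X ^ d - 1 : ℤ[X]).mirror) * hk)
    rw [hg, mirror_mul_of_domain, hDmir, ← mul_neg, neg_mul, neg_neg, ← mul_neg] at h
    simp only [mul_right_inj' hDm.ne_zero] at h
    tauto
  · intro h
    exact hnu (hrel dvd_rfl (by rw [hrev, h]))
  · intro h
    exact hnu (hrel dvd_rfl (by rw [hrev, h]; exact (dvd_neg).mpr dvd_rfl))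
end

section
/- Let n > m > 0 be integers and ε₁, ε₂ ∈ {−1, +1}, and set f(X) = X^n + 2ε₁X^m + ε₂ ∈ ℤ[X]. Assume there is no positive integer k such that (n, m, ε₁, ε₂) is one of: (7k, 2k, −1, +1), (7k, 5k, −1, +1), (7k, 2k, +1, −1), (7k, 5k, −1, −1), (7k, 3k, +1, +1), (7k, 4k, +1, +1), (7k, 3k, +1, −1), (7k, 4k, −1, −1). Then there exist a multiset S of positive integers and g ∈ ℤ[X] such that f = (∏_{i ∈ S} Φ_i(X))·g and either g = 1 or g is irreducible in ℤ[X]. -/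
open Polynomial

namespace FT

set_option linter.unusedSimpArgs false

/-- six-term autocorrelation -/
def N6 (a b c d n : ℕ) (s0 s1 s2 s3 s4 s5 : ℤ) (t : ℕ) : ℤ :=
  (if a = t then s0 * s1 else 0) + (if b = t then s0 * s2 else 0) +
  (if c = t then s0 * s3 else 0) + (if d = t then s0 * s4 else 0) +
  (if n = t then s0 * s5 else 0) + (if a + t = b then s1 * s2 else 0) +
  (if a + t = c then s1 * s3 else 0) + (if a + t = d then s1 * s4 else 0) +
  (if a + t = n then s1 * s5 else 0) + (if b + t = c then s2 * s3 else 0) +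
  (if b + t = d then s2 * s4 else 0) + (if b + t = n then s2 * s5 else 0) +
  (if c + t = d then s3 * s4 else 0) + (if c + t = n then s3 * s5 else 0) +
  (if d + t = n then s4 * s5 else 0)

def R (n m : ℕ) (e1 e2 : ℤ) (t : ℕ) : ℤ :=
  (if n = t then e2 else 0) + (if m = t then 2 * e1 * e2 else 0) +
  (if m + t = n then 2 * e1 else 0)

lemma comb (a b c d n : ℕ) (h0 : 0 < a) (hab : a < b) (hbc : b < c) (hcd : c < d) (hdn : d < n)
    (H : ∀ t, 0 < t → t < n → 
  (if a = t then (1 : ZMod 2) else 0) + (if b = t then 1 else 0) +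
  (if c = t then 1 else 0) + (if d = t then 1 else 0) +
  (if a + t = b then 1 else 0) +
  (if a + t = c then 1 else 0) + (if a + t = d then 1 else 0) +
  (if a + t = n then 1 else 0) + (if b + t = c then 1 else 0) +
  (if b + t = d then 1 else 0) + (if b + t = n then 1 else 0) +
  (if c + t = d then 1 else 0) + (if c + t = n then 1 else 0) +
  (if d + t = n then 1 else 0) = 0) :
    n = 7 * a ∧ d = 6 * a ∧ 
      ((b = 4 * a ∧ c = 5 * a) ∨ (b = 2 * a ∧ c = 3 * a)) := by
  have two : (1 : ZMod 2) + 1 = 0 := by decide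
  have e1 : a + d = n := by
    rcases lt_trichotomy (a + d) n with h | h | h
    · have := H (n - a) (by omega) (by omega)
      simp (disch := omega) only [if_pos, if_neg, if_true] at this
      exact absurd this (by decide)
    · exact h
    · have := H d (by omega) (by omega)
      simp (disch := omega) only [if_pos, if_neg, if_true] at this
      exact absurd this (by decide)
  have e2 : b + c ≠ n := by
    intro h
    have := H (n - 2 * a) (by omega) (by omega)
    have k1 : ∀ (P Q : Prop) [Decidable P] [Decidable Q], (P ↔ Q) → 
      (if P then (1 : ZMod 2) else 0) = (if Q then (1 : ZMod 2) else 0) := by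
      intro P Q _ _ h; simp [h]
    set t := n - 2 * a
    rw [k1 (c = t) (b + t = n) (by omega), k1 (b = t) (c + t = n) (by omega), 
      k1 (d = t) (a + t = n) (by omega), k1 (a = t) (d + t = n) (by omega), 
      k1 (a + t = b) (c + t = d) (by omega), k1 (a + t = c) (b + t = d) (by omega)] at this
    have h1 : a + t = d := by omega
    have h2 : b + t ≠ c := by omega
    rw [if_pos h1, if_neg h2] at this
    generalize (if b + t = n then (1 : ZMod 2) else 0) = x1 at this
    generalize (if c + t = n then (1 : ZMod 2) else 0) = x2 at this
    generalize (if a + t = n then (1 : ZMod 2) else 0) = x3 at this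
    generalize (if d + t = n then (1 : ZMod 2) else 0) = x4 at this
    generalize (if c + t = d then (1 : ZMod 2) else 0) = x5 at this
    generalize (if b + t = d then (1 : ZMod 2) else 0) = x6 at this
    revert this
    revert x1 x2 x3 x4 x5 x6
    decide
  rcases lt_or_gt_of_ne e2 with h | h
  · have e3 : b = 2 * a := by
      rcases lt_trichotomy b (2 * a) with h | h | h
      · have := H (n - b) (by omega) (by omega)
        simp (disch := omega) only [if_pos, if_neg, if_true] at this
        exact absurd this (by decide)
      · exact h
      · have := H (n - 2 * a) (by omega) (by omega)
        simp (disch := omega) only [if_pos, if_neg, if_true] at this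
        exact absurd this (by decide)
    have e4 : c = 3 * a := by
      by_contra h
      have := H a (by omega) (by omega)
      simp (disch := omega) only [if_pos, if_neg, if_true] at this
      exact absurd this (by decide)
    have e5 : n = 7 * a := by
      by_contra h
      have := H (3 * a) (by omega) (by omega)
      by_cases h6 : n = 6 * a
      · simp (disch := omega) only [if_pos, if_neg, if_true] at this
        exact absurd this (by decide)
      · simp (disch := omega) only [if_pos, if_neg, if_true] at this
        exact absurd this (by decide)
    omega
  · have e3 : c + 2 * a = n := by
      rcases lt_trichotomy (c + 2 * a) n with h | h | h
      · have := H (n - 2 * a) (by omega) (by omega)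
        simp (disch := omega) only [if_pos, if_neg, if_true] at this
        exact absurd this (by decide)
      · exact h
      · have := H c (by omega) (by omega)
        simp (disch := omega) only [if_pos, if_neg, if_true] at this
        exact absurd this (by decide)
    have e4 : b + 3 * a = n := by
      by_contra h
      have := H a (by omega) (by omega)
      simp (disch := omega) only [if_pos, if_neg, if_true] at this
      exact absurd this (by decide)
    have e5 : n = 7 * a := by
      by_contra h
      have := H (3 * a) (by omega) (by omega)
      by_cases h6 : n = 6 * a
      · simp (disch := omega) only [if_pos, if_neg, if_true] at this
        exact absurd this (by decide)
      · simp (disch := omega) only [if_pos, if_neg, if_true] at this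
        exact absurd this (by decide)
    omega

lemma comb' (a b c d n m : ℕ) (h0 : 0 < a) (hab : a < b) (hbc : b < c) (hcd : c < d) (hdn : d < n)
    (e1 e2 s0 s1 s2 s3 s4 s5 : ℤ)
    (h0' : s0 = 1 ∨ s0 = -1) (h1' : s1 = 1 ∨ s1 = -1) (h2' : s2 = 1 ∨ s2 = -1)
    (h3' : s3 = 1 ∨ s3 = -1) (h4' : s4 = 1 ∨ s4 = -1) (h5' : s5 = 1 ∨ s5 = -1)
    (H : ∀ t, 0 < t → N6 a b c d n s0 s1 s2 s3 s4 s5 t = R n m e1 e2 t) :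
    n = 7 * a ∧ d = 6 * a ∧ 
      ((b = 4 * a ∧ c = 5 * a) ∨ (b = 2 * a ∧ c = 3 * a)) := by
  apply comb a b c d n h0 hab hbc hcd hdn
  intro t ht htn
  have h := congrArg (Int.cast : ℤ → ZMod 2) (H t ht)
  have key : ∀ s : ℤ, s = 1 ∨ s = -1 → (s : ZMod 2) = 1 := by
    rintro s (rfl | rfl) <;> decide
  have two : (2 : ZMod 2) = 0 := by decide
  simp only [N6, R, Int.cast_add, Int.cast_mul, Int.cast_ite, key _ h0', key _ h1', key _ h2',
    key _ h3', key _ h4', key _ h5', Int.cast_zero, mul_one, Int.cast_ofNat, two, zero_mul,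
    ite_self, add_zero, if_neg (show ¬ n = t by omega)] at h
  exact h

lemma signs1 : ∀ e1 ∈ [(1:ℤ), -1], ∀ e2 ∈ [(1:ℤ), -1], ∀ s0 ∈ [(1:ℤ), -1], ∀ s1 ∈ [(1:ℤ), -1],
    ∀ s2 ∈ [(1:ℤ), -1], ∀ s3 ∈ [(1:ℤ), -1], ∀ s4 ∈ [(1:ℤ), -1], ∀ s5 ∈ [(1:ℤ), -1],
    ∀ j ∈ [0, 1, 2, 3, 4, 5, 6],
    (∀ i ∈ [1, 2, 3, 4, 5, 6, 7], N6 1 4 5 6 7 s0 s1 s2 s3 s4 s5 i = 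
      (if i = 7 then e2 else 0) + if j = 0 then 0 else 
        ((if j = i then 2 * e1 * e2 else 0) + if j + i = 7 then 2 * e1 else 0)) →
    (j = 2 ∧ e1 = -1 ∧ e2 = 1) ∨ (j = 5 ∧ e1 = -1 ∧ e2 = 1) ∨ (j = 2 ∧ e1 = 1 ∧ e2 = -1) ∨
    (j = 5 ∧ e1 = -1 ∧ e2 = -1) ∨ (j = 3 ∧ e1 = 1 ∧ e2 = 1) ∨ (j = 4 ∧ e1 = 1 ∧ e2 = 1) ∨
    (j = 3 ∧ e1 = 1 ∧ e2 = -1) ∨ (j = 4 ∧ e1 = -1 ∧ e2 = -1) := by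
  decide +kernel

lemma signs2 : ∀ e1 ∈ [(1:ℤ), -1], ∀ e2 ∈ [(1:ℤ), -1], ∀ s0 ∈ [(1:ℤ), -1], ∀ s1 ∈ [(1:ℤ), -1],
    ∀ s2 ∈ [(1:ℤ), -1], ∀ s3 ∈ [(1:ℤ), -1], ∀ s4 ∈ [(1:ℤ), -1], ∀ s5 ∈ [(1:ℤ), -1],
    ∀ j ∈ [0, 1, 2, 3, 4, 5, 6],
    (∀ i ∈ [1, 2, 3, 4, 5, 6, 7], N6 1 2 3 6 7 s0 s1 s2 s3 s4 s5 i = 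
      (if i = 7 then e2 else 0) + if j = 0 then 0 else 
        ((if j = i then 2 * e1 * e2 else 0) + if j + i = 7 then 2 * e1 else 0)) →
    (j = 2 ∧ e1 = -1 ∧ e2 = 1) ∨ (j = 5 ∧ e1 = -1 ∧ e2 = 1) ∨ (j = 2 ∧ e1 = 1 ∧ e2 = -1) ∨
    (j = 5 ∧ e1 = -1 ∧ e2 = -1) ∨ (j = 3 ∧ e1 = 1 ∧ e2 = 1) ∨ (j = 4 ∧ e1 = 1 ∧ e2 = 1) ∨
    (j = 3 ∧ e1 = 1 ∧ e2 = -1) ∨ (j = 4 ∧ e1 = -1 ∧ e2 = -1) := by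
  decide +kernel

lemma N6_scale (k a b c d n : ℕ) (hk : 0 < k) (s0 s1 s2 s3 s4 s5 : ℤ) (t : ℕ) :
    N6 (a * k) (b * k) (c * k) (d * k) (n * k) s0 s1 s2 s3 s4 s5 (t * k) = 
    N6 a b c d n s0 s1 s2 s3 s4 s5 t := by
  simp only [N6, ← add_mul, Nat.mul_left_inj hk.ne']

lemma N6_zero (k a b c d n : ℕ) (s0 s1 s2 s3 s4 s5 : ℤ) (t : ℕ) (ht : ¬ k ∣ t) :
    N6 (a * k) (b * k) (c * k) (d * k) (n * k) s0 s1 s2 s3 s4 s5 t = 0 := by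
  have h1 : ∀ x, ¬ x * k = t := fun x h => ht ⟨x, by rw [← h, mul_comm]⟩
  have h2 : ∀ x y, ¬ x * k + t = y * k := fun x y h => ht ((Nat.dvd_add_right 
    (Dvd.intro_left x rfl)).1 (h ▸ Dvd.intro_left y rfl))
  simp only [N6, h1, h2, if_false, add_zero]

lemma scaled (a b c d k m : ℕ) (hk : 0 < k) (hm : 0 < m) (hmn : m < 7 * k)
    (e1 e2 s0 s1 s2 s3 s4 s5 : ℤ) (he1 : e1 = 1 ∨ e1 = -1) (he2 : e2 = 1 ∨ e2 = -1)
    (H : ∀ t, 0 < t → N6 (a * k) (b * k) (c * k) (d * k) (7 * k) s0 s1 s2 s3 s4 s5 t = 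
      R (7 * k) m e1 e2 t) :
    ∃ j ∈ [0, 1, 2, 3, 4, 5, 6], (j ≠ 0 → m = j * k) ∧ ∀ i ∈ [1, 2, 3, 4, 5, 6, 7],
      N6 a b c d 7 s0 s1 s2 s3 s4 s5 i = 
      (if i = 7 then e2 else 0) + if j = 0 then 0 else 
        ((if j = i then 2 * e1 * e2 else 0) + if j + i = 7 then 2 * e1 else 0) := by
  by_cases hd : k ∣ m
  · obtain ⟨j, rfl⟩ := hd
    have hj0 : j ≠ 0 := by rintro rfl; simp at hm
    have hj7 : j < 7 := by nlinarith
    refine ⟨j, ?_, fun _ => mul_comm _ _, ?_⟩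
    · interval_cases j <;> simp
    intro i hi
    have hi0 : 0 < i := by
      rcases Nat.eq_zero_or_pos i with rfl | h
      · simp at hi
      · exact h
    rw [← N6_scale k _ _ _ _ _ hk, H _ (by positivity), R, mul_comm k j, if_neg hj0, ← add_mul]
    simp only [Nat.mul_left_inj hk.ne']
    simp only [eq_comm (a := i) (b := 7), add_assoc]
  · refine ⟨0, by simp, by simp, ?_⟩
    have h1 := H m hm
    rw [N6_zero _ _ _ _ _ _ _ _ _ _ _ _ _ hd, R, if_neg (by omega), if_pos rfl] at h1
    have h2 : m + m = 7 * k ∧ e2 = -1 := by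
      by_cases h : m + m = 7 * k
      · rw [if_pos h] at h1
        refine ⟨h, ?_⟩
        rcases he1 with rfl | rfl <;> rcases he2 with rfl | rfl <;> simp at h1 ⊢
      · rw [if_neg h] at h1
        rcases he1 with rfl | rfl <;> rcases he2 with rfl | rfl <;> simp at h1
    intro i hi
    have hi0 : 0 < i := by
      rcases Nat.eq_zero_or_pos i with rfl | h
      · simp at hi
      · exact h
    rw [← N6_scale k _ _ _ _ _ hk, H _ (by positivity), R]
    simp only [Nat.mul_left_inj hk.ne', if_true, add_zero]
    have h3 : m + i * k = 7 * k ↔ m = i * k := by omega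
    have h4 : ¬ m = i * k := fun h => hd ⟨i, by rw [h, mul_comm]⟩
    simp [h3, h4, eq_comm]

/-- No six-term solution outside of the exceptional families. -/
lemma six (a b c d n m : ℕ) (hm : 0 < m) (hmn : m < n)
    (h0 : 0 < a) (hab : a < b) (hbc : b < c) (hcd : c < d) (hdn : d < n)
    (e1 e2 s0 s1 s2 s3 s4 s5 : ℤ) (he1 : e1 = 1 ∨ e1 = -1) (he2 : e2 = 1 ∨ e2 = -1)
    (h0' : s0 = 1 ∨ s0 = -1) (h1' : s1 = 1 ∨ s1 = -1) (h2' : s2 = 1 ∨ s2 = -1)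
    (h3' : s3 = 1 ∨ s3 = -1) (h4' : s4 = 1 ∨ s4 = -1) (h5' : s5 = 1 ∨ s5 = -1)
    (H : ∀ t, 0 < t → N6 a b c d n s0 s1 s2 s3 s4 s5 t = R n m e1 e2 t) :
    ∃ k : ℕ, 0 < k ∧
      ((n = 7 * k ∧ m = 2 * k ∧ e1 = -1 ∧ e2 = 1) ∨
       (n = 7 * k ∧ m = 5 * k ∧ e1 = -1 ∧ e2 = 1) ∨
       (n = 7 * k ∧ m = 2 * k ∧ e1 = 1 ∧ e2 = -1) ∨
       (n = 7 * k ∧ m = 5 * k ∧ e1 = -1 ∧ e2 = -1) ∨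
       (n = 7 * k ∧ m = 3 * k ∧ e1 = 1 ∧ e2 = 1) ∨
       (n = 7 * k ∧ m = 4 * k ∧ e1 = 1 ∧ e2 = 1) ∨
       (n = 7 * k ∧ m = 3 * k ∧ e1 = 1 ∧ e2 = -1) ∨
       (n = 7 * k ∧ m = 4 * k ∧ e1 = -1 ∧ e2 = -1)) := by
  obtain ⟨hn, hd, h⟩ := comb' a b c d n m h0 hab hbc hcd hdn e1 e2 s0 s1 s2 s3 s4 s5
    h0' h1' h2' h3' h4' h5' H
  subst hn hd
  have mem : ∀ {s : ℤ}, s = 1 ∨ s = -1 → s ∈ [(1:ℤ), -1] := by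
    rintro s (rfl | rfl) <;> decide
  refine ⟨a, h0, ?_⟩
  rcases h with ⟨rfl, rfl⟩ | ⟨rfl, rfl⟩
  · obtain ⟨j, hj, hjm, hs⟩ := scaled 1 4 5 6 a m h0 hm hmn e1 e2 s0 s1 s2 s3 s4 s5 he1 he2
      (by rw [one_mul]; exact H)
    have := signs1 e1 (mem he1) e2 (mem he2) s0 (mem h0') s1 (mem h1') s2 (mem h2') s3 (mem h3')
      s4 (mem h4') s5 (mem h5') j hj hs
    clear hs H hj
    have hj0 : j ≠ 0 := by rintro rfl; simp at this
    rw [hjm hj0]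
    clear hjm
    rcases this with h | h | h | h | h | h | h | h <;> rw [h.1, h.2.1, h.2.2] <;> simp
  · obtain ⟨j, hj, hjm, hs⟩ := scaled 1 2 3 6 a m h0 hm hmn e1 e2 s0 s1 s2 s3 s4 s5 he1 he2
      (by rw [one_mul]; exact H)
    have := signs2 e1 (mem he1) e2 (mem he2) s0 (mem h0') s1 (mem h1') s2 (mem h2') s3 (mem h3')
      s4 (mem h4') s5 (mem h5') j hj hs
    clear hs H hj
    have hj0 : j ≠ 0 := by rintro rfl; simp at this
    rw [hjm hj0]
    clear hjm
    rcases this with h | h | h | h | h | h | h | h <;> rw [h.1, h.2.1, h.2.2] <;> simp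

end FT

namespace FT
set_option linter.unusedSimpArgs false

lemma corr (p : ℤ[X]) (n t : ℕ) (hn : p.natDegree = n) (h0 : p.natTrailingDegree = 0) :
    (p * p.mirror).coeff (n + t) = ∑ i ∈ Finset.range (n + 1), p.coeff i * p.coeff (i + t) := by
  rw [mul_comm, coeff_mul, Finset.Nat.sum_antidiagonal_eq_sum_range_succ_mk]
  rw [← Finset.sum_subset (Finset.range_subset_range.2 (show n + 1 ≤ (n + t).succ by omega))]
  · rw [← Finset.sum_range_reflect]
    apply Finset.sum_congr rfl
    intro i hi
    have hi' : i ≤ n := by simpa [Nat.lt_succ_iff] using hi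
    simp only [coeff_mirror, hn, h0]
    rw [add_zero, revAt_le (by omega)]
    congr 2 <;> omega
  · intro i _ hi
    rw [coeff_eq_zero_of_natDegree_lt, zero_mul]
    rw [mirror_natDegree, hn]
    simpa using hi

lemma corr_six (p : ℤ[X]) (a b c d n t : ℕ) (ht : 0 < t)
    (h0 : 0 < a) (hab : a < b) (hbc : b < c) (hcd : c < d) (hdn : d < n) (s0 s1 s2 s3 s4 s5 : ℤ)
    (hp : ∀ i, p.coeff i = (if i = 0 then s0 else 0) + (if i = a then s1 else 0) + 
      (if i = b then s2 else 0) + (if i = c then s3 else 0) + (if i = d then s4 else 0) + 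
      (if i = n then s5 else 0)) :
    ∑ i ∈ Finset.range (n + 1), p.coeff i * p.coeff (i + t) = N6 a b c d n s0 s1 s2 s3 s4 s5 t := by
  have : ∀ i, p.coeff i * p.coeff (i + t) = (if i = 0 then s0 * p.coeff (0 + t) else 0) + 
      (if i = a then s1 * p.coeff (a + t) else 0) + 
      (if i = b then s2 * p.coeff (b + t) else 0) + (if i = c then s3 * p.coeff (c + t) else 0) + 
      (if i = d then s4 * p.coeff (d + t) else 0) + 
      (if i = n then s5 * p.coeff (n + t) else 0) := by
    intro i
    have key : ∀ (j : ℕ) (s : ℤ), (if i = j then s * p.coeff (j + t) else 0) = 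
        (if i = j then s else 0) * p.coeff (i + t) := by
      intro j s
      split_ifs with h
      · rw [h]
      · simp
    simp only [key, ← add_mul, ← hp i]
  simp only [this, Finset.sum_add_distrib, Finset.sum_ite_eq', Finset.mem_range]
  simp (disch := omega) only [if_pos]
  simp only [hp]
  simp (disch := omega) only [if_neg, N6]
  simp only [zero_add, add_zero, mul_add, mul_ite, mul_zero, eq_comm (a := t)]
  ring

lemma corr_three (p : ℤ[X]) (k n t : ℕ) (ht : 0 < t)
    (h0 : 0 < k) (hdn : k < n) (s0 s1 s5 : ℤ)
    (hp : ∀ i, p.coeff i = (if i = 0 then s0 else 0) + (if i = k then s1 else 0) + 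
      (if i = n then s5 else 0)) :
    ∑ i ∈ Finset.range (n + 1), p.coeff i * p.coeff (i + t) = 
    (if n = t then s0 * s5 else 0) + (if k = t then s0 * s1 else 0) +
    (if k + t = n then s1 * s5 else 0) := by
  have : ∀ i, p.coeff i * p.coeff (i + t) = (if i = 0 then s0 * p.coeff (0 + t) else 0) + 
      (if i = k then s1 * p.coeff (k + t) else 0) + 
      (if i = n then s5 * p.coeff (n + t) else 0) := by
    intro i
    have key : ∀ (j : ℕ) (s : ℤ), (if i = j then s * p.coeff (j + t) else 0) = 
        (if i = j then s else 0) * p.coeff (i + t) := by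
      intro j s
      split_ifs with h
      · rw [h]
      · simp
    simp only [key, ← add_mul, ← hp i]
  simp only [this, Finset.sum_add_distrib, Finset.sum_ite_eq', Finset.mem_range]
  simp (disch := omega) only [if_pos]
  simp only [hp]
  simp (disch := omega) only [if_neg]
  simp only [zero_add, add_zero, mul_add, mul_ite, mul_zero, eq_comm (a := t)]
  ring

/-- shape of a coefficient sequence with square sum 6 -/
lemma shape (p : ℤ[X]) (n : ℕ) (hn : p.natDegree = n) (hpos : 0 < n)
    (h0 : p.coeff 0 = 1 ∨ p.coeff 0 = -1) (h1 : p.coeff n = 1 ∨ p.coeff n = -1)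
    (hs : ∑ i ∈ Finset.range (n + 1), p.coeff i * p.coeff i = 6) :
    (∃ k s, 0 < k ∧ k < n ∧ (s = 1 ∨ s = -1) ∧ 
      ∀ i, p.coeff i = (if i = 0 then p.coeff 0 else 0) + (if i = k then 2 * s else 0) + 
      (if i = n then p.coeff n else 0)) ∨ 
    (∃ a b c d s1 s2 s3 s4, 0 < a ∧ a < b ∧ b < c ∧ c < d ∧ d < n ∧ (s1 = 1 ∨ s1 = -1) ∧ 
      (s2 = 1 ∨ s2 = -1) ∧ (s3 = 1 ∨ s3 = -1) ∧ (s4 = 1 ∨ s4 = -1) ∧ 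
      ∀ i, p.coeff i = (if i = 0 then p.coeff 0 else 0) + (if i = a then s1 else 0) + 
      (if i = b then s2 else 0) + (if i = c then s3 else 0) + (if i = d then s4 else 0) + 
      (if i = n then p.coeff n else 0)) := by
  have sq1 : ∀ s : ℤ, s = 1 ∨ s = -1 → s * s = 1 := by rintro s (rfl | rfl) <;> rfl
  have hbig : ∀ i, n < i → p.coeff i = 0 := fun i hi => 
    coeff_eq_zero_of_natDegree_lt (hn ▸ hi)
  have hI : ∑ i ∈ Finset.Ioo 0 n, p.coeff i * p.coeff i = 4 := by
    have e : Finset.range (n + 1) = insert 0 (insert n (Finset.Ioo 0 n)) := by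
      ext i; simp; omega
    rw [e, Finset.sum_insert (by simp; omega), Finset.sum_insert (by simp), sq1 _ h0, sq1 _ h1] at hs
    omega
  by_cases hk : ∃ k ∈ Finset.Ioo 0 n, 2 ≤ |p.coeff k|
  · left
    obtain ⟨k, hkm, hk2⟩ := hk
    have hkm' := Finset.mem_Ioo.1 hkm
    rw [← Finset.add_sum_erase _ _ hkm] at hI
    have hnn : 0 ≤ ∑ i ∈ (Finset.Ioo 0 n).erase k, p.coeff i * p.coeff i := 
      Finset.sum_nonneg fun i _ => mul_self_nonneg _
    have h4 : 4 ≤ p.coeff k * p.coeff k := by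
      rw [← abs_mul_abs_self]; nlinarith
    have hz : ∑ i ∈ (Finset.Ioo 0 n).erase k, p.coeff i * p.coeff i = 0 := by omega
    rw [Finset.sum_eq_zero_iff_of_nonneg (fun i _ => mul_self_nonneg _)] at hz
    have hk4 : (p.coeff k - 2) * (p.coeff k + 2) = 0 := by nlinarith
    obtain ⟨s, hs1, hs2⟩ : ∃ s : ℤ, (s = 1 ∨ s = -1) ∧ p.coeff k = 2 * s := by
      rcases mul_eq_zero.1 hk4 with h | h
      · exact ⟨1, by simp, by omega⟩
      · exact ⟨-1, by simp, by omega⟩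
    refine ⟨k, s, hkm'.1, hkm'.2, hs1, fun i => ?_⟩
    rcases Nat.eq_zero_or_pos i with rfl | hi
    · simp (disch := omega) only [if_pos, if_neg, if_true]; simp
    rcases lt_trichotomy i n with hi2 | rfl | hi2
    · by_cases hik : i = k
      · subst hik
        simp (disch := omega) only [if_pos, if_neg, if_true]; simp [hs2]
      · simp (disch := omega) only [if_pos, if_neg, if_true]
        simpa using hz i (by simp [hik]; omega)
    · simp (disch := omega) only [if_pos, if_neg, if_true]; simp
    · simp (disch := omega) only [if_pos, if_neg, if_true]; simp [hbig i hi2]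
  · right
    push Not at hk
    have hc : ∀ i ∈ Finset.Ioo 0 n, p.coeff i = 0 ∨ p.coeff i = 1 ∨ p.coeff i = -1 := by
      intro i hi
      have := abs_lt.1 (hk i hi)
      omega
    set T := (Finset.Ioo 0 n).filter (fun i => p.coeff i ≠ 0) with hT
    have hcard : T.card = 4 := by
      have : (T.card : ℤ) = 4 := by
        rw [← hI, hT, Finset.card_filter, Nat.cast_sum]
        apply Finset.sum_congr rfl
        intro i hi
        rcases hc i hi with h | h | h <;> simp [h]
      exact_mod_cast this
    let e := T.orderEmbOfFin hcard
    have hr : ∀ i, i ∈ T ↔ ∃ j, e j = i := by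
      intro i
      have := T.range_orderEmbOfFin hcard
      rw [← Finset.mem_coe, ← this]; rfl
    have hT' : ∀ i, i ∈ T → 0 < i ∧ i < n ∧ (p.coeff i = 1 ∨ p.coeff i = -1) := by
      intro i hi
      rw [hT, Finset.mem_filter] at hi
      have := Finset.mem_Ioo.1 hi.1
      have := hc i hi.1
      tauto
    have he : ∀ j, e j ∈ T := fun j => (hr _).2 ⟨j, rfl⟩
    have l1 : e 0 < e 1 := e.strictMono (by decide)
    have l2 : e 1 < e 2 := e.strictMono (by decide)
    have l3 : e 2 < e 3 := e.strictMono (by decide)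
    have m0 := hT' _ (he 0)
    have m1 := hT' _ (he 1)
    have m2 := hT' _ (he 2)
    have m3 := hT' _ (he 3)
    have hz : ∀ i, 0 < i → i < n → i ≠ e 0 → i ≠ e 1 → i ≠ e 2 → i ≠ e 3 → p.coeff i = 0 := by
      intro i hi hi2 n0 n1 n2 n3
      by_contra h
      have : i ∈ T := by rw [hT, Finset.mem_filter, Finset.mem_Ioo]; exact ⟨⟨hi, hi2⟩, h⟩
      obtain ⟨j, hj⟩ := (hr i).1 this
      fin_cases j
      · exact n0 hj.symm
      · exact n1 hj.symm
      · exact n2 hj.symm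
      · exact n3 hj.symm
    refine ⟨e 0, e 1, e 2, e 3, p.coeff (e 0), p.coeff (e 1), p.coeff (e 2), p.coeff (e 3),
      m0.1, l1, l2, l3, m3.2.1, m0.2.2, m1.2.2, m2.2.2, m3.2.2, ?_⟩
    clear_value e
    generalize e 0 = a at *
    generalize e 1 = b at *
    generalize e 2 = c at *
    generalize e 3 = d at *
    intro i
    have key : ∀ j, (if i = j then p.coeff j else 0) = (if i = j then p.coeff i else 0) := by
      intro j; split_ifs with h
      · rw [h]
      · rfl
    simp only [key]
    by_cases q : i = 0 ∨ i = a ∨ i = b ∨ i = c ∨ i = d ∨ i = n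
    · rcases q with q | q | q | q | q | q <;>
        simp (disch := omega) only [if_pos, if_neg, if_true, zero_add, add_zero]
    · simp (disch := omega) only [if_neg, add_zero]
      push Not at q
      obtain ⟨q0, q1, q2, q3, q4, q5⟩ := q
      rcases lt_or_ge n i with h | h
      · exact hbig i h
      · exact hz i (by omega) (by omega) q1 q2 q3 q4
end FT

namespace FT
set_option linter.unusedSimpArgs false
set_option linter.unusedTactic false
set_option linter.unreachableTactic false

/-- the trinomial -/
noncomputable def tri (n m : ℕ) (e1 e2 : ℤ) : ℤ[X] := X ^ n + C (2 * e1) * X ^ m + C e2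

lemma tri_coeff (n m : ℕ) (e1 e2 : ℤ) (i : ℕ) : (tri n m e1 e2).coeff i = 
    (if i = 0 then e2 else 0) + (if i = m then 2 * e1 else 0) + (if i = n then 1 else 0) := by
  simp only [tri, coeff_add, coeff_X_pow, coeff_C_mul, coeff_C, mul_ite, mul_one, mul_zero]
  ring

lemma tri_natDegree (n m : ℕ) (hm : 0 < m) (hmn : m < n) (e1 e2 : ℤ) :
    (tri n m e1 e2).natDegree = n := by
  apply natDegree_eq_of_le_of_coeff_ne_zero
  · rw [natDegree_le_iff_coeff_eq_zero]
    intro i hi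
    rw [tri_coeff]
    simp (disch := omega) only [if_neg, add_zero]
  · rw [tri_coeff]
    simp (disch := omega) only [if_neg, if_pos, add_zero]; simp

lemma tri_monic (n m : ℕ) (hm : 0 < m) (hmn : m < n) (e1 e2 : ℤ) :
    (tri n m e1 e2).Monic := by
  rw [Monic, leadingCoeff, tri_natDegree n m hm hmn, tri_coeff]
  simp (disch := omega) only [if_neg, if_pos, add_zero]; simp

lemma tri_trailing (n m : ℕ) (hm : 0 < m) (hmn : m < n) (e1 e2 : ℤ) (he2 : e2 = 1 ∨ e2 = -1) :
    (tri n m e1 e2).natTrailingDegree = 0 := by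
  apply natTrailingDegree_eq_zero.2
  right
  rw [tri_coeff]
  simp (disch := omega) only [if_neg, if_pos, add_zero]
  rcases he2 with rfl | rfl <;> simp

lemma tri_mirror (n m : ℕ) (hm : 0 < m) (hmn : m < n) (e1 e2 : ℤ) (he2 : e2 = 1 ∨ e2 = -1) :
    (tri n m e1 e2).mirror = C e2 * X ^ n + C (2 * e1) * X ^ (n - m) + 1 := by
  ext i
  rw [coeff_mirror, tri_natDegree n m hm hmn, tri_trailing n m hm hmn _ _ he2, tri_coeff, add_zero]
  simp only [coeff_add, coeff_X_pow, coeff_C_mul, coeff_one, mul_ite, mul_one, mul_zero]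
  rcases le_or_gt i n with h | h
  · rw [revAt_le h]
    have h1 : n - i = 0 ↔ i = n := by omega
    have h2 : n - i = m ↔ i = n - m := by omega
    have h3 : n - i = n ↔ i = 0 := by omega
    simp only [h1, h2, h3]
  · rw [revAt_eq_self_of_lt h]
    simp (disch := omega) only [if_neg, add_zero]

lemma tri_sq (n m : ℕ) (hm : 0 < m) (hmn : m < n) (e1 e2 : ℤ) (he1 : e1 = 1 ∨ e1 = -1)
    (he2 : e2 = 1 ∨ e2 = -1) :
    ∑ i ∈ Finset.range (n + 1), (tri n m e1 e2).coeff i * (tri n m e1 e2).coeff i = 6 := by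
  have : ∀ i, (tri n m e1 e2).coeff i * (tri n m e1 e2).coeff i = (if i = 0 then 1 else 0) + 
      (if i = m then 4 else 0) + (if i = n then 1 else 0) := by
    intro i
    rw [tri_coeff]
    by_cases h0 : i = 0
    · simp (disch := omega) only [if_neg, if_pos, add_zero]
      rcases he2 with rfl | rfl <;> simp
    by_cases h1 : i = m
    · simp (disch := omega) only [if_neg, if_pos, add_zero]
      rcases he1 with rfl | rfl <;> simp
    by_cases h2 : i = n
    · simp (disch := omega) only [if_neg, if_pos, add_zero]
      simp
    · simp (disch := omega) only [if_neg, if_pos, add_zero]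
      simp
  simp only [this, Finset.sum_add_distrib, Finset.sum_ite_eq', Finset.mem_range]
  simp (disch := omega) only [if_pos]
  simp

lemma tri_corr (n m : ℕ) (hm : 0 < m) (hmn : m < n) (e1 e2 : ℤ) (t : ℕ) (ht : 0 < t) :
    ∑ i ∈ Finset.range (n + 1), (tri n m e1 e2).coeff i * (tri n m e1 e2).coeff (i + t) = 
    R n m e1 e2 t := by
  rw [corr_three _ m n t ht hm hmn e2 (2 * e1) 1 (tri_coeff n m e1 e2), R]
  simp only [mul_one, mul_comm e2 (2 * e1)]

lemma core (n m : ℕ) (hm : 0 < m) (hmn : m < n) (e1 e2 : ℤ) (he1 : e1 = 1 ∨ e1 = -1)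
    (he2 : e2 = 1 ∨ e2 = -1)
    (hn2 : ¬ (n = 2 * m ∧ e2 = 1))
    (hexc : ¬ ∃ k : ℕ, 0 < k ∧
      ((n = 7 * k ∧ m = 2 * k ∧ e1 = -1 ∧ e2 = 1) ∨
       (n = 7 * k ∧ m = 5 * k ∧ e1 = -1 ∧ e2 = 1) ∨
       (n = 7 * k ∧ m = 2 * k ∧ e1 = 1 ∧ e2 = -1) ∨
       (n = 7 * k ∧ m = 5 * k ∧ e1 = -1 ∧ e2 = -1) ∨
       (n = 7 * k ∧ m = 3 * k ∧ e1 = 1 ∧ e2 = 1) ∨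
       (n = 7 * k ∧ m = 4 * k ∧ e1 = 1 ∧ e2 = 1) ∨
       (n = 7 * k ∧ m = 3 * k ∧ e1 = 1 ∧ e2 = -1) ∨
       (n = 7 * k ∧ m = 4 * k ∧ e1 = -1 ∧ e2 = -1)))
    (F : ℤ[X]) (hF : F * F.mirror = tri n m e1 e2 * (tri n m e1 e2).mirror) :
    F = tri n m e1 e2 ∨ F = - tri n m e1 e2 ∨ F = (tri n m e1 e2).mirror ∨
      F = - (tri n m e1 e2).mirror := by
  have hd := tri_natDegree n m hm hmn e1 e2
  have htr := tri_trailing n m hm hmn e1 e2 he2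
  have hFd : F.natDegree = n := by
    have := congrArg natDegree hF
    rw [natDegree_mul_mirror, natDegree_mul_mirror, hd] at this
    omega
  have hFt : F.natTrailingDegree = 0 := by
    have := congrArg natTrailingDegree hF
    rw [natTrailingDegree_mul_mirror, natTrailingDegree_mul_mirror, htr] at this
    omega
  have hc : ∀ t, ∑ i ∈ Finset.range (n + 1), F.coeff i * F.coeff (i + t) = 
      ∑ i ∈ Finset.range (n + 1), (tri n m e1 e2).coeff i * (tri n m e1 e2).coeff (i + t) := by
    intro t
    rw [← corr _ _ _ hFd hFt, hF, corr _ _ _ hd htr]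
  have hsq : ∑ i ∈ Finset.range (n + 1), F.coeff i * F.coeff i = 6 := by
    have := hc 0
    simp only [add_zero] at this
    rw [this, tri_sq n m hm hmn e1 e2 he1 he2]
  have hR : ∀ t, 0 < t → ∑ i ∈ Finset.range (n + 1), F.coeff i * F.coeff (i + t) = 
      R n m e1 e2 t := fun t ht => by rw [hc, tri_corr n m hm hmn e1 e2 t ht]
  have h0n : F.coeff 0 * F.coeff n = e2 := by
    have := hR n (by omega)
    rw [Finset.sum_eq_single 0, R] at this
    · simp (disch := omega) only [if_neg, if_true, add_zero, zero_add] at this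
      exact this
    · intro i _ hi
      rw [coeff_eq_zero_of_natDegree_lt (p := F) (n := i + n) (by omega), mul_zero]
    · simp
  have hu : IsUnit (F.coeff 0 * F.coeff n) := by
    rw [h0n]; exact Int.isUnit_iff.2 he2
  have h0 := Int.isUnit_iff.1 (isUnit_of_mul_isUnit_left hu)
  have hn := Int.isUnit_iff.1 (isUnit_of_mul_isUnit_right hu)
  rcases shape F n hFd (by omega) h0 hn hsq with ⟨k, s, hk0, hkn, hs, hF'⟩ | 
    ⟨a, b, c, d, s1, s2, s3, s4, l0, l1, l2, l3, l4, hs1, hs2, hs3, hs4, hF'⟩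
  · generalize F.coeff 0 = s0 at *
    generalize F.coeff n = s5 at *
    have hR' : ∀ t, 0 < t → (if n = t then s0 * s5 else 0) + (if k = t then s0 * (2 * s) else 0) +
        (if k + t = n then 2 * s * s5 else 0) = R n m e1 e2 t := by
      intro t ht
      rw [← hR t ht, corr_three F k n t ht hk0 hkn s0 (2 * s) s5 hF']
    have hFe : F = C s5 * X ^ n + C (2 * s) * X ^ k + C s0 := by
      ext i
      rw [hF']
      simp only [coeff_add, coeff_X_pow, coeff_C_mul, coeff_C, mul_ite, mul_one, mul_zero]
      ring
    have hkm : k = m ∨ k + m = n := by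
      by_contra hne
      push Not at hne
      have hm' := hR' m hm
      have hk' := hR' k hk0
      simp only [R] at hm' hk'
      simp (disch := omega) only [if_neg, if_true, add_zero, zero_add] at hm' hk'
      by_cases h2 : k + k = n
      · rw [if_pos h2] at hk'
        rw [if_neg (by omega)] at hm'
        rcases he1 with rfl | rfl <;> rcases he2 with rfl | rfl <;> simp at hm'
      · rw [if_neg h2] at hk'
        rcases h0 with rfl | rfl <;> rcases hs with rfl | rfl <;> simp at hk'
    rw [tri_mirror n m hm hmn e1 e2 he2, tri, hFe]
    have hm' := hR' m hm
    simp only [R] at hm'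
    have sq1 : ∀ s : ℤ, s = 1 ∨ s = -1 → s * s = 1 := by rintro s (rfl | rfl) <;> rfl
    have q0 := sq1 s0 h0
    have q5 := sq1 s5 hn
    have hs0 : s0 = e2 * s5 := by rw [← h0n, mul_assoc, q5, mul_one]
    have hs5 : s5 = e2 * s0 := by rw [← h0n, mul_right_comm, q0, one_mul]
    by_cases h2 : n = 2 * m
    · have he : e2 = -1 := by tauto
      have hk : k = m := by omega
      have hs05 : s0 = - s5 := by rw [hs0, he]; ring
      have hnm : n - m = m := by omega
      rw [hnm, hk, he, hs05]
      clear * - he1 hn hs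
      have hsg : s = e1 ∨ s = - e1 := by
        rcases he1 with rfl | rfl <;> rcases hs with rfl | rfl <;> simp
      simp only [C_neg, C_mul, map_ofNat]
      rcases hsg with rfl | rfl <;> rcases hn with rfl | rfl
      · left; simp
      · right; right; left; simp
      · right; right; right; simp; ring
      · right; left; simp; ring
    · rcases hkm with rfl | rfl
      · simp (disch := omega) only [if_neg, if_true, add_zero, zero_add] at hm'
        have hs' : s = e1 * s5 := by
          have h1 : s0 * s = e1 * e2 := by linarith
          calc s = (s0 * s0) * s := by rw [q0, one_mul]
            _ = s0 * (s0 * s) := by ring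
            _ = (s0 * s0) * (e1 * s5) := by rw [h1, ← h0n]; ring
            _ = _ := by rw [q0, one_mul]
        rw [hs', hs0]
        clear * - hn
        rcases hn with rfl | rfl
        · left; simp
        · right; left; simp; ring
      · simp (disch := omega) only [if_neg, if_pos, if_true, add_zero, zero_add] at hm'
        have hs' : s = e1 * s0 := by
          have h1 : s * s5 = e1 * e2 := by linarith
          calc s = (s5 * s5) * s := by rw [q5, one_mul]
            _ = s5 * (s * s5) := by ring
            _ = (s5 * s5) * (e1 * s0) := by rw [h1, ← h0n]; ring
            _ = _ := by rw [q5, one_mul]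
        rw [hs', hs5, Nat.add_sub_cancel]
        clear * - h0
        rcases h0 with rfl | rfl
        · right; right; left; simp
        · right; right; right; simp; ring
  · exfalso
    apply hexc
    refine six a b c d n m hm hmn l0 l1 l2 l3 l4 e1 e2 _ s1 s2 s3 s4 _ he1 he2 h0 hs1 hs2 hs3 hs4 hn
      fun t ht => ?_
    rw [← hR t ht, corr_six F a b c d n t ht l0 l1 l2 l3 l4 _ s1 s2 s3 s4 _ hF']
end FT

namespace FT

/-- being a cyclotomic polynomial -/
def IsCyc (p : ℤ[X]) : Prop := ∃ i, 0 < i ∧ p = cyclotomic i ℤ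

lemma cyc_of_dvd (p : ℤ[X]) (hp : p.Monic) (hirr : Irreducible p) (N : ℕ) (hN : 0 < N)
    (h : p ∣ X ^ N - 1) : IsCyc p := by
  rw [← prod_cyclotomic_eq_X_pow_sub_one hN, hirr.prime.dvd_finsetProd_iff] at h
  obtain ⟨i, hi, h⟩ := h
  have hi0 : 0 < i := Nat.pos_of_mem_divisors hi
  exact ⟨i, hi0, eq_of_monic_of_associated hp (cyclotomic.monic i ℤ)
    (hirr.associated_of_dvd (cyclotomic.irreducible hi0) h)⟩

lemma exists_monic_factor (f : ℤ[X]) (hf : f.Monic) (h1 : f ≠ 1) :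
    ∃ p q : ℤ[X], p.Monic ∧ q.Monic ∧ Irreducible p ∧ f = p * q := by
  obtain ⟨p, hp, q, hq⟩ := WfDvdMonoid.exists_irreducible_factor
    (fun h => h1 (hf.eq_one_of_isUnit h)) hf.ne_zero
  have hl : p.leadingCoeff * q.leadingCoeff = 1 := by
    rw [← leadingCoeff_mul, ← hq]; exact hf
  rcases Int.mul_eq_one_iff_eq_one_or_neg_one.1 hl with ⟨ha, hb⟩ | ⟨ha, hb⟩
  · exact ⟨p, q, ha, hb, hp, hq⟩
  · refine ⟨-p, -q, ?_, ?_, (Associated.neg_right (Associated.refl p)).irreducible hp, by rw [hq]; ring⟩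
    · rw [Monic, leadingCoeff_neg, ha]; rfl
    · rw [Monic, leadingCoeff_neg, hb]; rfl

lemma decomp (d : ℕ) : ∀ f : ℤ[X], f.Monic → f.natDegree ≤ d →
    ∃ (S : Multiset ℕ) (T : Multiset ℤ[X]), (∀ i ∈ S, 0 < i) ∧
      (∀ p ∈ T, p.Monic ∧ Irreducible p ∧ ¬ IsCyc p) ∧
      f = (S.map (fun i => cyclotomic i ℤ)).prod * T.prod := by
  induction d with
  | zero =>
    intro f hf hd
    refine ⟨0, 0, by simp, by simp, ?_⟩
    simpa using hf.natDegree_eq_zero.1 (by omega)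
  | succ d ih =>
    intro f hf hd
    by_cases h1 : f = 1
    · exact ⟨0, 0, by simp, by simp, by simpa using h1⟩
    obtain ⟨p, q, hp, hq, hirr, rfl⟩ := exists_monic_factor f hf h1
    have hpd : 0 < p.natDegree := by
      rw [Nat.pos_iff_ne_zero]
      intro h
      exact hirr.not_isUnit (by rw [hp.natDegree_eq_zero.1 h]; exact isUnit_one)
    rw [hp.natDegree_mul hq] at hd
    obtain ⟨S, T, hS, hT, e⟩ := ih q hq (by omega)
    by_cases hc : IsCyc p
    · obtain ⟨i, hi, rfl⟩ := hc
      refine ⟨i ::ₘ S, T, ?_, hT, ?_⟩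
      · intro j hj
        rcases Multiset.mem_cons.1 hj with rfl | hj
        · exact hi
        · exact hS j hj
      · rw [Multiset.map_cons, Multiset.prod_cons, mul_assoc, ← e]
    · refine ⟨S, p ::ₘ T, hS, ?_, ?_⟩
      · intro j hj
        rcases Multiset.mem_cons.1 hj with rfl | hj
        · exact ⟨hp, hirr, hc⟩
        · exact hT j hj
      · rw [Multiset.prod_cons, e]; ring

lemma finish (f : ℤ[X]) (hf : f.Monic)
    (H : ∀ p q w : ℤ[X], p.Monic → q.Monic → Irreducible p → Irreducible q → f = p * q * w →
      IsCyc p ∨ IsCyc q) :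
    ∃ (S : Multiset ℕ) (g : ℤ[X]), (∀ i ∈ S, 0 < i) ∧
      f = (S.map (fun i => cyclotomic i ℤ)).prod * g ∧ (g = 1 ∨ Irreducible g) := by
  obtain ⟨S, T, hS, hT, e⟩ := decomp _ f hf le_rfl
  refine ⟨S, T.prod, hS, e, ?_⟩
  induction T using Multiset.induction with
  | empty => left; simp
  | cons p T _ =>
    induction T using Multiset.induction with
    | empty => right; simpa using (hT p (by simp)).2.1
    | cons q T _ =>
      exfalso
      have hp := hT p (by simp)
      have hq := hT q (by simp)
      rcases H p q _ hp.1 hq.1 hp.2.1 hq.2.1 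
        (e.trans (by rw [Multiset.prod_cons, Multiset.prod_cons, ← mul_assoc p q]; 
                     exact mul_left_comm _ _ _)) with h | h
      · exact hp.2.2 h
      · exact hq.2.2 h

lemma common (n m : ℕ) (hm : 0 < m) (hmn : m < n) (e1 e2 : ℤ) (he1 : e1 = 1 ∨ e1 = -1)
    (he2 : e2 = 1 ∨ e2 = -1) (hn2 : ¬ (n = 2 * m ∧ e2 = 1)) (p : ℤ[X]) (hp : p.Monic)
    (hirr : Irreducible p) (h1 : p ∣ tri n m e1 e2) (h2 : p ∣ (tri n m e1 e2).mirror) :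
    IsCyc p := by
  have hpr := hirr.prime
  have hC : ∀ z : ℤ, z ≠ 0 → ¬ p ∣ C z := by
    intro z hz h
    have := natDegree_le_of_dvd h (by simpa using hz)
    rw [natDegree_C, Nat.le_zero] at this
    exact hirr.not_isUnit (by rw [hp.natDegree_eq_zero.1 this]; exact isUnit_one)
  have he2' : e2 ≠ 0 := by rcases he2 with rfl | rfl <;> simp
  have he1' : 2 * e1 ≠ 0 := by rcases he1 with rfl | rfl <;> simp
  have hsq : e2 * e2 = 1 := by rcases he2 with rfl | rfl <;> rfl
  have hsqC : (C e2 * C e2 : ℤ[X]) = 1 := by rw [← C_mul, hsq]; simp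
  have hX : ∀ i, ¬ p ∣ X ^ i := by
    intro i h
    have hx := hpr.dvd_of_dvd_pow h
    apply hC e2 he2'
    have : C e2 = tri n m e1 e2 - X ^ n - C (2 * e1) * X ^ m := by rw [tri]; ring
    rw [this]
    exact dvd_sub (dvd_sub h1 (dvd_pow hx (by omega))) (Dvd.dvd.mul_left (dvd_pow hx (by omega)) _)
  rw [tri_mirror n m hm hmn e1 e2 he2] at h2
  have h3 : p ∣ C (2 * e1) * (X ^ m - C e2 * X ^ (n - m)) := by
    have : C (2 * e1) * (X ^ m - C e2 * X ^ (n - m)) = 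
      tri n m e1 e2 - C e2 * (C e2 * X ^ n + C (2 * e1) * X ^ (n - m) + 1) := by
      rw [tri]; linear_combination (X ^ n : ℤ[X]) * hsqC
    rw [this]
    exact dvd_sub h1 (Dvd.dvd.mul_left h2 _)
  have h4 := (hpr.dvd_or_dvd h3).resolve_left (hC _ he1')
  have key : ∀ r, 0 < r → p ∣ X ^ r - C e2 → IsCyc p := by
    intro r hr h
    refine cyc_of_dvd p hp hirr (r * 2) (by omega) ?_
    have : (X ^ (r * 2) - 1 : ℤ[X]) = (X ^ r - C e2) * (X ^ r + C e2) := by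
      rw [pow_mul]; linear_combination hsqC
    rw [this]
    exact Dvd.dvd.mul_right h _
  rcases lt_trichotomy (n - m) m with h | h | h
  · obtain ⟨r, hr⟩ : ∃ r, m = (n - m) + r := ⟨m - (n - m), by omega⟩
    have : (X ^ m - C e2 * X ^ (n - m) : ℤ[X]) = X ^ (n - m) * (X ^ r - C e2) := by
      conv_lhs => rw [hr, pow_add, ← hr]
      ring
    rw [this] at h4
    exact key r (by omega) ((hpr.dvd_or_dvd h4).resolve_left (hX _))
  · exfalso
    have he : e2 = -1 := by
      rcases he2 with h | h
      · exact absurd ⟨by omega, h⟩ hn2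
      · exact h
    rw [h, he] at h4
    have : (X ^ m - C (-1) * X ^ m : ℤ[X]) = C 2 * X ^ m := by
      simp only [C_neg, C_1, map_ofNat]; ring
    rw [this] at h4
    rcases hpr.dvd_or_dvd h4 with h | h
    · exact hC 2 (by simp) h
    · exact hX _ h
  · obtain ⟨r, hr⟩ : ∃ r, n - m = m + r := ⟨n - m - m, by omega⟩
    have : (X ^ m - C e2 * X ^ (n - m) : ℤ[X]) = X ^ m * (- C e2) * (X ^ r - C e2) := by
      rw [hr, pow_add]; linear_combination (- X ^ m) * hsqC
    rw [this] at h4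
    refine key r (by omega) ((hpr.dvd_or_dvd h4).resolve_left fun h => ?_)
    rcases hpr.dvd_or_dvd h with h | h
    · exact hX _ h
    · exact hC _ he2' ((dvd_neg).1 h)

lemma square (m : ℕ) (hm : 0 < m) (e1 : ℤ) (he1 : e1 = 1 ∨ e1 = -1) (p : ℤ[X]) (hp : p.Monic)
    (hirr : Irreducible p) (h1 : p ∣ tri (2 * m) m e1 1) : IsCyc p := by
  have hsq : e1 * e1 = 1 := by rcases he1 with rfl | rfl <;> rfl
  have hsqC : (C e1 * C e1 : ℤ[X]) = 1 := by rw [← C_mul, hsq]; simp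
  have e : tri (2 * m) m e1 1 = (X ^ m + C e1) ^ 2 := by
    rw [tri, mul_comm 2 m, pow_mul, C_mul, map_ofNat, C_1]; linear_combination - hsqC
  rw [e] at h1
  refine cyc_of_dvd p hp hirr (m * 2) (by omega) ?_
  have : (X ^ (m * 2) - 1 : ℤ[X]) = (X ^ m + C e1) * (X ^ m - C e1) := by
    rw [pow_mul]; linear_combination hsqC
  rw [this]
  exact Dvd.dvd.mul_right (hirr.prime.dvd_of_dvd_pow h1) _
end FT

/-- Filaseta et al.: outside eight exceptional families, the non-cyclotomic part of
`X^n + 2ε₁X^m + ε₂` is trivial or irreducible. -/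
theorem filaseta_trinomial (n m : ℕ) (hm : 0 < m) (hmn : m < n)
    (ε₁ ε₂ : ℤ) (hε₁ : ε₁ = 1 ∨ ε₁ = -1) (hε₂ : ε₂ = 1 ∨ ε₂ = -1)
    (hexc : ¬ ∃ k : ℕ, 0 < k ∧
      ((n = 7 * k ∧ m = 2 * k ∧ ε₁ = -1 ∧ ε₂ = 1) ∨
       (n = 7 * k ∧ m = 5 * k ∧ ε₁ = -1 ∧ ε₂ = 1) ∨
       (n = 7 * k ∧ m = 2 * k ∧ ε₁ = 1 ∧ ε₂ = -1) ∨
       (n = 7 * k ∧ m = 5 * k ∧ ε₁ = -1 ∧ ε₂ = -1) ∨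
       (n = 7 * k ∧ m = 3 * k ∧ ε₁ = 1 ∧ ε₂ = 1) ∨
       (n = 7 * k ∧ m = 4 * k ∧ ε₁ = 1 ∧ ε₂ = 1) ∨
       (n = 7 * k ∧ m = 3 * k ∧ ε₁ = 1 ∧ ε₂ = -1) ∨
       (n = 7 * k ∧ m = 4 * k ∧ ε₁ = -1 ∧ ε₂ = -1))) :
    ∃ (S : Multiset ℕ) (g : Polynomial ℤ),
      (∀ i ∈ S, 0 < i) ∧
      (X : Polynomial ℤ) ^ n + C (2 * ε₁) * X ^ m + C ε₂ =
        (S.map (fun i => cyclotomic i ℤ)).prod * g ∧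
      (g = 1 ∨ Irreducible g) := by
  refine FT.finish (FT.tri n m ε₁ ε₂) (FT.tri_monic n m hm hmn ε₁ ε₂) ?_
  intro p q w hp hq hpi hqi e
  by_cases hn2 : n = 2 * m ∧ ε₂ = 1
  · obtain ⟨rfl, rfl⟩ := hn2
    left
    exact FT.square m hm ε₁ hε₁ p hp hpi (by rw [e, mul_assoc]; exact dvd_mul_right _ _)
  have h0 : FT.tri n m ε₁ ε₂ ≠ 0 := (FT.tri_monic n m hm hmn ε₁ ε₂).ne_zero
  have hqw : q * w ≠ 0 := by
    intro h; apply h0; rw [e, mul_assoc, h, mul_zero]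
  have hpm : p.mirror ≠ 0 := fun h => hp.ne_zero (mirror_eq_zero.1 h)
  have em : (FT.tri n m ε₁ ε₂).mirror = p.mirror * (q * w).mirror := by
    rw [e, mul_assoc, mirror_mul_of_domain]
  have hpd : p ∣ FT.tri n m ε₁ ε₂ := by rw [e, mul_assoc]; exact dvd_mul_right _ _
  have hqd : q ∣ FT.tri n m ε₁ ε₂ := by rw [e, mul_comm p, mul_assoc]; exact dvd_mul_right _ _
  have cp := FT.common n m hm hmn ε₁ ε₂ hε₁ hε₂ hn2 p hp hpi hpd
  have cq := FT.common n m hm hmn ε₁ ε₂ hε₁ hε₂ hn2 q hq hqi hqd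
  have hF : (p.mirror * (q * w)) * (p.mirror * (q * w)).mirror = 
      FT.tri n m ε₁ ε₂ * (FT.tri n m ε₁ ε₂).mirror := by
    rw [em, e, mirror_mul_of_domain, mirror_mirror]; ring
  rcases FT.core n m hm hmn ε₁ ε₂ hε₁ hε₂ hn2 hexc _ hF with h | h | h | h
  · left
    rw [e, mul_assoc] at h
    apply cp
    rw [em, mul_right_cancel₀ hqw h]
    exact dvd_mul_right _ _
  · left
    rw [e, mul_assoc, ← neg_mul] at h
    apply cp
    rw [em, mul_right_cancel₀ hqw h, neg_mul]
    exact (dvd_neg).2 (dvd_mul_right _ _)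
  · right
    rw [em] at h
    apply cq
    rw [em, ← mul_left_cancel₀ hpm h]
    exact Dvd.dvd.mul_left (dvd_mul_right _ _) _
  · right
    rw [em, ← mul_neg] at h
    apply cq
    rw [em, ← dvd_neg, ← mul_neg, ← mul_left_cancel₀ hpm h]
    exact Dvd.dvd.mul_left (dvd_mul_right _ _) _
end

section
/- Let b, c, n, m be positive integers with n > m, let ε₁, ε₂ ∈ {−1, +1}, and set f(X) = X^n + b·ε₁·X^m + c·ε₂ ∈ ℤ[X]. Assume (a) b > 1 + c^{n−1}, and (b) for every divisor d of n with d > 1, c is not a d-th power of a natural number. Then f is irreducible in ℤ[X]. -/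
open Polynomial

/-- Resultant identity for a monic factor of `X ^ n + e`. -/
theorem nagell_aux_resultant {R : Type*} [CommRing R] (G H : R[X]) (e : R) (k n : ℕ)
    (hG : G.coeff k = 1) (hGd : G.natDegree ≤ k) (hH : H.natDegree + k ≤ n)
    (h : G * H = X ^ n + C e) :
    (-1) ^ (k * n) * G.coeff 0 ^ n = (-e) ^ k := by
  have h1 := resultant_add_mul_right (f := G) (g := C (-e)) (m := k) (n := n) (p := H) hH hGd
  have h2 : C (-e) + G * H = X ^ n := by rw [h, C_neg]; ring
  rw [h2, resultant_X_pow_right _ _ _ hGd, resultant_C_right, hG] at h1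
  simpa using h1

/-- A monic factor of the trinomial has constant term whose `n`-th power is `± c ^ k` mod `b`. -/
theorem nagell_aux_dvd (b c n m : ℕ) (ε₁ ε₂ : ℤ) (g h : ℤ[X]) (hg : g.Monic) (hh : h.Monic)
    (hn : g.natDegree + h.natDegree = n)
    (hgh : g * h = (X : Polynomial ℤ) ^ n + C ((b : ℤ) * ε₁) * X ^ m + C ((c : ℤ) * ε₂)) :
    (b : ℤ) ∣ (-1) ^ (g.natDegree * n) * g.coeff 0 ^ n - (-((c : ℤ) * ε₂)) ^ g.natDegree := by
  have key := nagell_aux_resultant (R := ZMod b) (g.map (Int.castRingHom _))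
    (h.map (Int.castRingHom _)) (((c : ℤ) * ε₂ : ℤ) : ZMod b) g.natDegree n
    (by simp [hg.coeff_natDegree]) natDegree_map_le
    (by have := natDegree_map_le (p := h) (f := Int.castRingHom (ZMod b)); omega)
    (by rw [← Polynomial.map_mul, hgh]; simp)
  rw [← ZMod.intCast_zmod_eq_zero_iff_dvd]
  rw [coeff_map] at key
  push_cast at key ⊢
  rw [sub_eq_zero]
  simpa using key

/-- The trinomial has no integer root. -/
theorem nagell_aux_root (b c n m : ℕ) (hc : 0 < c) (hm : 0 < m)
    (hmn : m < n) (ε₁ ε₂ : ℤ) (hε₁ : ε₁ = 1 ∨ ε₁ = -1) (hε₂ : ε₂ = 1 ∨ ε₂ = -1)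
    (hbig : b > 1 + c ^ (n - 1)) (r : ℤ)
    (hr : r ^ n + (b : ℤ) * ε₁ * r ^ m + (c : ℤ) * ε₂ = 0) : False := by
  have hdvd : r ∣ (c : ℤ) * ε₂ := by
    have h1 : r ∣ r ^ n := dvd_pow_self r (by omega)
    have h2 : r ∣ (b : ℤ) * ε₁ * r ^ m := (dvd_pow_self r (by omega)).mul_left _
    have h3 : (c : ℤ) * ε₂ = -(r ^ n + (b : ℤ) * ε₁ * r ^ m) := by linarith
    rw [h3]; exact (h1.add h2).neg_right
  have e1 : ε₁.natAbs = 1 := by rcases hε₁ with h | h <;> simp [h]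
  have e2 : ε₂.natAbs = 1 := by rcases hε₂ with h | h <;> simp [h]
  have hx : r.natAbs ∣ c := by
    have := Int.natAbs_dvd_natAbs.2 hdvd
    simpa [Int.natAbs_mul, e2] using this
  obtain ⟨a, ha⟩ := hx
  have hle : b * r.natAbs ^ m ≤ r.natAbs ^ n + c := by
    have h3 : (b : ℤ) * ε₁ * r ^ m = -(r ^ n + (c : ℤ) * ε₂) := by linarith
    have h4 := congrArg Int.natAbs h3
    rw [Int.natAbs_neg] at h4
    have h5 := Int.natAbs_add_le (r ^ n) ((c : ℤ) * ε₂)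
    rw [← h4] at h5
    simpa [Int.natAbs_mul, Int.natAbs_pow, e1, e2] using h5
  set x := r.natAbs with hxdef
  have hx0 : 0 < x := Nat.pos_of_ne_zero (by rintro h; simp [h] at ha; omega)
  have ha0 : 0 < a := Nat.pos_of_ne_zero (by rintro h; simp [h] at ha; omega)
  obtain ⟨j, rfl⟩ : ∃ j, m = j + 1 := ⟨m - 1, by omega⟩
  obtain ⟨i, rfl⟩ : ∃ i, n = (i + 1) + (j + 1) := ⟨n - (j + 2), by omega⟩
  have hle2 : b ≤ x ^ (i + 1) + a := by
    have h0 : 0 < x ^ (j + 1) := by positivity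
    refine Nat.le_of_mul_le_mul_right (hle.trans ?_) h0
    rw [pow_add x (i + 1), add_mul, ha]
    have : x * a ≤ a * x ^ (j + 1) := by
      rw [mul_comm]; exact Nat.mul_le_mul_left _ (Nat.le_self_pow (by omega) x)
    omega
  have e : i + 1 + (j + 1) - 1 = i + 1 + j := by omega
  rw [e, ha, mul_pow] at hbig
  have hP : x ^ (i + 1) ≤ x ^ (i + 1 + j) := Nat.pow_le_pow_right hx0 (by omega)
  have hQ : a ≤ a ^ (i + 1 + j) := Nat.le_self_pow (by omega) a
  have hP1 : 1 ≤ x ^ (i + 1 + j) := Nat.one_le_pow _ _ hx0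
  have hQ1 : 1 ≤ a ^ (i + 1 + j) := Nat.one_le_pow _ _ ha0
  nlinarith [mul_le_mul hP1 hQ1]

/-- The main case: a proper factor with small constant term. -/
theorem nagell_aux_main (b c n m : ℕ) (hc : 0 < c) (hm : 0 < m)
    (hmn : m < n) (ε₁ ε₂ : ℤ) (hε₂ : ε₂ = 1 ∨ ε₂ = -1)
    (hbig : b > 1 + c ^ (n - 1))
    (hpow : ∀ d : ℕ, d ∣ n → 1 < d → ¬ ∃ u : ℕ, c = u ^ d)
    (g h : ℤ[X]) (hg : g.Monic) (hh : h.Monic)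
    (hn : g.natDegree + h.natDegree = n) (hg2 : 2 ≤ g.natDegree) (hh2 : 2 ≤ h.natDegree)
    (hgh : g * h = (X : Polynomial ℤ) ^ n + C ((b : ℤ) * ε₁) * X ^ m + C ((c : ℤ) * ε₂))
    (hsmall : (g.coeff 0).natAbs ≤ (h.coeff 0).natAbs) : False := by
  have e2 : ε₂.natAbs = 1 := by rcases hε₂ with h | h <;> simp [h]
  have hprod : (g.coeff 0).natAbs * (h.coeff 0).natAbs = c := by
    have := congrArg (fun p => (coeff p 0).natAbs) hgh
    simpa [mul_coeff_zero, Int.natAbs_mul, e2, coeff_X_pow, hm.ne, (hm.trans hmn).ne] using this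
  have hd := nagell_aux_dvd b c n m ε₁ ε₂ g h hg hh hn hgh
  set a := (g.coeff 0).natAbs with ha
  set k := g.natDegree with hk
  have ha0 : 0 < a := Nat.pos_of_ne_zero (by rintro h; simp [h] at hprod; omega)
  have hc1 : 2 ≤ c := by
    by_contra hcon
    exact hpow n dvd_rfl (by omega) ⟨1, by simp; omega⟩
  have hac : a ^ 2 ≤ c := by rw [← hprod, sq]; exact Nat.mul_le_mul_left _ hsmall
  have h1 : a ^ n ≤ c ^ (n - 2) := calc
    a ^ n ≤ a ^ (2 * (n - 2)) := Nat.pow_le_pow_right ha0 (by omega)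
    _ = (a ^ 2) ^ (n - 2) := pow_mul _ _ _
    _ ≤ c ^ (n - 2) := Nat.pow_le_pow_left hac _
  have h2 : c ^ k ≤ c ^ (n - 2) := Nat.pow_le_pow_right hc (by omega)
  have h3 : 2 * c ^ (n - 2) ≤ c ^ (n - 1) := by
    rw [show n - 1 = (n - 2) + 1 by omega, pow_succ, mul_comm]
    exact Nat.mul_le_mul_left _ hc1
  have hA : ((-1 : ℤ) ^ (k * n) * g.coeff 0 ^ n).natAbs = a ^ n := by
    simp [Int.natAbs_mul, Int.natAbs_pow, ha]
  have hB : ((-((c : ℤ) * ε₂)) ^ k).natAbs = c ^ k := by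
    simp [Int.natAbs_mul, Int.natAbs_pow, e2]
  have hz := Int.eq_zero_of_abs_lt_dvd hd (by
    have := Int.natAbs_sub_le ((-1 : ℤ) ^ (k * n) * g.coeff 0 ^ n) ((-((c : ℤ) * ε₂)) ^ k)
    rw [hA, hB] at this
    rw [Int.abs_eq_natAbs]
    exact Int.ofNat_lt.2 (lt_of_le_of_lt this (by omega)))
  have heq : c ^ k = a ^ n := by
    rw [← hA, ← hB, sub_eq_zero.1 hz]
  obtain ⟨u, hu, -⟩ := Nat.exists_eq_pow_of_pow_eq_pow (Or.inl (by omega)) heq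
  have hgd : Nat.gcd k n ∣ n := Nat.gcd_dvd_right k n
  refine hpow _ (Nat.div_dvd_of_dvd hgd) ?_ ⟨u, hu⟩
  have hlt : Nat.gcd k n ≤ k := Nat.gcd_le_left _ (by omega)
  obtain ⟨q, hq⟩ := hgd
  have hgp : 0 < Nat.gcd k n := Nat.gcd_pos_of_pos_left _ (by omega)
  have hq' : n / Nat.gcd k n = q := Nat.div_eq_of_eq_mul_right hgp hq
  change 1 < n / Nat.gcd k n
  rw [hq']
  by_contra hcon
  have : Nat.gcd k n * q ≤ Nat.gcd k n * 1 := Nat.mul_le_mul_left _ (by omega)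
  omega

/-- A monic linear factor gives an integer root. -/
theorem nagell_aux_linear (b c n m : ℕ) (hc : 0 < c) (hm : 0 < m)
    (hmn : m < n) (ε₁ ε₂ : ℤ) (hε₁ : ε₁ = 1 ∨ ε₁ = -1) (hε₂ : ε₂ = 1 ∨ ε₂ = -1)
    (hbig : b > 1 + c ^ (n - 1)) (g h : ℤ[X]) (hg : g.Monic) (hg1 : g.natDegree = 1)
    (hgh : g * h = (X : Polynomial ℤ) ^ n + C ((b : ℤ) * ε₁) * X ^ m + C ((c : ℤ) * ε₂)) :
    False := by
  refine nagell_aux_root b c n m hc hm hmn ε₁ ε₂ hε₁ hε₂ hbig (-g.coeff 0) ?_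
  have h0 : g.eval (-g.coeff 0) = 0 := by
    conv_lhs => rw [hg.eq_X_add_C hg1]
    simp
  have := congrArg (eval (-g.coeff 0)) hgh
  rw [eval_mul, h0, zero_mul] at this
  simpa using this.symm

/-- Nagell's irreducibility criterion for trinomials with large middle coefficient. -/
theorem nagell_criterion (b c n m : ℕ) (hb : 0 < b) (hc : 0 < c) (hm : 0 < m)
    (hmn : m < n) (ε₁ ε₂ : ℤ) (hε₁ : ε₁ = 1 ∨ ε₁ = -1) (hε₂ : ε₂ = 1 ∨ ε₂ = -1)
    (hbig : b > 1 + c ^ (n - 1))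
    (hpow : ∀ d : ℕ, d ∣ n → 1 < d → ¬ ∃ u : ℕ, c = u ^ d) :
    Irreducible ((X : Polynomial ℤ) ^ n + C ((b : ℤ) * ε₁) * X ^ m + C ((c : ℤ) * ε₂)) := by
  have hdeg : (C ((b : ℤ) * ε₁) * X ^ m + C ((c : ℤ) * ε₂)).degree < (n : WithBot ℕ) := by
    refine (degree_add_le _ _).trans_lt (max_lt ?_ ?_)
    · exact (degree_C_mul_X_pow_le _ _).trans_lt (by exact_mod_cast hmn)
    · exact degree_C_le.trans_lt (by exact_mod_cast (hm.trans hmn))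
  have hmonic : ((X : Polynomial ℤ) ^ n + C ((b : ℤ) * ε₁) * X ^ m
      + C ((c : ℤ) * ε₂)).Monic := by
    rw [add_assoc]; exact monic_X_pow_add hdeg
  have hnat : ((X : Polynomial ℤ) ^ n + C ((b : ℤ) * ε₁) * X ^ m
      + C ((c : ℤ) * ε₂)).natDegree = n := by
    rw [add_assoc, natDegree_add_eq_left_of_degree_lt (by simpa using hdeg), natDegree_X_pow]
  rw [hmonic.irreducible_iff_natDegree]
  refine ⟨fun h => ?_, fun g h hg hh hgh => ?_⟩
  · rw [h, natDegree_one] at hnat; omega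
  · have hn : g.natDegree + h.natDegree = n := by
      rw [← hg.natDegree_mul hh, hgh, hnat]
    have hhg := hgh
    rw [mul_comm] at hhg
    by_contra hcon
    push Not at hcon
    by_cases hg1 : g.natDegree = 1
    · exact nagell_aux_linear b c n m hc hm hmn ε₁ ε₂ hε₁ hε₂ hbig g h hg hg1 hgh
    by_cases hh1 : h.natDegree = 1
    · exact nagell_aux_linear b c n m hc hm hmn ε₁ ε₂ hε₁ hε₂ hbig h g hh hh1 hhg
    rcases le_total (g.coeff 0).natAbs (h.coeff 0).natAbs with hs | hs
    · exact nagell_aux_main b c n m hc hm hmn ε₁ ε₂ hε₂ hbig hpow g h hg hh hn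
        (by omega) (by omega) hgh hs
    · exact nagell_aux_main b c n m hc hm hmn ε₁ ε₂ hε₂ hbig hpow h g hh hg (by omega)
        (by omega) (by omega) hhg hs
end

section
/- Let n ≥ 3 and b, c be positive integers with b ≥ 2, n·b ≠ 9, b ≠ c, and c ≤ 2(b − 1), let ε₁, ε₂ ∈ {−1, +1}, and set f(X) = X^n + b·ε₁·X^{n−1} + c·ε₂ ∈ ℤ[X]. If f is reducible in ℤ[X], then there exist δ ∈ {−1, +1} and g ∈ ℤ[X] such that f(X) = (X + δ)·g, g is irreducible in ℤ[X], and g is non-reciprocal (i.e., X^{deg g}·g(1/X) equals neither g nor −g). -/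
open Polynomial

namespace Harr

/-- The trinomial in the form `X^N (X - β) + e`. -/
noncomputable def F (N : ℕ) (β e : ℤ) : ℤ[X] := X ^ N * (X - C β) + C e

/-- complex roots -/
noncomputable def R (h : ℤ[X]) : Multiset ℂ := (h.map (Int.castRingHom ℂ)).roots

lemma card_R {h : ℤ[X]} (hm : h.Monic) : Multiset.card (R h) = h.natDegree := by
  unfold R
  rw [← (IsAlgClosed.splits (h.map (Int.castRingHom ℂ))).natDegree_eq_card_roots]
  exact hm.natDegree_map _

lemma norm_eval {h : ℤ[X]} (hm : h.Monic) (x : ℤ) :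
    ((|h.eval x| : ℤ) : ℝ) = ((R h).map (fun α => ‖(x : ℂ) - α‖)).prod := by
  have h1 := (IsAlgClosed.splits (h.map (Int.castRingHom ℂ))).eval_eq_prod_roots_of_monic
    (hm.map _) (x : ℂ)
  have h2 : eval (x : ℂ) (h.map (Int.castRingHom ℂ)) = ((h.eval x : ℤ) : ℂ) := by
    have := Polynomial.eval_map_apply (Int.castRingHom ℂ) (p := h) x
    simp
  rw [h2] at h1
  have h3 := congrArg norm h1
  rw [Complex.norm_intCast] at h3
  rw [Int.cast_abs, h3]
  have := map_multiset_prod (normHom : ℂ →*₀ ℝ)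
    (Multiset.map (fun y => (x : ℂ) - y) (h.map (Int.castRingHom ℂ)).roots)
  simp only [Multiset.map_map] at this
  exact this

lemma prod_lower {s : Multiset ℂ} {f : ℂ → ℝ} {q : ℝ} (hq : 0 ≤ q) (h : ∀ x ∈ s, q ≤ f x) :
    q ^ (Multiset.card s) ≤ (s.map f).prod := by
  induction s using Multiset.induction_on with
  | empty => simp
  | cons a s ih =>
    simp only [Multiset.card_cons, Multiset.map_cons, Multiset.prod_cons]
    rw [pow_succ']
    exact mul_le_mul (h a (by simp)) (ih fun x hx => h x (by simp [hx])) (by positivity)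
      (hq.trans (h a (by simp)))

lemma root_norm {N : ℕ} {β e : ℤ} {g h : ℤ[X]} (hF : g * h = F N β e) {α : ℂ} (hα : α ∈ R h) :
    ‖α‖ ^ N * ‖(β : ℂ) - α‖ = |(e : ℝ)| := by
  have h1 : eval α (h.map (Int.castRingHom ℂ)) = 0 := by
    exact Polynomial.isRoot_of_mem_roots hα
  have h2 : eval α ((F N β e).map (Int.castRingHom ℂ)) = 0 := by
    rw [← hF, Polynomial.map_mul, eval_mul, h1, mul_zero]
  simp only [F, Polynomial.map_add, Polynomial.map_mul, Polynomial.map_pow, map_X,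
    Polynomial.map_sub, map_C, eval_add, eval_mul, eval_pow, eval_X, eval_sub, eval_C] at h2
  simp only [eq_intCast] at h2
  have h3 : α ^ N * ((β : ℂ) - α) = e := by linear_combination -h2
  have h4 := congrArg norm h3
  rw [norm_mul, norm_pow, Complex.norm_intCast] at h4
  exact h4

/-- A factor with a big root has a large constant term. -/
lemma big {N : ℕ} {β e : ℤ} {g h : ℤ[X]} (hm : h.Monic) (hF : g * h = F N β e)
    {r B ρ : ℝ} (hρ0 : 0 < ρ) (hρ1 : ρ ≤ 1) (hB : 1 ≤ B) (hr : 0 ≤ r)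
    (hρ : ρ * (|(β : ℝ)| + r) ≤ |(e : ℝ)|) (he : e ≠ 0)
    (gap : ∀ t : ℝ, r < t → t < B → |(e : ℝ)| < t ^ N * (|(β : ℝ)| - t))
    {α : ℂ} (hα : α ∈ R h) (hαr : r < ‖α‖) :
    B ^ N * ρ ^ (h.natDegree - 1) ≤ ((|h.eval 0| : ℤ) : ℝ) ^ N := by
  have habs : (0 : ℝ) < |(e : ℝ)| := by simpa using he
  have hgap : ∀ γ ∈ R h, r < ‖γ‖ → B ≤ ‖γ‖ := by
    intro γ hγ h1
    by_contra! h2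
    have h3 := gap _ h1 h2
    have h4 := root_norm hF hγ
    have h5 : |(β : ℝ)| - ‖γ‖ ≤ ‖(β : ℂ) - γ‖ := by
      have := norm_sub_norm_le (β : ℂ) γ
      rwa [Complex.norm_intCast] at this
    have h6 : ‖γ‖ ^ N * (|(β : ℝ)| - ‖γ‖) ≤ ‖γ‖ ^ N * ‖(β : ℂ) - γ‖ := by gcongr
    linarith
  have hlow : ∀ γ ∈ R h, ρ ≤ ‖γ‖ ^ N := by
    intro γ hγ
    by_cases h1 : r < ‖γ‖
    · have := hgap γ hγ h1
      exact hρ1.trans (one_le_pow₀ (hB.trans this))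
    · push Not at h1
      have h4 := root_norm hF hγ
      have h5 : ‖(β : ℂ) - γ‖ ≤ |(β : ℝ)| + r := by
        have := norm_sub_le (β : ℂ) γ
        rw [Complex.norm_intCast] at this
        linarith
      have h6 : ‖γ‖ ^ N * ‖(β : ℂ) - γ‖ ≤ ‖γ‖ ^ N * (|(β : ℝ)| + r) := by gcongr
      have h7 : ρ * (|(β : ℝ)| + r) ≤ ‖γ‖ ^ N * (|(β : ℝ)| + r) := by linarith
      have h8 : 0 < |(β : ℝ)| + r := by
        by_contra! h9
        have h10 : |(β : ℝ)| + r = 0 := le_antisymm h9 (by positivity)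
        rw [h10] at h6
        linarith
      exact le_of_mul_le_mul_right h7 h8
  obtain ⟨t, ht⟩ := Multiset.exists_cons_of_mem hα
  have hcard := card_R hm
  rw [ht, Multiset.card_cons] at hcard
  rw [norm_eval hm 0, ← Multiset.prod_map_pow, ht, ← hcard]
  simp only [Multiset.map_cons, Multiset.prod_cons, Int.cast_zero, zero_sub, norm_neg,
    Nat.add_sub_cancel]
  have h1 : ρ ^ (Multiset.card t) ≤ (t.map (fun x => ‖x‖ ^ N)).prod :=
    prod_lower hρ0.le (fun x hx => hlow x (by rw [ht]; simp [hx]))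
  have h2 : B ≤ ‖α‖ := hgap α hα hαr
  gcongr

lemma F_natDegree {N : ℕ} {β e : ℤ} : (F N β e).natDegree = N + 1 := by
  unfold F
  rw [natDegree_add_C, natDegree_mul (by simp) (X_sub_C_ne_zero β),
    natDegree_X_sub_C]
  simp

lemma F_monic {N : ℕ} {β e : ℤ} : (F N β e).Monic := by
  have : (F N β e).leadingCoeff = 1 := by
    have h0 : ((X : ℤ[X]) ^ N * (X - C β)).Monic := (monic_X_pow N).mul (monic_X_sub_C β)
    have h1 : ((X : ℤ[X]) ^ N * (X - C β)).degree = ((N + 1 : ℕ) : WithBot ℕ) := by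
      rw [degree_eq_natDegree h0.ne_zero, natDegree_mul (by simp) (X_sub_C_ne_zero β),
    natDegree_X_sub_C]
      simp
    unfold F
    rw [leadingCoeff_add_of_degree_lt']
    · exact h0
    · rw [h1]
      refine lt_of_le_of_lt degree_C_le ?_
      exact_mod_cast Nat.succ_pos N
  exact this

lemma core {N : ℕ} {β e : ℤ} {g h : ℤ[X]} (hg : g.Monic) (hh : h.Monic) (hF : g * h = F N β e)
    (hN : 1 ≤ N) (dg : 1 ≤ g.natDegree) (dh : 1 ≤ h.natDegree)
    {r B ρ : ℝ} (hρ0 : 0 < ρ) (hρ1 : ρ ≤ 1) (hB : 1 ≤ B) (hr : 0 ≤ r)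
    (hρ : ρ * (|(β : ℝ)| + r) ≤ |(e : ℝ)|) (he : e ≠ 0)
    (gap : ∀ t : ℝ, r < t → t < B → |(e : ℝ)| < t ^ N * (|(β : ℝ)| - t))
    (hBρ : |(e : ℝ)| < B ^ 2 * ρ) :
    (∀ α ∈ R h, ‖α‖ ≤ r) ∨ (∀ α ∈ R g, ‖α‖ ≤ r) := by
  by_contra! hcon
  obtain ⟨⟨α, hα, hα'⟩, ⟨γ, hγ, hγ'⟩⟩ := hcon
  have h1 := big hh hF hρ0 hρ1 hB hr hρ he gap hα hα'
  have h2 := big hg (by rw [mul_comm]; exact hF) hρ0 hρ1 hB hr hρ he gap hγ hγ'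
  have hdeg : g.natDegree + h.natDegree = N + 1 := by
    rw [← F_natDegree (N := N) (β := β) (e := e), ← hF, hg.natDegree_mul hh]
  have h3 : g.eval 0 * h.eval 0 = e := by
    rw [← eval_mul, hF]
    simp [F, show N ≠ 0 by omega]
  have h4 : ((|g.eval 0| : ℤ) : ℝ) * ((|h.eval 0| : ℤ) : ℝ) = |(e : ℝ)| := by
    rw [← Int.cast_mul, ← abs_mul, h3, Int.cast_abs]
  have h5 : (B ^ N * ρ ^ (g.natDegree - 1)) * (B ^ N * ρ ^ (h.natDegree - 1)) ≤ |(e : ℝ)| ^ N := by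
    rw [← h4, mul_pow]
    gcongr
  have h6 : (B ^ N * ρ ^ (g.natDegree - 1)) * (B ^ N * ρ ^ (h.natDegree - 1))
      = (B ^ 2) ^ N * ρ ^ (N - 1) := by
    rw [show N - 1 = (g.natDegree - 1) + (h.natDegree - 1) by omega]
    ring
  have h7 : ρ ^ N ≤ ρ ^ (N - 1) := pow_le_pow_of_le_one hρ0.le hρ1 (by omega)
  have h8 : (B ^ 2 * ρ) ^ N ≤ |(e : ℝ)| ^ N := by
    rw [mul_pow]
    calc (B ^ 2) ^ N * ρ ^ N ≤ (B ^ 2) ^ N * ρ ^ (N - 1) := by gcongr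
      _ ≤ _ := by rw [← h6]; exact h5
  have h9 : |(e : ℝ)| ^ N < (B ^ 2 * ρ) ^ N := pow_lt_pow_left₀ hBρ (abs_nonneg _) (by omega)
  linarith

lemma double {N : ℕ} {β e : ℤ} {z : ℂ} (hN : 1 ≤ N) (hz : z ≠ 0)
    (hd : (X - C z) ^ 2 ∣ (F N β e).map (Int.castRingHom ℂ)) : ((N : ℂ) + 1) * z = N * β := by
  obtain ⟨q, hq⟩ := hd
  obtain ⟨M, rfl⟩ : ∃ M, N = M + 1 := ⟨N - 1, by omega⟩
  have h1 := congrArg (fun p => eval z (derivative p)) hq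
  simp [F, derivative_pow] at h1
  have h2 : z ^ M * (((M : ℂ) + 1 + 1) * z - (M + 1) * β) = 0 := by
    linear_combination h1
  have h3 := (mul_eq_zero.1 h2).resolve_left (pow_ne_zero _ hz)
  push_cast
  linear_combination h3

lemma dvd_val {N : ℕ} {β e : ℤ} {g h : ℤ[X]} (hF : g * h = F N β e) : h.eval β ∣ e := by
  refine ⟨g.eval β, ?_⟩
  rw [mul_comm, ← eval_mul, hF]
  simp [F]

lemma small {β : ℤ} {h : ℤ[X]} (hh : h.Monic) {r : ℝ} (hrb : r ≤ |(β : ℝ)|)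
    (hs : ∀ α ∈ R h, ‖α‖ ≤ r) :
    (|(β : ℝ)| - r) ^ h.natDegree ≤ ((|h.eval β| : ℤ) : ℝ) := by
  rw [norm_eval hh, ← card_R hh]
  refine prod_lower (by linarith) fun α hα => ?_
  have := norm_sub_norm_le (β : ℂ) α
  rw [Complex.norm_intCast] at this
  linarith [hs α hα]

lemma prod_id {N : ℕ} {β e : ℤ} {g h : ℤ[X]} (hh : h.Monic) (hF : g * h = F N β e) :
    |h.eval 0| ^ N * |h.eval β| = |e| ^ h.natDegree := by
  have : (((|h.eval 0| ^ N * |h.eval β| : ℤ)) : ℝ) = ((|e| ^ h.natDegree : ℤ) : ℝ) := by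
    rw [Int.cast_mul, Int.cast_pow, norm_eval hh, norm_eval hh, ← Multiset.prod_map_pow,
      ← Multiset.prod_map_mul, Multiset.map_congr (g := fun _ => |(e : ℝ)|) rfl]
    · rw [Multiset.map_const', Multiset.prod_replicate, card_R hh]
      simp
    · intro α hα
      simpa using root_norm hF hα
  exact_mod_cast this

/-- small factor of degree at least two, `b ≥ 3` -/
lemma fin3 {N : ℕ} {β e : ℤ} {g h : ℤ[X]} (hh : h.Monic) (hF : g * h = F N β e)
    (hN : 3 ≤ N) (dh : 2 ≤ h.natDegree) (hb : 3 ≤ |β|) (he : e ≠ 0) (hbc : |e| ≠ |β|)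
    (hc : |e| ≤ 2 * (|β| - 1)) (hs : ∀ α ∈ R h, ‖α‖ ≤ 1.4) : False := by
  have hbR : (3 : ℝ) ≤ |(β : ℝ)| := by exact_mod_cast hb
  have hcR : |(e : ℝ)| ≤ 2 * (|(β : ℝ)| - 1) := by exact_mod_cast hc
  have h1 := small (β := β) hh (by linarith) hs
  have hd : |h.eval β| ∣ |e| := by rw [abs_dvd_abs]; exact dvd_val hF
  have h2 : |h.eval β| ≤ |e| := Int.le_of_dvd (abs_pos.2 he) hd
  have h2R : ((|h.eval β| : ℤ) : ℝ) ≤ |(e : ℝ)| := by exact_mod_cast h2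
  have h3 : (|(β : ℝ)| - 1.4) ^ 2 ≤ (|(β : ℝ)| - 1.4) ^ h.natDegree :=
    pow_le_pow_right₀ (by linarith) dh
  rcases eq_or_lt_of_le hb with hb3 | hb4
  · have hb3R : |(β : ℝ)| = 3 := by exact_mod_cast hb3.symm
    rw [hb3R] at h1 h3
    have h5 : (2 : ℝ) < ((|h.eval β| : ℤ) : ℝ) := by norm_num at h3 ⊢; norm_num at h1; linarith
    have h5' : 2 < |h.eval β| := by exact_mod_cast h5
    have h6 : |e| = 4 := by omega
    have h7 : |h.eval β| = 4 := by
      rw [h6] at hd h2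
      generalize |h.eval β| = v at *
      interval_cases v
      · omega
      · rfl
    have h8 : h.natDegree = 2 := by
      by_contra h9
      have h10 : ((3 : ℝ) - 1.4) ^ 3 ≤ (3 - 1.4) ^ h.natDegree :=
        pow_le_pow_right₀ (by norm_num) (by omega)
      rw [h7] at h1
      norm_num at h1 h10
      linarith
    have h11 := prod_id hh hF
    rw [h6, h7, h8] at h11
    have h12 : |h.eval 0| ^ N = 4 := by linarith
    have h13 : 0 ≤ |h.eval 0| := abs_nonneg _
    generalize |h.eval 0| = u at *
    rcases le_or_gt u 1 with h14 | h14
    · have := pow_le_one₀ (n := N) h13 h14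
      omega
    · have a1 : u ^ 3 ≤ u ^ N := pow_le_pow_right₀ (by omega) hN
      have a2 : (2 : ℤ) ^ 3 ≤ u ^ 3 := pow_le_pow_left₀ (by omega) (by omega) 3
      omega
  · have hb4R : (4 : ℝ) ≤ |(β : ℝ)| := by exact_mod_cast hb4
    nlinarith

lemma fin2 {N : ℕ} {β e : ℤ} {g h : ℤ[X]} (hh : h.Monic) (hF : g * h = F N β e)
    (hN : 3 ≤ N) (dh : 2 ≤ h.natDegree) (hb : |β| = 2) (he : |e| = 1)
    (hs : ∀ α ∈ R h, ‖α‖ ≤ 1) : False := by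
  have hbR : |(β : ℝ)| = 2 := by exact_mod_cast hb
  have hd : |h.eval β| ∣ |e| := by rw [abs_dvd_abs]; exact dvd_val hF
  have h2 : |h.eval β| ≤ 1 := by rw [he] at hd; exact Int.le_of_dvd one_pos hd
  have h2R : ((|h.eval β| : ℤ) : ℝ) ≤ 1 := by exact_mod_cast h2
  have hge : ∀ α ∈ R h, 1 ≤ ‖(β : ℂ) - α‖ := by
    intro α hα
    have := norm_sub_norm_le (β : ℂ) α
    rw [Complex.norm_intCast] at this
    linarith [hs α hα]
  have hall : ∀ α ∈ R h, α = (β : ℂ) / 2 := by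
    intro α hα
    obtain ⟨t, ht⟩ := Multiset.exists_cons_of_mem hα
    rw [norm_eval hh, ht, Multiset.map_cons, Multiset.prod_cons] at h2R
    have h3 : (1 : ℝ) ^ (Multiset.card t) ≤ (t.map (fun x => ‖(β : ℂ) - x‖)).prod :=
      prod_lower zero_le_one (fun x hx => hge x (by rw [ht]; simp [hx]))
    rw [one_pow] at h3
    have h4 : ‖(β : ℂ) - α‖ ≤ 1 := by nlinarith [hge α hα]
    have h5 := parallelogram_law_with_norm ℝ (α : ℂ) ((β : ℂ) - α)
    rw [add_sub_cancel, Complex.norm_intCast, hbR] at h5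
    have h6 := hs α hα
    have h7 : ‖α - ((β : ℂ) - α)‖ = 0 := by
      nlinarith [norm_nonneg α, norm_nonneg ((β : ℂ) - α), norm_nonneg (α - ((β : ℂ) - α))]
    rw [norm_eq_zero] at h7
    linear_combination h7 / 2
  have hrep : R h = Multiset.replicate h.natDegree ((β : ℂ) / 2) :=
    Multiset.eq_replicate.2 ⟨card_R hh, hall⟩
  have hmne : h.map (Int.castRingHom ℂ) ≠ 0 := (hh.map _).ne_zero
  have hmul : 2 ≤ rootMultiplicity ((β : ℂ) / 2) (h.map (Int.castRingHom ℂ)) := by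
    rw [← count_roots]
    change 2 ≤ Multiset.count _ (R h)
    rw [hrep, Multiset.count_replicate_self]
    exact dh
  rw [le_rootMultiplicity_iff hmne] at hmul
  have hβ : (β : ℂ) ≠ 0 := by
    intro h0
    have : β = 0 := by exact_mod_cast h0
    simp [this] at hb
  have h8 := double (N := N) (β := β) (e := e) (z := (β : ℂ) / 2) (by omega)
    (by simpa using hβ)
    (by rw [← hF, Polynomial.map_mul]; exact Dvd.dvd.mul_left hmul _)
  have h9 : (β : ℂ) * ((N : ℂ) - 1) = 0 := by linear_combination -2 * h8
  have h10 := (mul_eq_zero.1 h9).resolve_left hβ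
  have h11 : (N : ℂ) = (1 : ℕ) := by push_cast; linear_combination h10
  have h12 : N = 1 := by exact_mod_cast h11
  omega

lemma gap3 {N : ℕ} (hN : 3 ≤ N) {b c t : ℝ} (hb : b = 3 ∨ 4 ≤ b) (hc : c ≤ 2 * (b - 1))
    (h1 : 1.4 < t) (h2 : t < b - 0.5) : c < t ^ N * (b - t) := by
  have h3 : t ^ 3 ≤ t ^ N := pow_le_pow_right₀ (by linarith) hN
  have h4 : t ^ 3 * (b - t) ≤ t ^ N * (b - t) := by
    apply mul_le_mul_of_nonneg_right h3; linarith
  refine lt_of_lt_of_le ?_ h4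
  rcases hb with rfl | hb
  · rcases le_or_gt t 2 with h5 | h5
    · have : t * (3 - t) ≥ 2 := by nlinarith
      have h6 : t ^ 2 * (3 - t) > 3 := by nlinarith
      nlinarith
    · have : t * (3 - t) > 1.25 := by nlinarith
      have h6 : t ^ 2 > 4 := by nlinarith
      nlinarith
  · rcases le_or_gt t (b - 1.4) with h5 | h5
    · have : t * (b - t) ≥ 1.4 * (b - 1.4) := by nlinarith
      have h6 : t ^ 2 > 1.96 := by nlinarith
      nlinarith
    · have : t * (b - t) ≥ (b - 0.5) * 0.5 := by nlinarith
      have h6 : t ^ 2 > 6.76 := by nlinarith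
      nlinarith

lemma gap2 {N : ℕ} (hN : 3 ≤ N) {t : ℝ} 
    (h1 : 1 < t) (h2 : t < 1.8) : 1 < t ^ N * (2 - t) := by
  have h3 : t ^ 3 ≤ t ^ N := pow_le_pow_right₀ (by linarith) hN
  have h4 : t ^ 3 * (2 - t) ≤ t ^ N * (2 - t) := by
    apply mul_le_mul_of_nonneg_right h3; linarith
  refine lt_of_lt_of_le ?_ h4
  have h5 : t ^ 3 - t ^ 2 - t - 1 < 0 := by
    nlinarith [mul_pos (sub_pos.2 h1) (sub_pos.2 h2), mul_pos (mul_pos (sub_pos.2 h1) (sub_pos.2 h2)) (by linarith : 0 < t)]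
  nlinarith [mul_pos (sub_pos.2 h1) (neg_pos.2 h5)]

/-- No factorization into two factors of degree at least two. -/
lemma main {N : ℕ} {β e : ℤ} {g h : ℤ[X]} (hg : g.Monic) (hh : h.Monic) (hF : g * h = F N β e)
    (dg : 2 ≤ g.natDegree) (dh : 2 ≤ h.natDegree) (hb : 2 ≤ |β|) (he : e ≠ 0)
    (hbc : |e| ≠ |β|) (hc : |e| ≤ 2 * (|β| - 1)) : False := by
  have hdeg : g.natDegree + h.natDegree = N + 1 := by
    rw [← F_natDegree (N := N) (β := β) (e := e), ← hF, hg.natDegree_mul hh]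
  have hN : 3 ≤ N := by omega
  have hF' : h * g = F N β e := by rw [mul_comm]; exact hF
  have hepos : 0 < |e| := abs_pos.2 he
  rcases eq_or_lt_of_le hb with hb2 | hb3
  · have he1 : |e| = 1 := by omega
    have hbR : |(β : ℝ)| = 2 := by exact_mod_cast hb2.symm
    have heR : |(e : ℝ)| = 1 := by exact_mod_cast he1
    rcases core hg hh hF (by omega) (by omega) (by omega) (r := 1) (B := 1.8) (ρ := 1 / 3)
      (by norm_num) (by norm_num) (by norm_num) (by norm_num) (by rw [hbR, heR]; norm_num) he
      (by intro t h1 h2; rw [hbR, heR]; exact gap2 hN h1 h2) (by rw [heR]; norm_num) with hs | hs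
    · exact fin2 hh hF hN dh hb2.symm he1 hs
    · exact fin2 hg hF' hN dg hb2.symm he1 hs
  · have hbR : |(β : ℝ)| = 3 ∨ 4 ≤ |(β : ℝ)| := by
      rcases (show |β| = 3 ∨ 4 ≤ |β| by omega) with h | h
      · left; exact_mod_cast h
      · right; exact_mod_cast h
    have hb3R : 3 ≤ |(β : ℝ)| := by exact_mod_cast hb3
    have heR : 1 ≤ |(e : ℝ)| := by exact_mod_cast hepos
    have hcR : |(e : ℝ)| ≤ 2 * (|(β : ℝ)| - 1) := by exact_mod_cast hc
    have hden : 0 < |(β : ℝ)| + 1.4 := by linarith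
    have hBρ : |(e : ℝ)| < (|(β : ℝ)| - 0.5) ^ 2 * min 1 (|(e : ℝ)| / (|(β : ℝ)| + 1.4)) := by
      rcases min_choice 1 (|(e : ℝ)| / (|(β : ℝ)| + 1.4)) with h | h <;> rw [h]
      · nlinarith
      · rw [← mul_div_assoc, lt_div_iff₀ hden, mul_comm]
        apply mul_lt_mul_of_pos_right _ (by linarith)
        nlinarith
    have hρ : min 1 (|(e : ℝ)| / (|(β : ℝ)| + 1.4)) * (|(β : ℝ)| + 1.4) ≤ |(e : ℝ)| := by
      rw [← le_div_iff₀ hden]; exact min_le_right _ _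
    rcases core hg hh hF (by omega) (by omega) (by omega) (r := 1.4) (B := |(β : ℝ)| - 0.5)
      (ρ := min 1 (|(e : ℝ)| / (|(β : ℝ)| + 1.4)))
      (lt_min one_pos (by positivity)) (min_le_left _ _) (by linarith) (by norm_num) hρ he
      (by intro t h1 h2; exact gap3 hN hbR hcR h1 h2) hBρ with hs | hs
    · exact fin3 hh hF hN dh hb3 he hbc hc hs
    · exact fin3 hg hF' hN dg hb3 he hbc hc hs

/-- Integer roots. -/
lemma int_root {N : ℕ} {β e m : ℤ} (hN : 2 ≤ N) (hb : 2 ≤ |β|) (he : e ≠ 0)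
    (hc : |e| ≤ 2 * (|β| - 1)) (hnb : N = 2 → |β| ≠ 3) (hm : (F N β e).eval m = 0) :
    |m| = 1 := by
  have h1 : m ^ N * (m - β) + e = 0 := by simpa [F] using hm
  have h2 : |m| ^ N * |m - β| = |e| := by
    rw [← abs_pow, ← abs_mul, ← abs_neg e]; congr 1; linarith
  have hepos : 0 < |e| := abs_pos.2 he
  have h3 : 0 ≤ |m - β| := abs_nonneg _
  have h4 : |β| ≤ |m| + |m - β| := by
    have := abs_sub_abs_le_abs_sub β m
    rw [abs_sub_comm] at this; omega
  have h5 : 0 ≤ |m| := abs_nonneg _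
  generalize |m| = M at *
  generalize |m - β| = j at *
  generalize |e| = c at *
  generalize |β| = b at *
  have hj : 1 ≤ j := by
    by_contra! h
    have : j = 0 := by omega
    subst this
    simp at h2; omega
  have hM0 : M ≠ 0 := by
    rintro rfl
    rw [zero_pow (by omega)] at h2; omega
  by_contra hM1
  have hM : 2 ≤ M := by omega
  have h6 : M ^ 2 ≤ M ^ N := pow_le_pow_right₀ (by omega) hN
  have h7 : M ^ 2 * j ≤ c := by rw [← h2]; gcongr
  have hM2 : M = 2 := by
    by_contra h
    have : 3 ≤ M := by omega
    nlinarith [mul_le_mul_of_nonneg_left hj (by nlinarith : 0 ≤ M ^ 2 - 2)]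
  subst hM2
  have hj1 : j = 1 := by omega
  subst hj1
  have hb3 : b = 3 := by omega
  rcases eq_or_lt_of_le hN with h | h
  · exact hnb h.symm hb3
  · have : (2 : ℤ) ^ 3 ≤ 2 ^ N := pow_le_pow_right₀ (by omega) h
    omega

/-- Two linear factors are impossible. -/
lemma two_lin {N : ℕ} {β e m m' : ℤ} {q : ℤ[X]} (hN : 2 ≤ N) (hb : 2 ≤ |β|) (he : e ≠ 0)
    (hm : |m| = 1) (hm' : |m'| = 1)
    (hF : F N β e = (X - C m) * (X - C m') * q) : False := by
  by_cases h : m = m'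
  · subst h
    have hm0 : m ≠ 0 := by rintro rfl; simp at hm
    have h1 := double (N := N) (β := β) (e := e) (z := (m : ℂ)) (by omega)
      (by exact_mod_cast hm0) (by
        rw [hF]
        refine ⟨q.map (Int.castRingHom ℂ), ?_⟩
        simp [pow_two])
    have h2 : ((N : ℤ) + 1) * m = N * β := by exact_mod_cast h1
    have h3 := congrArg abs h2
    rw [abs_mul, abs_mul, hm] at h3
    have h4 : |((N : ℤ) + 1)| = N + 1 := abs_of_nonneg (by positivity)
    have h5 : |(N : ℤ)| = N := abs_of_nonneg (by positivity)
    rw [h4, h5] at h3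
    have h6 : (2 : ℤ) ≤ N := by exact_mod_cast hN
    nlinarith
  · have e1 : (F N β e).eval m = 0 := by rw [hF]; simp
    have e2 : (F N β e).eval m' = 0 := by rw [hF]; simp
    have key : ∀ k : ℤ, |k| = 1 → (F N β e).eval k = 0 → |k - β| = |e| := by
      intro k hk hk0
      have h1 : k ^ N * (k - β) + e = 0 := by simpa [F] using hk0
      have h2 : |k| ^ N * |k - β| = |e| := by
        rw [← abs_pow, ← abs_mul, ← abs_neg e]; congr 1; linarith
      rwa [hk, one_pow, one_mul] at h2
    have k1 := key m hm e1
    have k2 := key m' hm' e2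
    rw [← k2] at k1
    have hβ0 : β = 0 := by
      rcases abs_eq_abs.1 k1 with h1 | h1 <;> rcases (abs_eq zero_le_one).1 hm with h2 | h2 <;>
        rcases (abs_eq zero_le_one).1 hm' with h3 | h3 <;> omega
    simp [hβ0] at hb

lemma non_recip {N : ℕ} {β e m : ℤ} {g : ℤ[X]} (hN : 2 ≤ N) (hb : 2 ≤ |β|) (hg : g.Monic)
    (hm : |m| = 1) (hF : F N β e = (X - C m) * g) (s : ℤ) (hs : s = 1 ∨ s = -1)
    (hrev : g.reverse = C s * g) : False := by
  have hd : g.natDegree = N := by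
    have : (F N β e).natDegree = 1 + g.natDegree := by
      rw [hF, (monic_X_sub_C m).natDegree_mul hg, natDegree_X_sub_C]
    rw [F_natDegree] at this
    omega
  have c0 : 1 = s * g.coeff 0 := by
    have := congrArg (fun p => coeff p 0) hrev
    simp only [coeff_zero_reverse, hg.leadingCoeff, coeff_C_mul] at this
    exact this
  have c1 : g.coeff (N - 1) = s * g.coeff 1 := by
    have := congrArg (fun p => coeff p 1) hrev
    simp only [coeff_one_reverse, coeff_C_mul] at this
    rw [nextCoeff_of_natDegree_pos (by omega), hd] at this
    exact this
  obtain ⟨M, rfl⟩ : ∃ M, N = M + 2 := ⟨N - 2, by omega⟩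
  have hFe : F (M + 2) β e = X ^ (M + 3) - C β * X ^ (M + 2) + C e := by
    unfold F; ring
  have z : ∀ k : ℕ, ((e : ℤ[X])).coeff (k + 1) = 0 := by
    intro k
    rw [← eq_intCast (C : ℤ →+* ℤ[X]) e, coeff_C_succ]
  have z1 := z 0
  have z2 := z (M + 1)
  rw [zero_add] at z1
  rw [show M + 1 + 1 = M + 2 from rfl] at z2
  have f0 : e = - m * g.coeff 0 := by
    have := congrArg (fun p => coeff p 0) (hFe.symm.trans hF)
    simpa [sub_mul, coeff_X_pow] using this
  have f1 : 0 = g.coeff 0 - m * g.coeff 1 := by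
    have := congrArg (fun p => coeff p 1) (hFe.symm.trans hF)
    simpa [sub_mul, coeff_X_pow, coeff_C, coeff_X_mul, z1] using this
  have f2 : - β = g.coeff (M + 1) - m := by
    have := congrArg (fun p => coeff p (M + 2)) (hFe.symm.trans hF)
    have hl : g.coeff (M + 2) = 1 := by rw [← hd]; exact hg
    simpa [sub_mul, coeff_X_pow, coeff_C, coeff_X_mul, hl, z2] using this
  have c1' : g.coeff (M + 1) = s * g.coeff 1 := c1
  have hm' : m = 1 ∨ m = -1 := (abs_eq zero_le_one).1 hm
  rcases hs with rfl | rfl <;> rcases hm' with rfl | rfl <;>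
    exact absurd (show β = 0 by omega) (by rintro rfl; simp at hb)

end Harr

open Harr in
/-- Harrington's theorem on trinomials `X^n + bε₁X^{n-1} + cε₂`. -/
theorem harrington_trinomial (n b c : ℕ) (hn : 3 ≤ n) (hb : 2 ≤ b) (hc : 0 < c)
    (hnb : n * b ≠ 9) (hbc : b ≠ c) (hcb : c ≤ 2 * (b - 1))
    (ε₁ ε₂ : ℤ) (hε₁ : ε₁ = 1 ∨ ε₁ = -1) (hε₂ : ε₂ = 1 ∨ ε₂ = -1)
    (hred : ¬ Irreducible
      ((X : Polynomial ℤ) ^ n + C ((b : ℤ) * ε₁) * X ^ (n - 1) + C ((c : ℤ) * ε₂))) :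
    ∃ (δ : ℤ) (g : Polynomial ℤ), (δ = 1 ∨ δ = -1) ∧
      (X : Polynomial ℤ) ^ n + C ((b : ℤ) * ε₁) * X ^ (n - 1) + C ((c : ℤ) * ε₂) =
        (X + C δ) * g ∧
      Irreducible g ∧ g.reverse ≠ g ∧ g.reverse ≠ -g := by
  obtain ⟨N, rfl⟩ : ∃ N, n = N + 1 := ⟨n - 1, by omega⟩
  have hN : 2 ≤ N := by omega
  set β : ℤ := -((b : ℤ) * ε₁) with hβdef
  set e : ℤ := (c : ℤ) * ε₂ with hedef
  have hfF : (X : Polynomial ℤ) ^ (N + 1) + C ((b : ℤ) * ε₁) * X ^ (N + 1 - 1) + C e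
      = F N β e := by
    have : C ((b : ℤ) * ε₁) = - C β := by rw [hβdef, C_neg, neg_neg]
    rw [this, Nat.add_sub_cancel]
    unfold F
    ring
  rw [hfF] at hred ⊢
  have hβ : |β| = b := by
    rcases hε₁ with h | h <;> rw [hβdef, h] <;> simp
  have heabs : |e| = c := by
    rcases hε₂ with h | h <;> rw [hedef, h] <;> simp
  have he : e ≠ 0 := by rw [← abs_pos, heabs]; exact_mod_cast hc
  have hb2 : 2 ≤ |β| := by omega
  have hbc' : |e| ≠ |β| := by omega
  have hc' : |e| ≤ 2 * (|β| - 1) := by omega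
  have hnb' : N = 2 → |β| ≠ 3 := by
    rintro rfl h
    have : b = 3 := by omega
    subst this
    simp at hnb
  have key : ∀ g h : ℤ[X], g.Monic → h.Monic → g * h = F N β e → g.natDegree ≤ 1 ∨
      h.natDegree ≤ 1 := by
    intro g h hg hh hgh
    by_contra! hcon
    exact main hg hh hgh hcon.1 hcon.2 hb2 he hbc' hc'
  have lin : ∀ p : ℤ[X], p.Monic → p.natDegree = 1 → p ∣ F N β e →
      ∃ m : ℤ, |m| = 1 ∧ p = X - C m := by
    intro p hp hd hdvd
    have hpe : p = X - C (-(p.coeff 0)) := by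
      rw [C_neg, sub_neg_eq_add]; exact hp.eq_X_add_C hd
    refine ⟨-(p.coeff 0), ?_, hpe⟩
    apply int_root hN hb2 he hc' hnb'
    obtain ⟨q, hq⟩ := hdvd
    rw [hq, eval_mul]
    have : eval (-(p.coeff 0)) p = 0 := by
      rw [hpe]; simp
    rw [this, zero_mul]
  have fin : ∀ g h : ℤ[X], g.Monic → h.Monic → g * h = F N β e → g.natDegree = 1 →
      ∃ (δ : ℤ) (g : Polynomial ℤ), (δ = 1 ∨ δ = -1) ∧ F N β e = (X + C δ) * g ∧
      Irreducible g ∧ g.reverse ≠ g ∧ g.reverse ≠ -g := by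
    intro g h hg hh hgh hd
    obtain ⟨m, hm, rfl⟩ := lin g hg hd ⟨h, hgh.symm⟩
    refine ⟨-m, h, by rcases (abs_eq zero_le_one).1 hm with h1 | h1 <;> omega, by rw [C_neg, ← sub_eq_add_neg, hgh], ?_, ?_, ?_⟩
    · rw [Monic.irreducible_iff_natDegree hh]
      have hdeg : 1 + h.natDegree = N + 1 := by
        rw [← F_natDegree (N := N) (β := β) (e := e), ← hgh, hg.natDegree_mul hh, hd]
      refine ⟨?_, ?_⟩
      · rintro rfl
        simp at hdeg; omega
      · intro p q hp hq hpq
        by_contra! hcon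
        obtain ⟨hp0, hq0⟩ := hcon
        have hlinp : p.natDegree ≠ 1 := by
          intro h1
          obtain ⟨m', hm', rfl⟩ := lin p hp h1 ⟨(X - C m) * q, by rw [← hgh, ← hpq]; ring⟩
          exact two_lin (q := q) hN hb2 he hm hm' (by rw [← hgh, ← hpq]; ring)
        have hlinq : q.natDegree ≠ 1 := by
          intro h1
          obtain ⟨m', hm', rfl⟩ := lin q hq h1 ⟨(X - C m) * p, by rw [← hgh, ← hpq]; ring⟩
          exact two_lin (q := p) hN hb2 he hm hm' (by rw [← hgh, ← hpq]; ring)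
        rcases key ((X - C m) * p) q (hg.mul hp) hq (by rw [← hgh, ← hpq]; ring) with h1 | h1
        · rw [hg.natDegree_mul hp, hd] at h1; omega
        · omega
    · intro hr
      exact non_recip hN hb2 hh hm hgh.symm 1 (Or.inl rfl) (by simpa using hr)
    · intro hr
      exact non_recip hN hb2 hh hm hgh.symm (-1) (Or.inr rfl) (by simpa using hr)
  rw [Monic.irreducible_iff_natDegree F_monic] at hred
  have hne1 : F N β e ≠ 1 := by
    intro h
    have := F_natDegree (N := N) (β := β) (e := e)
    rw [h] at this; simp at this
  have hred' : ∃ g h : ℤ[X], g.Monic ∧ h.Monic ∧ g * h = F N β e ∧ g.natDegree ≠ 0 ∧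
      h.natDegree ≠ 0 := by
    by_contra! hcon
    apply hred
    refine ⟨hne1, fun g h hg hh hgh => ?_⟩
    by_cases h0 : g.natDegree = 0
    · exact Or.inl h0
    · exact Or.inr (hcon g h hg hh hgh h0)
  obtain ⟨g, h, hg, hh, hgh, hg0, hh0⟩ := hred'
  rcases key g h hg hh hgh with h1 | h1
  · exact fin g h hg hh hgh (by omega)
  · exact fin h g hh hg (by rw [mul_comm]; exact hgh) (by omega)
end
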